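/- arXiv:2001.00429 — 2 statements merged into one kernel-verified Lean document; each statement's English description precedes it below -/
import Mathlib

section
/- Let 1 < δ″ < δ′ < 3/2 and let u be an admissible map with ‖u‖ ≠ 0 and D_{δ″}(u) = 0. Then the rescaled map v = (δ′/δ″)·u satisfies D_{δ′}(v) = 0, ‖v‖ ≠ 0, and E(u) − E(v) > (δ″ − 1)·r(δ″)²·(δ′/δ″ − 1). (This yields strict monotone decrease of the depth function d(δ) on [1, 3/2).) -/
open MeasureTheory Real Filter

/-- x-partial derivative of a map `u : ℝ² → ℝ³`. -/
noncomputable def pderivX (u : ℝ × ℝ → Fin 3 → ℝ) (p : ℝ × ℝ) : Fin 3 → ℝ :=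
  fderiv ℝ u p (1, 0)

/-- y-partial derivative of a map `u : ℝ² → ℝ³`. -/
noncomputable def pderivY (u : ℝ × ℝ → Fin 3 → ℝ) (p : ℝ × ℝ) : Fin 3 → ℝ :=
  fderiv ℝ u p (0, 1)

/-- Euclidean dot product on `ℝ³`. -/
def dot3 (a b : Fin 3 → ℝ) : ℝ := ∑ i, a i * b i

/-- Squared Dirichlet norm `‖u‖² = ∫_Ω |∇u|²`. -/
noncomputable def dirEnergy (Ω : Set (ℝ × ℝ)) (u : ℝ × ℝ → Fin 3 → ℝ) : ℝ :=
  ∫ p in Ω, (dot3 (pderivX u p) (pderivX u p) + dot3 (pderivY u p) (pderivY u p))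

/-- Dirichlet norm `‖u‖`. -/
noncomputable def dnorm (Ω : Set (ℝ × ℝ)) (u : ℝ × ℝ → Fin 3 → ℝ) : ℝ :=
  Real.sqrt (dirEnergy Ω u)

/-- Volume functional `V(u) = ∫_Ω u · (u_x ∧ u_y)`. -/
noncomputable def vol (Ω : Set (ℝ × ℝ)) (u : ℝ × ℝ → Fin 3 → ℝ) : ℝ :=
  ∫ p in Ω, dot3 (u p) (crossProduct (pderivX u p) (pderivY u p))

/-- An admissible map: smooth with compact support contained in `Ω`. -/
def IsAdmissible (Ω : Set (ℝ × ℝ)) (u : ℝ × ℝ → Fin 3 → ℝ) : Prop :=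
  ContDiff ℝ (⊤ : ℕ∞) u ∧ HasCompactSupport u ∧ tsupport u ⊆ Ω

/-- Energy functional `E(u) = (1/2)‖u‖² + (2H/3)·V(u)`. -/
noncomputable def Efun (Ω : Set (ℝ × ℝ)) (H : ℝ) (u : ℝ × ℝ → Fin 3 → ℝ) : ℝ :=
  (1 / 2) * dirEnergy Ω u + (2 * H / 3) * vol Ω u

/-- Modified Nehari functional `D_δ(u) = δ‖u‖² + 2H·V(u)`; `D = D₁`. -/
noncomputable def Dfun (Ω : Set (ℝ × ℝ)) (H δ : ℝ) (u : ℝ × ℝ → Fin 3 → ℝ) : ℝ :=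
  δ * dirEnergy Ω u + 2 * H * vol Ω u

/-- The radius `r(δ) = 2√(2π)·δ/H`. -/
noncomputable def rPW (H δ : ℝ) : ℝ := 2 * Real.sqrt (2 * Real.pi) * δ / H

/-- The coefficient `a(δ) = 1/2 − δ/3`. -/
noncomputable def aPW (δ : ℝ) : ℝ := 1 / 2 - δ / 3

open Set Topology Pointwise Module
open scoped ENNReal ContDiff Matrix

/-!
Put `t = δ′/δ″` and `δ = δ″`. Since `D_δ(u) = 0` turns `2H·V(u)` into `-δ‖u‖²`,
`E(u) - E(tu) = ‖u‖² ((δ - 1)(t - 1) + (δ - 1/2)(t - 1)² + δ(t - 1)³/3)`,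
so it suffices that `r(δ)² ≤ ‖u‖²`. By the same constraint, this is the isoperimetric inequality
`32π V(u)² ≤ ‖u‖⁶`.

The cone `(x, y, s) ↦ s u(x, y)`, `0 < s ≤ 1`, covers almost every point of `ℝ³` with an
integer degree `w`, the winding number of the surface, and `∫ w = V(u)/3`. By the Stokes formula the
distributional gradient of `w` is carried by the surface, so its total mass is at most
`∫ |u_x ∧ u_y| ≤ ‖u‖²/2`. The sharp Sobolev inequality for `p = 1` (Prékopa–Leindler gives
Brunn–Minkowski, which is applied to thickened superlevel sets) extends to `w` by mollification:
`36π (∫ |w|^(3/2))² ≤ (‖u‖²/2)³`. As `w` is integer valued, `|w| ≤ |w|^(3/2)`, whence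
`36π (V(u)/3)² ≤ ‖u‖⁶/8`.
-/

section LayerCake

lemma volume_Ioi_inter_ofReal_lt (a : ℝ≥0∞) : volume (Ioi 0 ∩ {r : ℝ | .ofReal r < a}) = a := by
  rcases eq_or_ne a ⊤ with rfl | ha
  · simp
  · have : Ioi 0 ∩ {r : ℝ | .ofReal r < a} = Ioo 0 a.toReal := by
      ext r
      exact and_congr_right fun hr => ENNReal.ofReal_lt_iff_lt_toReal hr.le ha
    rw [this, volume_Ioo, sub_zero, ENNReal.ofReal_toReal ha]

lemma measurable_measure_ofReal_lt {α : Type*} [MeasurableSpace α] (μ : Measure α)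
    (k : α → ℝ≥0∞) : Measurable fun r : ℝ => μ {x | .ofReal r < k x} :=
  Antitone.measurable fun _ _ hrs => measure_mono fun _ hx =>
    (ENNReal.ofReal_le_ofReal hrs).trans_lt hx

theorem lintegral_eq_lintegral_measure_ofReal_lt {α : Type*} [MeasurableSpace α] (μ : Measure α)
    [SFinite μ] {k : α → ℝ≥0∞} (hk : Measurable k) :
    ∫⁻ x, k x ∂μ = ∫⁻ r in Ioi 0, μ {x | .ofReal r < k x} := by
  have hS : MeasurableSet {p : α × ℝ | .ofReal p.2 < k p.1} :=
    measurableSet_lt (by fun_prop) (by fun_prop)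
  calc ∫⁻ x, k x ∂μ
      = ∫⁻ x, (volume.restrict (Ioi 0)) (Prod.mk x ⁻¹' {p : α × ℝ | .ofReal p.2 < k p.1}) ∂μ := by
        refine lintegral_congr fun x => ?_
        rw [Measure.restrict_apply (measurable_prodMk_left hS), inter_comm]
        exact (volume_Ioi_inter_ofReal_lt (k x)).symm
    _ = (μ.prod (volume.restrict (Ioi 0))) {p : α × ℝ | .ofReal p.2 < k p.1} :=
        (Measure.prod_apply hS).symm
    _ = ∫⁻ r in Ioi 0, μ {x | .ofReal r < k x} := Measure.prod_apply_symm hS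

end LayerCake

section PrekopaLeindler

lemma volume_add_volume_le_volume_add_of_isCompact {K L : Set ℝ} (hK : IsCompact K)
    (hL : IsCompact L) (hKn : K.Nonempty) (hLn : L.Nonempty) :
    volume K + volume L ≤ volume (K + L) := by
  have hsub : (sInf L +ᵥ K) ∪ (sSup K +ᵥ L) ⊆ K + L := by
    rintro _ (⟨x, hx, rfl⟩ | ⟨y, hy, rfl⟩)
    · simpa [add_comm] using add_mem_add hx (hL.sInf_mem hLn)
    · exact add_mem_add (hK.sSup_mem hKn) hy
  have hinter : (sInf L +ᵥ K) ∩ (sSup K +ᵥ L) ⊆ {sInf L + sSup K} := by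
    rintro _ ⟨⟨x, hx, rfl⟩, ⟨y, hy, hyx⟩⟩
    have hx' : x ≤ sSup K := le_csSup hK.bddAbove hx
    have hy' : sInf L ≤ y := csInf_le hL.bddBelow hy
    simp only [vadd_eq_add, mem_singleton_iff] at hyx ⊢
    linarith
  calc volume K + volume L = volume (sInf L +ᵥ K) + volume (sSup K +ᵥ L) := by
        simp only [measure_vadd]
    _ = volume ((sInf L +ᵥ K) ∪ (sSup K +ᵥ L)) :=
        (measure_union₀ (hL.vadd _).measurableSet.nullMeasurableSet
          (measure_mono_null hinter (by simp))).symm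
    _ ≤ volume (K + L) := measure_mono hsub

theorem volume_add_volume_le_volume_add {A B : Set ℝ} (hA : MeasurableSet A)
    (hB : MeasurableSet B) (hAn : A.Nonempty) (hBn : B.Nonempty) :
    volume A + volume B ≤ volume (A + B) := by
  obtain ⟨a, ha⟩ := hAn
  obtain ⟨b, hb⟩ := hBn
  rw [hA.measure_eq_iSup_isCompact, hB.measure_eq_iSup_isCompact]
  simp only [iSup_and']
  refine ENNReal.biSup_add_biSup_le' (p := fun K => K ⊆ A ∧ IsCompact K)
    (q := fun L => L ⊆ B ∧ IsCompact L) ⟨∅, by simp⟩ ⟨∅, by simp⟩ ?_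
  rintro K ⟨hKA, hK⟩ L ⟨hLB, hL⟩
  calc volume K + volume L ≤ volume (insert a K) + volume (insert b L) := by
        gcongr <;> exact subset_insert _ _
    _ ≤ volume (insert a K + insert b L) :=
        volume_add_volume_le_volume_add_of_isCompact (hK.insert a) (hL.insert b)
          (insert_nonempty _ _) (insert_nonempty _ _)
    _ ≤ volume (A + B) :=
        measure_mono (add_subset_add (insert_subset ha hKA) (insert_subset hb hLB))

variable {a b : ℝ}

lemma ofReal_mul_lintegral_add_le_of_iSup_eq_one {f g h : ℝ → ℝ≥0∞} (hf : Measurable f)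
    (hg : Measurable g) (hh : Measurable h) (ha : 0 < a) (hb : 0 < b) (hf1 : ⨆ x, f x = 1)
    (hg1 : ⨆ x, g x = 1) (hfgh : ∀ x y, min (f x) (g y) ≤ h (a * x + b * y)) :
    .ofReal a * (∫⁻ x, f x) + .ofReal b * (∫⁻ x, g x) ≤ ∫⁻ x, h x := by
  simp only [lintegral_eq_lintegral_measure_ofReal_lt, hf, hg, hh]
  rw [← lintegral_const_mul _ (measurable_measure_ofReal_lt _ f),
    ← lintegral_const_mul _ (measurable_measure_ofReal_lt _ g),
    ← lintegral_add_left ((measurable_measure_ofReal_lt _ f).const_mul _)]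
  refine lintegral_mono fun r => ?_
  rcases lt_or_ge (ENNReal.ofReal r) 1 with hr | hr
  · have hsmul (c : ℝ) (hc : 0 < c) (S : Set ℝ) :
        ENNReal.ofReal c * volume S = volume (c • S) := by
      simp [Measure.addHaar_smul, abs_of_pos hc]
    rw [hsmul a ha, hsmul b hb]
    refine (volume_add_volume_le_volume_add
      ((measurableSet_lt measurable_const hf).const_smul₀ a)
      ((measurableSet_lt measurable_const hg).const_smul₀ b)
      (Set.Nonempty.smul_set (lt_iSup_iff.1 (hr.trans_eq hf1.symm)))
      (Set.Nonempty.smul_set (lt_iSup_iff.1 (hr.trans_eq hg1.symm)))).trans (measure_mono ?_)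
    rintro _ ⟨_, ⟨x, hx, rfl⟩, _, ⟨y, hy, rfl⟩, rfl⟩
    exact (lt_min hx hy).trans_le (hfgh x y)
  · have hempty {k : ℝ → ℝ≥0∞} (hk : ⨆ x, k x = 1) : {x | .ofReal r < k x} = ∅ :=
      eq_empty_of_forall_notMem fun x hx => (((le_iSup k x).trans_eq hk).trans hr).not_gt hx
    simp [hempty hf1, hempty hg1]

lemma geom_mean_le_arith_mean2_weighted_ennreal (ha : 0 < a) (hb : 0 < b) (hab : a + b = 1)
    (x y : ℝ≥0∞) : x ^ a * y ^ b ≤ .ofReal a * x + .ofReal b * y := by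
  by_cases hx : x = ⊤
  · simp [hx, ENNReal.mul_top, ha]
  by_cases hy : y = ⊤
  · simp [hy, ENNReal.mul_top, hb]
  lift x to NNReal using hx
  lift y to NNReal using hy
  have h := NNReal.geom_mean_le_arith_mean2_weighted a.toNNReal b.toNNReal x y
    (by ext; simp [ha.le, hb.le, hab])
  rw [Real.coe_toNNReal _ ha.le, Real.coe_toNNReal _ hb.le] at h
  rw [ENNReal.ofReal, ENNReal.ofReal, ← ENNReal.coe_rpow_of_nonneg _ ha.le,
    ← ENNReal.coe_rpow_of_nonneg _ hb.le]
  exact_mod_cast h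

lemma min_le_rpow_mul_rpow (ha : 0 < a) (hb : 0 < b) (hab : a + b = 1) (x y : ℝ≥0∞) :
    min x y ≤ x ^ a * y ^ b :=
  calc min x y = min x y ^ a * min x y ^ b := by
        rw [← ENNReal.rpow_add_of_nonneg _ _ ha.le hb.le, hab, ENNReal.rpow_one]
    _ ≤ x ^ a * y ^ b := by gcongr <;> simp

lemma div_rpow_mul_div_rpow (ha : 0 < a) (hb : 0 < b) (x y : ℝ≥0∞) {F G : ℝ≥0∞}
    (hF0 : F ≠ 0) (hF : F ≠ ⊤) :
    (x / F) ^ a * (y / G) ^ b = x ^ a * y ^ b / (F ^ a * G ^ b) := by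
  rw [ENNReal.div_rpow_of_nonneg _ _ ha.le, ENNReal.div_rpow_of_nonneg _ _ hb.le,
    div_eq_mul_inv, div_eq_mul_inv, div_eq_mul_inv,
    ENNReal.mul_inv (by simp [hF0, hF]) (by simp [hF0, hF]), mul_mul_mul_comm]

lemma lintegral_rpow_mul_le_of_iSup_ne_top {f g h : ℝ → ℝ≥0∞} (hf : Measurable f)
    (hg : Measurable g) (hh : Measurable h) (ha : 0 < a) (hb : 0 < b) (hab : a + b = 1)
    (hfT : ⨆ x, f x ≠ ⊤) (hgT : ⨆ x, g x ≠ ⊤)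
    (hfgh : ∀ x y, f x ^ a * g y ^ b ≤ h (a * x + b * y)) :
    (∫⁻ x, f x) ^ a * (∫⁻ x, g x) ^ b ≤ ∫⁻ x, h x := by
  set F := ⨆ x, f x with hF
  set G := ⨆ x, g x with hG
  rcases eq_or_ne F 0 with hF0 | hF0
  · simp [ENNReal.iSup_eq_zero.1 (hF ▸ hF0), ha]
  rcases eq_or_ne G 0 with hG0 | hG0
  · simp [ENNReal.iSup_eq_zero.1 (hG ▸ hG0), hb]
  have hc0 : F ^ a * G ^ b ≠ 0 := by simp [hF0, hG0, hfT, hgT]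
  have hcT : F ^ a * G ^ b ≠ ⊤ := ENNReal.mul_ne_top (by simp [hfT, hF0]) (by simp [hgT, hG0])
  have hnormalized : .ofReal a * (∫⁻ x, f x / F) + .ofReal b * (∫⁻ x, g x / G) ≤
      ∫⁻ x, h x / (F ^ a * G ^ b) := by
    refine ofReal_mul_lintegral_add_le_of_iSup_eq_one (hf.div_const F) (hg.div_const G)
      (hh.div_const _) ha hb ?_ ?_ fun x y => ?_
    · rw [← ENNReal.iSup_div, ENNReal.div_self hF0 hfT]
    · rw [← ENNReal.iSup_div, ENNReal.div_self hG0 hgT]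
    · refine (min_le_rpow_mul_rpow ha hb hab _ _).trans ?_
      rw [div_rpow_mul_div_rpow ha hb _ _ hF0 hfT]
      exact ENNReal.div_le_div_right (hfgh x y) _
  have hdiv {k : ℝ → ℝ≥0∞} (hk : Measurable k) (c : ℝ≥0∞) :
      ∫⁻ x, k x / c = (∫⁻ x, k x) / c := by
    simp only [div_eq_mul_inv, lintegral_mul_const _ hk]
  rw [hdiv hf, hdiv hg, hdiv hh] at hnormalized
  have hquot := (geom_mean_le_arith_mean2_weighted_ennreal ha hb hab _ _).trans hnormalized
  rw [div_rpow_mul_div_rpow ha hb _ _ hF0 hfT] at hquot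
  calc _ = _ / (F ^ a * G ^ b) * (F ^ a * G ^ b) := (ENNReal.div_mul_cancel hc0 hcT).symm
    _ ≤ (∫⁻ x, h x) / (F ^ a * G ^ b) * (F ^ a * G ^ b) := by gcongr
    _ = ∫⁻ x, h x := ENNReal.div_mul_cancel hc0 hcT

/-- The Prékopa–Leindler inequality for a measure `μ` on a real vector space: a measurable `h`
which dominates `f x ^ a * g y ^ b` at `a • x + b • y` has integral at least
`(∫ f) ^ a * (∫ g) ^ b`. -/
def IsPrekopaLeindler {E : Type*} [AddCommGroup E] [Module ℝ E] [MeasurableSpace E]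
    (μ : Measure E) : Prop :=
  ∀ ⦃a b : ℝ⦄, 0 < a → 0 < b → a + b = 1 → ∀ ⦃f g h : E → ℝ≥0∞⦄,
    Measurable f → Measurable g → Measurable h →
    (∀ x y, f x ^ a * g y ^ b ≤ h (a • x + b • y)) →
    (∫⁻ x, f x ∂μ) ^ a * (∫⁻ x, g x ∂μ) ^ b ≤ ∫⁻ x, h x ∂μ

lemma tendsto_lintegral_min_natCast {α : Type*} [MeasurableSpace α] (μ : Measure α)
    {k : α → ℝ≥0∞} (hk : Measurable k) :
    Tendsto (fun n : ℕ => ∫⁻ x, min (k x) n ∂μ) atTop (𝓝 (∫⁻ x, k x ∂μ)) := by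
  refine lintegral_tendsto_of_tendsto_of_monotone
    (fun n => (hk.min measurable_const).aemeasurable)
    (ae_of_all _ fun x m n hmn => by dsimp only; gcongr) (ae_of_all _ fun x => ?_)
  simpa using (tendsto_const_nhds (x := k x)).min ENNReal.tendsto_nat_nhds_top

namespace IsPrekopaLeindler

theorem volume_real : IsPrekopaLeindler (volume : Measure ℝ) := by
  intro a b ha hb hab f g h hf hg hh hfgh
  by_cases hf0 : ∫⁻ x, f x = 0
  · simp [hf0, ha]
  by_cases hg0 : ∫⁻ x, g x = 0
  · simp [hg0, hb]
  have hrpow (c : ℝ) {k : ℝ → ℝ≥0∞} (hk : Measurable k) :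
      Tendsto (fun n : ℕ => (∫⁻ x, min (k x) n) ^ c) atTop (𝓝 ((∫⁻ x, k x) ^ c)) :=
    (ENNReal.continuous_rpow_const.tendsto _).comp (tendsto_lintegral_min_natCast _ hk)
  refine le_of_tendsto (ENNReal.Tendsto.mul (hrpow a hf) (.inl (by simp [hf0, ha.not_gt]))
    (hrpow b hg) (.inl (by simp [hg0, hb.not_gt]))) (.of_forall fun n => ?_)
  have hbdd (k : ℝ → ℝ≥0∞) : ⨆ x, min (k x) n ≠ ⊤ :=
    ne_top_of_le_ne_top (ENNReal.natCast_ne_top n) (iSup_le fun _ => min_le_right _ _)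
  refine lintegral_rpow_mul_le_of_iSup_ne_top (hf.min measurable_const) (hg.min measurable_const)
    hh ha hb hab (hbdd f) (hbdd g) fun x y => le_trans ?_ (hfgh x y)
  gcongr <;> exact min_le_left _ _

variable {E F : Type*} [AddCommGroup E] [Module ℝ E] [MeasurableSpace E] [AddCommGroup F]
  [Module ℝ F] [MeasurableSpace F] {μ : Measure E} {ν : Measure F}

theorem prod [SFinite ν] (hμ : IsPrekopaLeindler μ) (hν : IsPrekopaLeindler ν) :
    IsPrekopaLeindler (μ.prod ν) := by
  intro a b ha hb hab f g h hf hg hh hfgh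
  rw [lintegral_prod _ hf.aemeasurable, lintegral_prod _ hg.aemeasurable,
    lintegral_prod _ hh.aemeasurable]
  refine hμ ha hb hab hf.lintegral_prod_right' hg.lintegral_prod_right'
    hh.lintegral_prod_right' fun x y => ?_
  exact hν ha hb hab (hf.comp measurable_prodMk_left) (hg.comp measurable_prodMk_left)
    (hh.comp measurable_prodMk_left) fun z w => hfgh (x, z) (y, w)

theorem map (hμ : IsPrekopaLeindler μ) (L : E →ₗ[ℝ] F) (hL : Measurable L) :
    IsPrekopaLeindler (μ.map L) := by
  intro a b ha hb hab f g h hf hg hh hfgh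
  rw [lintegral_map hf hL, lintegral_map hg hL, lintegral_map hh hL]
  exact hμ ha hb hab (hf.comp hL) (hg.comp hL) (hh.comp hL) fun x y => by
    simpa using hfgh (L x) (L y)

theorem smul (hμ : IsPrekopaLeindler μ) (c : ℝ≥0∞) : IsPrekopaLeindler (c • μ) := by
  intro a b ha hb hab f g h hf hg hh hfgh
  simp only [lintegral_smul_measure, smul_eq_mul]
  calc _ = c ^ (a + b) * ((∫⁻ x, f x ∂μ) ^ a * (∫⁻ x, g x ∂μ) ^ b) := by
        rw [ENNReal.mul_rpow_of_nonneg _ _ ha.le, ENNReal.mul_rpow_of_nonneg _ _ hb.le,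
          ENNReal.rpow_add_of_nonneg _ _ ha.le hb.le, mul_mul_mul_comm]
    _ ≤ c * ∫⁻ x, h x ∂μ := by
        rw [hab, ENNReal.rpow_one]
        gcongr
        exact hμ ha hb hab hf hg hh hfgh

theorem volume_pi (n : ℕ) : IsPrekopaLeindler (volume : Measure (Fin n → ℝ)) := by
  induction n with
  | zero =>
    intro a b _ _ _ f g h _ _ _ hfgh
    rw [MeasureTheory.volume_pi, Measure.pi_of_empty _ 0]
    simpa only [lintegral_dirac, Subsingleton.elim (a • (0 : Fin 0 → ℝ) + b • 0) 0]
      using hfgh 0 0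
  | succ n ih =>
    have e := (volume_preserving_piFinSuccAbove (fun _ : Fin (n + 1) => ℝ) 0).symm
    have hcons : ⇑(MeasurableEquiv.piFinSuccAbove (fun _ : Fin (n + 1) => ℝ) 0).symm =
        (Fin.consLinearEquiv ℝ fun _ => ℝ).toLinearMap :=
      funext fun p => Fin.insertNth_zero' _ _
    rw [← e.map_eq, hcons]
    exact (volume_real.prod ih).map _ (hcons ▸ e.measurable)

theorem of_isAddHaarMeasure {E : Type*} [NormedAddCommGroup E] [NormedSpace ℝ E]
    [FiniteDimensional ℝ E] [MeasurableSpace E] [BorelSpace E] (μ : Measure E)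
    [μ.IsAddHaarMeasure] : IsPrekopaLeindler μ := by
  let e := (finBasis ℝ E).equivFunL.symm
  have := e.isAddHaarMeasure_map volume
  rw [Measure.isAddLeftInvariant_eq_smul μ (Measure.map e volume)]
  exact ((volume_pi _).map e.toLinearMap e.continuous.measurable).smul _

end IsPrekopaLeindler

end PrekopaLeindler

section BrunnMinkowski

theorem IsPrekopaLeindler.rpow_measure_mul_rpow_measure_le {E : Type*} [AddCommGroup E]
    [Module ℝ E] [MeasurableSpace E] {μ : Measure E} (hμ : IsPrekopaLeindler μ) {a b : ℝ}
    (ha : 0 < a) (hb : 0 < b) (hab : a + b = 1) {A B : Set E} (hA : MeasurableSet A)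
    (hB : MeasurableSet B) : μ A ^ a * μ B ^ b ≤ μ (a • A + b • B) := by
  have hC := measurableSet_toMeasurable μ (a • A + b • B)
  rw [← measure_toMeasurable (a • A + b • B), ← lintegral_indicator_one hA,
    ← lintegral_indicator_one hB, ← lintegral_indicator_one hC]
  refine hμ ha hb hab (measurable_one.indicator hA) (measurable_one.indicator hB)
    (measurable_one.indicator hC) fun x y => ?_
  by_cases hx : x ∈ A
  · by_cases hy : y ∈ B
    · have hxy := subset_toMeasurable μ _
        (add_mem_add (smul_mem_smul_set (a := a) hx) (smul_mem_smul_set (a := b) hy))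
      simp [hx, hy, hxy]
    · simp [hy, hb]
  · simp [hx, ha]

variable {E : Type*} [NormedAddCommGroup E] [NormedSpace ℝ E] [FiniteDimensional ℝ E]
  [MeasurableSpace E] [BorelSpace E] (μ : Measure E) [μ.IsAddHaarMeasure]

lemma ofReal_add_pow_finrank_le_measure_add {A B : Set E} (hA : MeasurableSet A)
    (hB : MeasurableSet B) {α β : ℝ} (hα : 0 < α) (hβ : 0 < β)
    (hμA : μ A = .ofReal (α ^ finrank ℝ E)) (hμB : μ B = .ofReal (β ^ finrank ℝ E)) :
    .ofReal ((α + β) ^ finrank ℝ E) ≤ μ (A + B) := by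
  set a := α / (α + β)
  set b := β / (α + β)
  have ha : 0 < a := by positivity
  have hb : 0 < b := by positivity
  have hab : a + b = 1 := by simp only [a, b]; field_simp
  have hdilate {c γ : ℝ} (hc : 0 < c) (hγ : c⁻¹ * γ = α + β) {S : Set E}
      (hS : μ S = .ofReal (γ ^ finrank ℝ E)) :
      μ (c⁻¹ • S) = .ofReal ((α + β) ^ finrank ℝ E) := by
    rw [Measure.addHaar_smul, abs_of_pos (by positivity), hS,
      ← ENNReal.ofReal_mul (by positivity), ← mul_pow, hγ]
  have h := (IsPrekopaLeindler.of_isAddHaarMeasure μ).rpow_measure_mul_rpow_measure_le ha hb hab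
    (hA.const_smul₀ a⁻¹) (hB.const_smul₀ b⁻¹)
  rwa [hdilate ha (by simp only [a]; field_simp) hμA, hdilate hb (by simp only [b]; field_simp) hμB,
    ← ENNReal.rpow_add_of_nonneg _ _ ha.le hb.le, hab, ENNReal.rpow_one,
    smul_inv_smul₀ ha.ne', smul_inv_smul₀ hb.ne'] at h

theorem rpow_measure_add_rpow_measure_le_rpow_measure_add [Nontrivial E] {A B : Set E}
    (hA : MeasurableSet A) (hB : MeasurableSet B) (hAn : A.Nonempty) (hBn : B.Nonempty) :
    μ A ^ (finrank ℝ E : ℝ)⁻¹ + μ B ^ (finrank ℝ E : ℝ)⁻¹ ≤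
      μ (A + B) ^ (finrank ℝ E : ℝ)⁻¹ := by
  have hn : 0 < (finrank ℝ E : ℝ) := by exact_mod_cast finrank_pos
  have hAle : μ A ≤ μ (A + B) := by
    obtain ⟨b, hb⟩ := hBn
    simpa using measure_mono (μ := μ) (add_subset_add_left (s := A) (singleton_subset_iff.2 hb))
  have hBle : μ B ≤ μ (A + B) := by
    obtain ⟨a, ha⟩ := hAn
    simpa using measure_mono (μ := μ) (add_subset_add_right (t := B) (singleton_subset_iff.2 ha))
  rcases eq_or_ne (μ (A + B)) ⊤ with hT | hT
  · simp [hT, hn]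
  rcases eq_or_ne (μ A) 0 with hA0 | hA0
  · simpa [hA0, hn] using ENNReal.rpow_le_rpow hBle (inv_nonneg.2 hn.le)
  rcases eq_or_ne (μ B) 0 with hB0 | hB0
  · simpa [hB0, hn] using ENNReal.rpow_le_rpow hAle (inv_nonneg.2 hn.le)
  have hroot {S : Set E} (hS0 : μ S ≠ 0) (hST : μ S ≠ ⊤) :
      ∃ γ : ℝ, 0 < γ ∧ μ S ^ (finrank ℝ E : ℝ)⁻¹ = .ofReal γ ∧
        μ S = .ofReal (γ ^ finrank ℝ E) := by
    have hγT : μ S ^ (finrank ℝ E : ℝ)⁻¹ ≠ ⊤ := by simp [hST, hS0]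
    refine ⟨_, ENNReal.toReal_pos (by simp [hS0, hST]) hγT, (ENNReal.ofReal_toReal hγT).symm, ?_⟩
    rw [ENNReal.ofReal_pow ENNReal.toReal_nonneg, ENNReal.ofReal_toReal hγT,
      ← ENNReal.rpow_natCast, ← ENNReal.rpow_mul, inv_mul_cancel₀ hn.ne', ENNReal.rpow_one]
  obtain ⟨α, hα, hαA, hAα⟩ := hroot hA0 (ne_top_of_le_ne_top hT hAle)
  obtain ⟨β, hβ, hβB, hBβ⟩ := hroot hB0 (ne_top_of_le_ne_top hT hBle)
  rw [hαA, hβB, ← ENNReal.ofReal_add hα.le hβ.le, ENNReal.le_rpow_inv_iff hn,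
    ENNReal.rpow_natCast, ← ENNReal.ofReal_pow (by positivity)]
  exact ofReal_add_pow_finrank_le_measure_add μ hA hB hα hβ hAα hBβ

/-- The isoperimetric constant `n * |B₁|^(1/n)` of an `n`-dimensional normed space: the perimeter
of the unit ball is this multiple of `|B₁|^((n-1)/n)`. -/
noncomputable def isoperimetricConstant : ℝ≥0∞ :=
  finrank ℝ E * μ (Metric.ball 0 1) ^ (finrank ℝ E : ℝ)⁻¹

theorem measure_add_isoperimetricConstant_mul_le_measure_thickening [Nontrivial E] {p : ℝ}
    (hp : Real.HolderConjugate (finrank ℝ E) p) {A : Set E} (hA : MeasurableSet A) {r : ℝ}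
    (hr : 0 < r) :
    μ A + .ofReal r * (isoperimetricConstant μ * μ A ^ p⁻¹) ≤ μ (Metric.thickening r A) := by
  rcases A.eq_empty_or_nonempty with rfl | hAn
  · simp [hp.symm.pos]
  have hn : 0 < (finrank ℝ E : ℝ) := hp.pos
  have hn1 : 1 ≤ finrank ℝ E := finrank_pos
  have hball : μ (Metric.ball 0 r) ^ (finrank ℝ E : ℝ)⁻¹ =
      .ofReal r * μ (Metric.ball 0 1) ^ (finrank ℝ E : ℝ)⁻¹ := by
    rw [Measure.addHaar_ball μ 0 hr.le, ENNReal.mul_rpow_of_nonneg _ _ (inv_nonneg.2 hn.le),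
      ENNReal.ofReal_pow hr.le, ← ENNReal.rpow_natCast, ← ENNReal.rpow_mul,
      mul_inv_cancel₀ hn.ne', ENNReal.rpow_one]
  have hpow : (μ A ^ (finrank ℝ E : ℝ)⁻¹) ^ (finrank ℝ E - 1) = μ A ^ p⁻¹ := by
    rw [← ENNReal.rpow_natCast, ← ENNReal.rpow_mul, ← hp.one_sub_inv, Nat.cast_sub hn1]
    congr 1
    push_cast
    field_simp
  have hBM := rpow_measure_add_rpow_measure_le_rpow_measure_add μ hA
    (measurableSet_ball (x := (0 : E)) (ε := r)) hAn (Metric.nonempty_ball.2 hr)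
  rw [add_ball_zero, ENNReal.le_rpow_inv_iff hn, hball, ENNReal.rpow_natCast] at hBM
  refine le_trans (le_of_eq ?_) ((pow_add_mul_le_add_pow zero_le zero_le _).trans hBM)
  rw [hpow, ← ENNReal.rpow_natCast, ← ENNReal.rpow_mul, inv_mul_cancel₀ hn.ne', ENNReal.rpow_one,
    isoperimetricConstant]
  ring

end BrunnMinkowski

section Sobolev

section LevelSets

variable {α : Type*} [MeasurableSpace α] (μ : Measure α) {p q : ℝ} {k : α → ℝ≥0∞}

lemma setLIntegral_rpow_sub_one_le (hpq : p.HolderConjugate q) (hk : Measurable k) {S : Set α}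
    (hS : MeasurableSet S) :
    ∫⁻ x in S, k x ^ (p - 1) ∂μ ≤ μ S ^ p⁻¹ * (∫⁻ x, k x ^ p ∂μ) ^ q⁻¹ := by
  calc ∫⁻ x in S, k x ^ (p - 1) ∂μ
      = ∫⁻ x, (S.indicator (1 : α → ℝ≥0∞) * fun x => k x ^ (p - 1)) x ∂μ := by
        rw [← lintegral_indicator hS]
        refine lintegral_congr fun x => ?_
        by_cases hx : x ∈ S <;> simp [hx]
    _ ≤ (∫⁻ x, S.indicator 1 x ^ p ∂μ) ^ (1 / p) *
        (∫⁻ x, (k x ^ (p - 1)) ^ q ∂μ) ^ (1 / q) :=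
        ENNReal.lintegral_mul_le_Lp_mul_Lq μ hpq (measurable_one.indicator hS).aemeasurable
          (hk.pow_const _).aemeasurable
    _ = μ S ^ p⁻¹ * (∫⁻ x, k x ^ p ∂μ) ^ q⁻¹ := by
        have hind : ∀ x, S.indicator (1 : α → ℝ≥0∞) x ^ p = S.indicator 1 x := fun x => by
          by_cases hx : x ∈ S <;> simp [hx, hpq.pos]
        simp only [hind, lintegral_indicator_one hS, ← ENNReal.rpow_mul, hpq.sub_one_mul_conj,
          one_div]

theorem lintegral_rpow_le_lintegral_measure_rpow [SFinite μ] (hpq : p.HolderConjugate q)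
    (hk : Measurable k) (hkp : ∫⁻ x, k x ^ p ∂μ ≠ ⊤) :
    (∫⁻ x, k x ^ p ∂μ) ^ p⁻¹ ≤ ∫⁻ r in Ioi 0, μ {x | .ofReal r < k x} ^ p⁻¹ := by
  set I := ∫⁻ x, k x ^ p ∂μ
  set J := ∫⁻ r in Ioi 0, μ {x | .ofReal r < k x} ^ p⁻¹
  rcases eq_or_ne I 0 with hI0 | hI0
  · simp [hI0, hpq.pos]
  have hlevel (r : ℝ) : MeasurableSet {x | .ofReal r < k x} := measurableSet_lt (by fun_prop) hk
  have hweighted : I ≤ J * I ^ q⁻¹ := by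
    calc I = ∫⁻ x, k x ∂μ.withDensity fun x => k x ^ (p - 1) := by
          rw [lintegral_withDensity_eq_lintegral_mul _ (by fun_prop) hk]
          refine lintegral_congr fun x => ?_
          nth_rw 1 [← sub_add_cancel p 1]
          rw [ENNReal.rpow_add_of_nonneg _ _ hpq.sub_one_pos.le zero_le_one, ENNReal.rpow_one,
            Pi.mul_apply]
      _ = ∫⁻ r in Ioi 0, ∫⁻ x in {x | .ofReal r < k x}, k x ^ (p - 1) ∂μ := by
          rw [lintegral_eq_lintegral_measure_ofReal_lt _ hk]
          exact lintegral_congr fun r => withDensity_apply _ (hlevel r)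
      _ ≤ ∫⁻ r in Ioi 0, μ {x | .ofReal r < k x} ^ p⁻¹ * I ^ q⁻¹ :=
          lintegral_mono fun r => setLIntegral_rpow_sub_one_le μ hpq hk (hlevel r)
      _ = J * I ^ q⁻¹ := lintegral_mul_const _ ((measurable_measure_ofReal_lt μ k).pow_const _)
  have hIq0 : I ^ q⁻¹ ≠ 0 := by simp [hI0, hkp]
  have hIqT : I ^ q⁻¹ ≠ ⊤ := by simp [hI0, hkp]
  refine (ENNReal.mul_le_mul_iff_left hIq0 hIqT).1 ?_
  rwa [← ENNReal.rpow_add _ _ hI0 hkp, hpq.inv_add_inv_eq_one, ENNReal.rpow_one]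

end LevelSets

lemma thickening_enorm_lt_subset {E F : Type*} [PseudoMetricSpace E] [NormedAddCommGroup F]
    {f : E → F} {r : ℝ} (hr : r ≤ 1) {d : E → ℝ≥0∞}
    (hfd : ∀ x y, dist y x < r → ‖f y‖ₑ ≤ ‖f x‖ₑ + d x) (t : ℝ≥0∞) :
    Metric.thickening r {x | t < ‖f x‖ₑ} ⊆
      {x | t < ‖f x‖ₑ + (Metric.cthickening 1 (tsupport f)).indicator d x} := by
  intro x hx
  obtain ⟨y, hy, hxy⟩ := Metric.mem_thickening_iff.1 hx
  have hyf : y ∈ tsupport f := subset_tsupport f (enorm_ne_zero.1 (bot_lt_of_lt hy).ne')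
  have hxK : x ∈ Metric.cthickening 1 (tsupport f) :=
    Metric.mem_cthickening_of_dist_le x y 1 _ hyf (hxy.le.trans hr)
  simpa only [mem_ofPred_eq, indicator_of_mem hxK] using
    lt_of_lt_of_le hy (hfd x y (by rwa [dist_comm]))

variable {E F : Type*} [NormedAddCommGroup E] [NormedSpace ℝ E] [NormedAddCommGroup F]
  [NormedSpace ℝ F] {f : E → F}

lemma exists_enorm_le_enorm_add_of_dist_lt (hf : ContDiff ℝ 1 f) (hfc : HasCompactSupport f)
    {η : ℝ} (hη : 0 < η) :
    ∃ r, 0 < r ∧ r ≤ 1 ∧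
      ∀ x y, dist y x < r → ‖f y‖ₑ ≤ ‖f x‖ₑ + .ofReal r * (‖fderiv ℝ f x‖ₑ + .ofReal η) := by
  have huc : UniformContinuous (fderiv ℝ f) :=
    (hfc.fderiv ℝ).uniformContinuous_of_continuous (hf.continuous_fderiv one_ne_zero)
  obtain ⟨δ, hδ, hfδ⟩ := Metric.uniformContinuous_iff.1 huc η hη
  refine ⟨min δ 1, by positivity, min_le_right _ _, fun x y hyx => ?_⟩
  have hmean : ‖f y - f x‖ ≤ (‖fderiv ℝ f x‖ + η) * ‖y - x‖ := by
    refine (convex_ball x δ).norm_image_sub_le_of_norm_fderiv_le (𝕜 := ℝ)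
      (fun z _ => hf.differentiable one_ne_zero z) (fun z hz => ?_) (Metric.mem_ball_self hδ)
      (hyx.trans_le (min_le_left _ _))
    have := (norm_sub_norm_le (fderiv ℝ f z) (fderiv ℝ f x)).trans_lt
      ((dist_eq_norm _ _).symm.trans_lt (hfδ hz))
    linarith
  have hreal : ‖f y‖ ≤ ‖f x‖ + min δ 1 * (‖fderiv ℝ f x‖ + η) := by
    calc ‖f y‖ ≤ ‖f x‖ + ‖f y - f x‖ := norm_le_norm_add_norm_sub' _ _
      _ ≤ ‖f x‖ + (‖fderiv ℝ f x‖ + η) * min δ 1 := by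
          gcongr
          exact hmean.trans (by gcongr; rw [← dist_eq_norm]; exact hyx.le)
      _ = _ := by rw [mul_comm]
  rw [← ofReal_norm, ← ofReal_norm, ← ofReal_norm, ← ENNReal.ofReal_add (by positivity) hη.le,
    ← ENNReal.ofReal_mul (by positivity), ← ENNReal.ofReal_add (by positivity) (by positivity)]
  exact ENNReal.ofReal_le_ofReal hreal

variable [FiniteDimensional ℝ E] [MeasurableSpace E] [BorelSpace E] (μ : Measure E)
  [μ.IsAddHaarMeasure]

lemma isoperimetricConstant_mul_lintegral_le_add [Nontrivial E] {p : ℝ}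
    (hp : Real.HolderConjugate (finrank ℝ E) p) (hf : ContDiff ℝ 1 f) (hfc : HasCompactSupport f)
    {η : ℝ} (hη : 0 < η) :
    isoperimetricConstant μ * ∫⁻ s in Ioi 0, μ {x | .ofReal s < ‖f x‖ₑ} ^ p⁻¹ ≤
      ∫⁻ x, ‖fderiv ℝ f x‖ₑ ∂μ + .ofReal η * μ (Metric.cthickening 1 (tsupport f)) := by
  obtain ⟨r, hr, hr1, hfr⟩ := exists_enorm_le_enorm_add_of_dist_lt hf hfc hη
  set K := Metric.cthickening 1 (tsupport f)
  have hK : MeasurableSet K := Metric.isClosed_cthickening.measurableSet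
  set d : E → ℝ≥0∞ := fun x => .ofReal r * (‖fderiv ℝ f x‖ₑ + .ofReal η)
  have hf' : Measurable fun x => ‖fderiv ℝ f x‖ₑ :=
    (hf.continuous_fderiv one_ne_zero).enorm.measurable
  have hd : Measurable d := (hf'.add_const _).const_mul _
  have hfm : Measurable fun x => ‖f x‖ₑ := hf.continuous.enorm.measurable
  have hfd : Measurable fun x => ‖f x‖ₑ + K.indicator d x := hfm.add (hd.indicator hK)
  have hfin : ∫⁻ x, ‖f x‖ₑ ∂μ ≠ ⊤ :=
    (hf.continuous.integrable_of_hasCompactSupport hfc).hasFiniteIntegral.ne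
  have hlevels : (∫⁻ x, ‖f x‖ₑ ∂μ) + .ofReal r * (isoperimetricConstant μ *
      ∫⁻ s in Ioi 0, μ {x | .ofReal s < ‖f x‖ₑ} ^ p⁻¹) ≤ ∫⁻ x, (‖f x‖ₑ + K.indicator d x) ∂μ := by
    have hm := measurable_measure_ofReal_lt μ fun x => ‖f x‖ₑ
    rw [lintegral_eq_lintegral_measure_ofReal_lt μ hfm,
      lintegral_eq_lintegral_measure_ofReal_lt μ hfd,
      ← lintegral_const_mul _ (hm.pow_const _),
      ← lintegral_const_mul _ ((hm.pow_const _).const_mul _), ← lintegral_add_left hm]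
    exact lintegral_mono fun s =>
      (measure_add_isoperimetricConstant_mul_le_measure_thickening μ hp
        (measurableSet_lt measurable_const hfm) hr).trans
      (measure_mono (thickening_enorm_lt_subset hr1 hfr _))
  have hbound : ∫⁻ x, (‖f x‖ₑ + K.indicator d x) ∂μ ≤ (∫⁻ x, ‖f x‖ₑ ∂μ) +
      .ofReal r * (∫⁻ x, ‖fderiv ℝ f x‖ₑ ∂μ + .ofReal η * μ K) := by
    rw [lintegral_add_left hfm, lintegral_indicator hK,
      lintegral_const_mul _ (hf'.add_const _), lintegral_add_left hf', setLIntegral_const]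
    gcongr
    exact Measure.restrict_le_self
  have hcancel := (ENNReal.add_le_add_iff_left hfin).1 (hlevels.trans hbound)
  exact (ENNReal.mul_le_mul_iff_right (by simpa using hr) ENNReal.ofReal_ne_top).1 hcancel

lemma isoperimetricConstant_mul_lintegral_le [Nontrivial E] {p : ℝ}
    (hp : Real.HolderConjugate (finrank ℝ E) p) (hf : ContDiff ℝ 1 f) (hfc : HasCompactSupport f) :
    isoperimetricConstant μ * ∫⁻ s in Ioi 0, μ {x | .ofReal s < ‖f x‖ₑ} ^ p⁻¹ ≤
      ∫⁻ x, ‖fderiv ℝ f x‖ₑ ∂μ := by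
  set K := Metric.cthickening 1 (tsupport f)
  have hK : μ K ≠ ⊤ := hfc.isCompact.cthickening.measure_lt_top.ne
  have hlim : Tendsto (fun η : ℝ => ∫⁻ x, ‖fderiv ℝ f x‖ₑ ∂μ + .ofReal η * μ K) (𝓝[>] 0)
      (𝓝 (∫⁻ x, ‖fderiv ℝ f x‖ₑ ∂μ + .ofReal 0 * μ K)) :=
    tendsto_const_nhds.add (ENNReal.Tendsto.mul_const
      (ENNReal.continuous_ofReal.continuousWithinAt.tendsto) (.inr hK))
  simp only [ENNReal.ofReal_zero, zero_mul, add_zero] at hlim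
  exact ge_of_tendsto hlim (eventually_mem_nhdsWithin.mono fun η hη =>
    isoperimetricConstant_mul_lintegral_le_add μ hp hf hfc hη)

theorem isoperimetricConstant_mul_eLpNorm_le_eLpNorm_fderiv_one [Nontrivial E] {p : NNReal}
    (hp : NNReal.HolderConjugate (finrank ℝ E) p) (hf : ContDiff ℝ 1 f)
    (hfc : HasCompactSupport f) :
    isoperimetricConstant μ * eLpNorm f p μ ≤ eLpNorm (fderiv ℝ f) 1 μ := by
  have hp0 : p ≠ 0 := hp.symm.pos.ne'
  have hp' : Real.HolderConjugate (finrank ℝ E) p := by exact_mod_cast hp.coe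
  have hfin : ∫⁻ x, ‖f x‖ₑ ^ (p : ℝ) ∂μ ≠ ⊤ :=
    (lintegral_rpow_enorm_lt_top_of_eLpNorm_lt_top (by simpa using hp0) ENNReal.coe_ne_top
      (hf.continuous.memLp_of_hasCompactSupport hfc).eLpNorm_lt_top).ne
  rw [eLpNorm_nnreal_eq_lintegral hp0, eLpNorm_one_eq_lintegral_enorm, one_div]
  refine le_trans ?_ (isoperimetricConstant_mul_lintegral_le μ hp' hf hfc)
  gcongr
  exact lintegral_rpow_le_lintegral_measure_rpow μ hp'.symm hf.continuous.enorm.measurable hfin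

end Sobolev

section GaussGreen

open scoped Convolution
open ContinuousLinearMap (lsmul)

variable {E P : Type*} [NormedAddCommGroup E] [NormedSpace ℝ E] [MeasurableSpace E]
  [MeasurableSpace P] {μ : Measure E} {w : E → ℝ} {ν : Measure P} {s : P → E}
  {N : P → E →L[ℝ] ℝ}

/-- The Gauss–Green formula for a density `w`: its distributional derivative is minus the image
under `s` of the covector measure `N • ν`, so that the pair `(s, N)` parametrizes the boundary of
`w`. For `w` the indicator of a domain, `s` runs over the boundary and `N` is the outer
conormal. -/
def GaussGreen (μ : Measure E) (w : E → ℝ) (ν : Measure P) (s : P → E) (N : P → E →L[ℝ] ℝ) :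
    Prop :=
  ∀ ψ : E → ℝ, ContDiff ℝ ∞ ψ → HasCompactSupport ψ →
    ∫ x, w x • fderiv ℝ ψ x ∂μ = ∫ p, ψ (s p) • N p ∂ν

variable [FiniteDimensional ℝ E] [BorelSpace E] [μ.IsAddHaarMeasure]

lemma GaussGreen.fderiv_convolution (h : GaussGreen μ w ν s N) (hw : LocallyIntegrable w μ)
    {ρ : E → ℝ} (hρ : ContDiff ℝ ∞ ρ) (hρc : HasCompactSupport ρ) (y : E) :
    fderiv ℝ (ρ ⋆[lsmul ℝ ℝ, μ] w) y = -∫ p, ρ (y - s p) • N p ∂ν := by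
  have hψ : ContDiff ℝ ∞ fun x => ρ (y - x) := by fun_prop
  have hψc : HasCompactSupport fun x => ρ (y - x) :=
    hρc.comp_homeomorph (Homeomorph.subLeft y)
  have hψ' (x : E) : fderiv ℝ (fun x => ρ (y - x)) x = -fderiv ℝ ρ (y - x) :=
    ((hρ.differentiable (by simp) (y - x)).hasFDerivAt.comp x
      ((hasFDerivAt_id x).const_sub y)).fderiv.trans (by ext; simp)
  rw [(hρc.hasFDerivAt_convolution_left (lsmul ℝ ℝ) (hρ.of_le (by simp)) hw y).fderiv,
    ← h _ hψ hψc, convolution_eq_swap, ← integral_neg]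
  refine integral_congr_ae (.of_forall fun x => ?_)
  ext v
  simp [hψ', mul_comm]

lemma GaussGreen.eLpNorm_fderiv_convolution_le [SFinite ν] (h : GaussGreen μ w ν s N)
    (hw : LocallyIntegrable w μ) (hs : Measurable s) (hN : AEStronglyMeasurable N ν) {ρ : E → ℝ}
    (hρ : ContDiff ℝ ∞ ρ) (hρc : HasCompactSupport ρ) :
    eLpNorm (fderiv ℝ (ρ ⋆[lsmul ℝ ℝ, μ] w)) 1 μ ≤ (∫⁻ x, ‖ρ x‖ₑ ∂μ) * ∫⁻ p, ‖N p‖ₑ ∂ν := by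
  have hρm : Measurable fun x => ‖ρ x‖ₑ := hρ.continuous.enorm.measurable
  rw [eLpNorm_one_eq_lintegral_enorm]
  calc ∫⁻ y, ‖fderiv ℝ (ρ ⋆[lsmul ℝ ℝ, μ] w) y‖ₑ ∂μ
      ≤ ∫⁻ y, ∫⁻ p, ‖ρ (y - s p)‖ₑ * ‖N p‖ₑ ∂ν ∂μ := by
        refine lintegral_mono fun y => ?_
        rw [h.fderiv_convolution hw hρ hρc, enorm_neg]
        simpa only [enorm_smul] using
          enorm_integral_le_lintegral_enorm fun p => ρ (y - s p) • N p
    _ = ∫⁻ p, ∫⁻ y, ‖ρ (y - s p)‖ₑ * ‖N p‖ₑ ∂μ ∂ν :=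
        lintegral_lintegral_swap (.mul (by fun_prop) hN.enorm.comp_snd)
    _ = ∫⁻ p, (∫⁻ x, ‖ρ x‖ₑ ∂μ) * ‖N p‖ₑ ∂ν := by
        refine lintegral_congr fun p => ?_
        rw [lintegral_sub_right_eq_self (fun x => ‖ρ x‖ₑ * ‖N p‖ₑ) (s p),
          lintegral_mul_const _ hρm]
    _ = (∫⁻ x, ‖ρ x‖ₑ ∂μ) * ∫⁻ p, ‖N p‖ₑ ∂ν := lintegral_const_mul'' _ hN.enorm

lemma lintegral_enorm_contDiffBump_normed (φ : ContDiffBump (0 : E)) :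
    ∫⁻ x, ‖φ.normed μ x‖ₑ ∂μ = 1 := by
  have hnonneg := φ.nonneg_normed (μ := μ)
  rw [lintegral_congr fun x => Real.enorm_of_nonneg (hnonneg x),
    ← ofReal_integral_eq_lintegral_ofReal φ.integrable_normed (.of_forall hnonneg),
    φ.integral_normed, ENNReal.ofReal_one]

theorem GaussGreen.isoperimetricConstant_mul_eLpNorm_le [Nontrivial E] [SFinite ν]
    {p : NNReal} (hp : NNReal.HolderConjugate (finrank ℝ E) p) (h : GaussGreen μ w ν s N)
    (hw : LocallyIntegrable w μ) (hwc : HasCompactSupport w) (hs : Measurable s)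
    (hN : AEStronglyMeasurable N ν) :
    isoperimetricConstant μ * eLpNorm w p μ ≤ ∫⁻ z, ‖N z‖ₑ ∂ν := by
  have hc0 : isoperimetricConstant μ ≠ 0 := by
    simp [isoperimetricConstant, finrank_pos.ne', (Metric.measure_ball_pos μ _ one_pos).ne',
      measure_ball_lt_top.ne]
  have hcT : isoperimetricConstant μ ≠ ⊤ := by
    simp [isoperimetricConstant, ENNReal.mul_eq_top, measure_ball_lt_top.ne]
  obtain ⟨r, -, hr, hr0⟩ := exists_seq_strictAnti_tendsto' (zero_lt_one' ℝ)
  let φ (n : ℕ) : ContDiffBump (0 : E) := ⟨r n / 2, r n, half_pos (hr n).1, half_lt_self (hr n).1⟩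
  have hmollified (n : ℕ) : eLpNorm ((φ n).normed μ ⋆[lsmul ℝ ℝ, μ] w) p μ ≤
      (∫⁻ z, ‖N z‖ₑ ∂ν) / isoperimetricConstant μ := by
    rw [ENNReal.le_div_iff_mul_le (.inl hc0) (.inl hcT), mul_comm]
    refine (isoperimetricConstant_mul_eLpNorm_le_eLpNorm_fderiv_one μ hp
      ((φ n).hasCompactSupport_normed.contDiff_convolution_left _ (φ n).contDiff_normed hw)
      ((φ n).hasCompactSupport_normed.convolution _ hwc)).trans ?_
    simpa [lintegral_enorm_contDiffBump_normed (μ := μ)] using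
      h.eLpNorm_fderiv_convolution_le hw hs hN (ρ := (φ n).normed μ) (φ n).contDiff_normed
        (φ n).hasCompactSupport_normed
  have hlim := ContDiffBump.ae_convolution_tendsto_right_of_locallyIntegrable (φ := φ) (K := 2)
    hr0 (.of_forall fun n => (mul_div_cancel₀ (r n) two_ne_zero).ge) hw
  rw [mul_comm, ← ENNReal.le_div_iff_mul_le (.inl hc0) (.inl hcT)]
  refine (Lp.eLpNorm_lim_le_liminf_eLpNorm (fun n => ?_) w hlim).trans
    (liminf_le_of_le (by isBoundedDefault) fun b hb => ?_)
  · exact ((φ n).hasCompactSupport_normed.contDiff_convolution_left (n := 0) _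
      (φ n).contDiff_normed hw).continuous.aestronglyMeasurable
  · obtain ⟨n, hn⟩ := hb.exists
    exact hn.trans (hmollified n)

theorem GaussGreen.isoperimetric [Nontrivial E] [SFinite ν] {p : NNReal}
    (hp : NNReal.HolderConjugate (finrank ℝ E) p) {w : E → ℤ}
    (h : GaussGreen μ (fun x => (w x : ℝ)) ν s N)
    (hw : LocallyIntegrable (fun x => (w x : ℝ)) μ) (hwc : HasCompactSupport w)
    (hs : Measurable s) (hN : AEStronglyMeasurable N ν) :
    isoperimetricConstant μ * (∫⁻ x, ‖(w x : ℝ)‖ₑ ∂μ) ^ (p : ℝ)⁻¹ ≤ ∫⁻ z, ‖N z‖ₑ ∂ν := by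
  have hpow (x : E) : ‖(w x : ℝ)‖ₑ ≤ ‖(w x : ℝ)‖ₑ ^ (p : ℝ) := by
    rcases eq_or_ne (w x) 0 with hx | hx
    · simp [hx]
    · refine ENNReal.le_rpow_self_of_one_le ?_ (by exact_mod_cast hp.symm.lt.le)
      rw [← ofReal_norm, ENNReal.one_le_ofReal, Real.norm_eq_abs]
      exact_mod_cast Int.one_le_abs hx
  calc _ ≤ isoperimetricConstant μ * eLpNorm (fun x => (w x : ℝ)) p μ := by
        rw [eLpNorm_nnreal_eq_lintegral hp.symm.pos.ne', one_div]
        gcongr with x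
        exact hpow x
    _ ≤ _ := h.isoperimetricConstant_mul_eLpNorm_le hp hw
        (hwc.comp_left (g := fun k : ℤ => (k : ℝ)) Int.cast_zero) hs hN

end GaussGreen

section AreaFormula

open scoped Function

variable {E : Type*} [NormedAddCommGroup E] [NormedSpace ℝ E] [FiniteDimensional ℝ E]
  {f : E → E} {f' : E → E →L[ℝ] E} {s : Set E}

lemma encard_iUnion_eq_tsum {α ι : Type*} [Countable ι] {t : ι → Set α}
    (ht : Pairwise (Disjoint on t)) : ((⋃ i, t i).encard : ℝ≥0∞) = ∑' i, ((t i).encard : ℝ≥0∞) := by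
  let : MeasurableSpace α := ⊤
  simpa [Measure.count_apply] using measure_iUnion (μ := Measure.count) ht fun _ => trivial

lemma encard_iUnion_inter_preimage_singleton {α β ι : Type*} [Countable ι] {g : α → β}
    {t : ι → Set α} (ht : Pairwise (Disjoint on t)) (hg : ∀ i, InjOn g (t i)) (y : β) :
    ((⋃ i, t i) ∩ g ⁻¹' {y}).encard = ∑' i, (g '' t i).indicator (1 : β → ℝ≥0∞) y := by
  rw [iUnion_inter, encard_iUnion_eq_tsum fun i j hij =>
    (ht hij).mono inter_subset_left inter_subset_left]
  congr with i
  by_cases hy : y ∈ g '' t i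
  · obtain ⟨x, hx, rfl⟩ := hy
    have : t i ∩ g ⁻¹' {g x} = {x} := by
      ext z
      exact ⟨fun hz => hg i hz.1 hx hz.2, by rintro rfl; exact ⟨hx, rfl⟩⟩
    simp [this, mem_image_of_mem g hx]
  · have : t i ∩ g ⁻¹' {y} = ∅ := eq_empty_of_forall_notMem fun x hx => hy ⟨x, hx⟩
    simp [this, hy]

variable [MeasurableSpace E] [BorelSpace E]

lemma exists_measurable_partition_injOn_of_det_ne_zero (hs : MeasurableSet s)
    (hf : ∀ x ∈ s, HasFDerivWithinAt f (f' x) s x) (hdet : ∀ x ∈ s, (f' x).det ≠ 0) :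
    ∃ t : ℕ → Set E, Pairwise (Disjoint on t) ∧ (∀ n, MeasurableSet (t n)) ∧ ⋃ n, t n = s ∧
      ∀ n, InjOn f (t n) := by
  have hr (A : E →L[ℝ] E) : ∃ r : NNReal, r ≠ 0 ∧ ∀ h : A.det ≠ 0, Subsingleton E ∨
      r < ‖((A.toContinuousLinearEquivOfDetNeZero h).symm : E →L[ℝ] E)‖₊⁻¹ := by
    rcases subsingleton_or_nontrivial E with hE | hE
    · exact ⟨1, one_ne_zero, fun _ => .inl hE⟩
    by_cases h : A.det = 0
    · exact ⟨1, one_ne_zero, fun h' => (h' h).elim⟩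
    · obtain ⟨r, hr0, hr⟩ := exists_between <| inv_pos.2 <|
        (A.toContinuousLinearEquivOfDetNeZero h).nnnorm_symm_pos
      exact ⟨r, hr0.ne', fun _ => .inr hr⟩
  choose r hr0 hr using hr
  obtain ⟨t, A, htd, htm, hst, hA, hAf⟩ :=
    exists_partition_approximatesLinearOn_of_hasFDerivWithinAt f s f' hf r hr0
  refine ⟨fun n => s ∩ t n, fun i j hij => (htd hij).mono inter_subset_right inter_subset_right,
    fun n => hs.inter (htm n), by rw [← inter_iUnion, inter_eq_left.2 hst], fun n => ?_⟩
  rcases s.eq_empty_or_nonempty with rfl | hne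
  · simp
  obtain ⟨y, hy, hAy⟩ := hAf hne n
  have hAn : (A n).det ≠ 0 := hAy ▸ hdet y hy
  have hAn' := hA n
  rw [← (A n).coe_toContinuousLinearEquivOfDetNeZero hAn] at hAn'
  exact hAn'.injOn (by simpa using hr (A n) hAn)

lemma measurable_encard_inter_preimage_singleton (hs : MeasurableSet s)
    (hf : ∀ x ∈ s, HasFDerivWithinAt f (f' x) s x) (hdet : ∀ x ∈ s, (f' x).det ≠ 0) :
    Measurable fun y => ((s ∩ f ⁻¹' {y}).encard : ℝ≥0∞) := by
  obtain ⟨t, htd, htm, rfl, htf⟩ := exists_measurable_partition_injOn_of_det_ne_zero hs hf hdet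
  simp_rw [encard_iUnion_inter_preimage_singleton htd htf]
  exact .tsum fun n => measurable_one.indicator <| measurable_image_of_fderivWithin (htm n)
    (fun x hx => (hf x (mem_iUnion_of_mem n hx)).mono (subset_iUnion t n)) (htf n)

theorem map_withDensity_abs_det_fderiv_eq_withDensity_encard (μ : Measure E) [μ.IsAddHaarMeasure]
    (hs : MeasurableSet s) (hf : ∀ x ∈ s, HasFDerivWithinAt f (f' x) s x)
    (hdet : ∀ x ∈ s, (f' x).det ≠ 0) :
    ((μ.restrict s).withDensity fun x => ENNReal.ofReal |(f' x).det|).map f =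
      μ.withDensity fun y => ((s ∩ f ⁻¹' {y}).encard : ℝ≥0∞) := by
  have hfs : AEMeasurable f (μ.restrict s) :=
    ContinuousOn.aemeasurable (fun x hx => (hf x hx).continuousWithinAt) hs
  have hfd := hfs.mono_ac (withDensity_absolutelyContinuous _ fun x => ENNReal.ofReal |(f' x).det|)
  obtain ⟨t, htd, htm, rfl, htf⟩ := exists_measurable_partition_injOn_of_det_ne_zero hs hf hdet
  have hft (n : ℕ) (x : E) (hx : x ∈ t n) : HasFDerivWithinAt f (f' x) (t n) x :=
    (hf x (mem_iUnion_of_mem n hx)).mono (subset_iUnion t n)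
  have htm' (n : ℕ) := measurable_image_of_fderivWithin (htm n) (hft n) (htf n)
  rw [Measure.restrict_iUnion htd htm, withDensity_sum] at hfd ⊢
  rw [Measure.map_sum hfd]
  simp_rw [encard_iUnion_inter_preimage_singleton htd htf,
    map_withDensity_abs_det_fderiv_eq_addHaar μ (htm _).nullMeasurableSet (hft _) (htf _),
    ← withDensity_indicator_one (htm' _)]
  rw [← withDensity_tsum fun n => measurable_one.indicator (htm' n)]
  congr with y
  rw [tsum_apply (Pi.summable.2 fun _ => ENNReal.summable)]

section Integral

variable {F : Type*} [NormedAddCommGroup F] [NormedSpace ℝ F] {φ : E → F} {μ : Measure E}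
  [μ.IsAddHaarMeasure]

lemma lintegral_encard_inter_preimage_singleton_ne_top (hs : MeasurableSet s)
    (hf : ∀ x ∈ s, HasFDerivWithinAt f (f' x) s x) (hdet : ∀ x ∈ s, (f' x).det ≠ 0)
    (hi : IntegrableOn (fun x => (f' x).det) s μ) :
    ∫⁻ y, ((s ∩ f ⁻¹' {y}).encard : ℝ≥0∞) ∂μ ≠ ⊤ := by
  have hfs : AEMeasurable f (μ.restrict s) :=
    ContinuousOn.aemeasurable (fun x hx => (hf x hx).continuousWithinAt) hs
  have hmass := congrArg (· univ)
    (map_withDensity_abs_det_fderiv_eq_withDensity_encard μ hs hf hdet)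
  simp only [withDensity_apply _ MeasurableSet.univ, Measure.restrict_univ, preimage_univ,
    Measure.map_apply_of_aemeasurable (hfs.mono_ac (withDensity_absolutelyContinuous _ _))
      MeasurableSet.univ] at hmass
  exact hmass ▸ hi.abs.lintegral_lt_top.ne

lemma toReal_encard {α : Type*} (t : Set α) : (t.encard : ℝ≥0∞).toReal = t.ncard := by
  rcases t.finite_or_infinite with ht | ht
  · simp [← ht.cast_ncard_eq]
  · simp [ht.encard_eq, ht.ncard]

lemma integrable_ncard_inter_preimage_singleton (hs : MeasurableSet s)
    (hf : ∀ x ∈ s, HasFDerivWithinAt f (f' x) s x) (hdet : ∀ x ∈ s, (f' x).det ≠ 0)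
    (hi : IntegrableOn (fun x => (f' x).det) s μ) :
    Integrable (fun y => ((s ∩ f ⁻¹' {y}).ncard : ℝ)) μ := by
  simpa only [toReal_encard] using integrable_toReal_of_lintegral_ne_top
    (measurable_encard_inter_preimage_singleton hs hf hdet).aemeasurable
    (lintegral_encard_inter_preimage_singleton_ne_top hs hf hdet hi)

theorem setIntegral_abs_det_fderiv_smul_comp (hs : MeasurableSet s)
    (hf : ∀ x ∈ s, HasFDerivWithinAt f (f' x) s x) (hdet : ∀ x ∈ s, (f' x).det ≠ 0)
    (hi : IntegrableOn (fun x => (f' x).det) s μ) (hφ : StronglyMeasurable φ) :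
    ∫ x in s, |(f' x).det| • φ (f x) ∂μ = ∫ y, ((s ∩ f ⁻¹' {y}).ncard : ℝ) • φ y ∂μ := by
  have hfs : AEMeasurable f (μ.restrict s) :=
    ContinuousOn.aemeasurable (fun x hx => (hf x hx).continuousWithinAt) hs
  have hm := measurable_encard_inter_preimage_singleton hs hf hdet
  have hchange := integral_map (hfs.mono_ac (withDensity_absolutelyContinuous _ fun x =>
    ENNReal.ofReal |(f' x).det|)) hφ.aestronglyMeasurable
  rw [map_withDensity_abs_det_fderiv_eq_withDensity_encard μ hs hf hdet,
    integral_withDensity_eq_integral_toReal_smul hm (ae_lt_top hm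
      (lintegral_encard_inter_preimage_singleton_ne_top hs hf hdet hi)),
    integral_withDensity_eq_integral_toReal_smul₀
      (aemeasurable_ofReal_abs_det_fderivWithin μ hs hf)
      (.of_forall fun _ => ENNReal.ofReal_lt_top)] at hchange
  simpa only [toReal_encard, ENNReal.toReal_ofReal (abs_nonneg _)] using hchange.symm

end Integral

end AreaFormula

section SignedMultiplicity

variable {E : Type*} [NormedAddCommGroup E] [NormedSpace ℝ E] {f : E → E} {s : Set E}

/-- The number of preimages of `y` in `s` under `f`, counted with the sign of the Jacobian
determinant of `f`: the Brouwer degree at regular values. Degenerate preimages do not count, and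
each of the two counts is `0` when it would be infinite. -/
noncomputable def signedMultiplicity (f : E → E) (s : Set E) (y : E) : ℤ :=
  ({x ∈ s | 0 < (fderiv ℝ f x).det} ∩ f ⁻¹' {y}).ncard -
    ({x ∈ s | (fderiv ℝ f x).det < 0} ∩ f ⁻¹' {y}).ncard

lemma signedMultiplicity_of_notMem_image {y : E} (hy : y ∉ f '' s) :
    signedMultiplicity f s y = 0 := by
  have hempty (p : E → Prop) : {x ∈ s | p x} ∩ f ⁻¹' {y} = ∅ :=
    eq_empty_of_forall_notMem fun x hx => hy ⟨x, hx.1.1, hx.2⟩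
  simp [signedMultiplicity, hempty]

variable [FiniteDimensional ℝ E] [MeasurableSpace E] [BorelSpace E] {μ : Measure E}
  [μ.IsAddHaarMeasure]

lemma setIntegral_smul_eq_sub_setIntegral_abs_smul {α F : Type*} [MeasurableSpace α]
    [NormedAddCommGroup F] [NormedSpace ℝ F] {ν : Measure α} {t : Set α} {J : α → ℝ} {g : α → F}
    (hJ : Measurable J) (hg : IntegrableOn (fun x => |J x| • g x) t ν) :
    ∫ x in t, J x • g x ∂ν =
      ∫ x in {x ∈ t | 0 < J x}, |J x| • g x ∂ν - ∫ x in {x ∈ t | J x < 0}, |J x| • g x ∂ν := by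
  have hpos : MeasurableSet {x | 0 < J x} := measurableSet_lt measurable_const hJ
  have hneg : MeasurableSet {x | J x < 0} := measurableSet_lt hJ measurable_const
  have hsplit (x : α) : J x • g x = {x | 0 < J x}.indicator (fun x => |J x| • g x) x -
      {x | J x < 0}.indicator (fun x => |J x| • g x) x := by
    rcases lt_trichotomy (J x) 0 with h | h | h
    · simp [indicator, h, h.not_gt, abs_of_neg h]
    · simp [indicator, h]
    · simp [indicator, h, h.not_gt, abs_of_pos h]
  simp_rw [hsplit]
  rw [integral_sub (hg.indicator hpos) (hg.indicator hneg), setIntegral_indicator hpos,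
    setIntegral_indicator hneg]
  rfl

lemma measurable_det_fderiv : Measurable fun x => (fderiv ℝ f x).det :=
  ContinuousLinearMap.continuous_det.measurable.comp (measurable_fderiv ℝ f)

lemma integrable_signedMultiplicity (hs : MeasurableSet s) (hf : ∀ x ∈ s, DifferentiableAt ℝ f x)
    (hi : IntegrableOn (fun x => (fderiv ℝ f x).det) s μ) :
    Integrable (fun y => (signedMultiplicity f s y : ℝ)) μ := by
  simp only [signedMultiplicity, Int.cast_sub, Int.cast_natCast]
  refine .sub ?_ ?_
  · exact integrable_ncard_inter_preimage_singleton
      (hs.inter (measurableSet_lt measurable_const measurable_det_fderiv))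
      (fun x hx => (hf x hx.1).hasFDerivAt.hasFDerivWithinAt) (fun x hx => hx.2.ne')
      (hi.mono_set (sep_subset _ _))
  · exact integrable_ncard_inter_preimage_singleton
      (hs.inter (measurableSet_lt measurable_det_fderiv measurable_const))
      (fun x hx => (hf x hx.1).hasFDerivAt.hasFDerivWithinAt) (fun x hx => hx.2.ne)
      (hi.mono_set (sep_subset _ _))

theorem setIntegral_det_fderiv_smul_comp {F : Type*} [NormedAddCommGroup F] [NormedSpace ℝ F]
    {φ : E → F} (hs : MeasurableSet s) (hf : ∀ x ∈ s, DifferentiableAt ℝ f x)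
    (hi : IntegrableOn (fun x => (fderiv ℝ f x).det) s μ) (hφ : StronglyMeasurable φ) {C : ℝ}
    (hC : ∀ y, ‖φ y‖ ≤ C) :
    ∫ x in s, (fderiv ℝ f x).det • φ (f x) ∂μ = ∫ y, (signedMultiplicity f s y : ℝ) • φ y ∂μ := by
  set J : E → ℝ := fun x => (fderiv ℝ f x).det
  have hJ : Measurable J := measurable_det_fderiv
  have hpos : MeasurableSet {x ∈ s | 0 < J x} := hs.inter (measurableSet_lt measurable_const hJ)
  have hneg : MeasurableSet {x ∈ s | J x < 0} := hs.inter (measurableSet_lt hJ measurable_const)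
  have hf' (p : E → Prop) (x : E) (hx : x ∈ {x ∈ s | p x}) :
      HasFDerivWithinAt f (fderiv ℝ f x) {x ∈ s | p x} x :=
    (hf x hx.1).hasFDerivAt.hasFDerivWithinAt
  have hi' (p : E → Prop) : IntegrableOn J {x ∈ s | p x} μ := hi.mono_set (sep_subset _ _)
  have hfs : AEMeasurable f (μ.restrict s) :=
    ContinuousOn.aemeasurable (fun x hx => (hf x hx).continuousAt.continuousWithinAt) hs
  have hint' (p : E → Prop) (hp : MeasurableSet {x ∈ s | p x}) (hpJ : ∀ x, p x → J x ≠ 0) :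
      Integrable (fun y => (({x ∈ s | p x} ∩ f ⁻¹' {y}).ncard : ℝ) • φ y) μ :=
    (integrable_ncard_inter_preimage_singleton hp (hf' p) (fun x hx => hpJ x hx.2)
      (hi' p)).smul_bdd C hφ.aestronglyMeasurable (.of_forall hC)
  calc ∫ x in s, J x • φ (f x) ∂μ
      = ∫ x in {x ∈ s | 0 < J x}, |J x| • φ (f x) ∂μ -
          ∫ x in {x ∈ s | J x < 0}, |J x| • φ (f x) ∂μ := by
        exact setIntegral_smul_eq_sub_setIntegral_abs_smul hJ
          (hi.abs.smul_bdd C (hφ.aestronglyMeasurable.comp_aemeasurable hfs)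
            (.of_forall fun x => hC _))
    _ = ∫ y, (signedMultiplicity f s y : ℝ) • φ y ∂μ := by
        rw [setIntegral_abs_det_fderiv_smul_comp hpos (hf' _) (fun x hx => hx.2.ne') (hi' _) hφ,
          setIntegral_abs_det_fderiv_smul_comp hneg (hf' _) (fun x hx => hx.2.ne) (hi' _) hφ,
          ← integral_sub (hint' _ hpos fun x hx => hx.ne') (hint' _ hneg fun x hx => hx.ne)]
        simp [signedMultiplicity, sub_smul, J]

end SignedMultiplicity

lemma integral_bilinear_fderiv_sub_swap_eq_zero {E F G W : Type*} [NormedAddCommGroup E]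
    [NormedSpace ℝ E] [FiniteDimensional ℝ E] [MeasurableSpace E] [BorelSpace E]
    [NormedAddCommGroup F] [NormedSpace ℝ F] [NormedAddCommGroup G] [NormedSpace ℝ G]
    [NormedAddCommGroup W] [NormedSpace ℝ W] {μ : Measure E} [μ.IsAddHaarMeasure]
    (B : F →L[ℝ] G →L[ℝ] W) {f : E → F} {g : E → G} (hf : ContDiff ℝ 1 f)
    (hfc : HasCompactSupport f) (hg : ContDiff ℝ 2 g) (v w : E) :
    ∫ x, (B (fderiv ℝ f x v) (fderiv ℝ g x w) - B (fderiv ℝ f x w) (fderiv ℝ g x v)) ∂μ = 0 := by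
  have hf' (v : E) : Continuous fun x => fderiv ℝ f x v :=
    (hf.continuous_fderiv one_ne_zero).clm_apply continuous_const
  have hg' (w : E) : ContDiff ℝ 1 fun x => fderiv ℝ g x w :=
    (hg.fderiv_right le_rfl).clm_apply contDiff_const
  have hg'' (v w : E) : Continuous fun x => fderiv ℝ (fun x => fderiv ℝ g x w) x v :=
    ((hg' w).continuous_fderiv one_ne_zero).clm_apply continuous_const
  have hint {a : E → F} {b : E → G} (ha : Continuous a) (hac : HasCompactSupport a)
      (hb : Continuous b) : Integrable (fun x => B (a x) (b x)) μ :=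
    ((B.continuous.comp ha).clm_apply hb).integrable_of_hasCompactSupport
      (hac.mono fun x hx h => hx (by simp [h]))
  have hint' (v w : E) := hint (hf' v) (hfc.fderiv_apply ℝ v) (hg' w).continuous
  have hparts (v w : E) : ∫ x, B (fderiv ℝ f x v) (fderiv ℝ g x w) ∂μ =
      -∫ x, B (f x) (fderiv ℝ (fun x => fderiv ℝ g x w) x v) ∂μ := by
    rw [integral_bilinear_fderiv_right_eq_neg_left_of_integrable (hint' v w)
      (hint hf.continuous hfc (hg'' v w)) (hint hf.continuous hfc (hg' w).continuous)
      (fun x _ => hf.differentiable one_ne_zero x)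
      (fun x _ => (hg' w).differentiable one_ne_zero x), neg_neg]
  have hsymm (x : E) : fderiv ℝ (fun x => fderiv ℝ g x w) x v =
      fderiv ℝ (fun x => fderiv ℝ g x v) x w := by
    have hd : DifferentiableAt ℝ (fderiv ℝ g) x :=
      (hg.fderiv_right (m := 1) le_rfl).differentiable one_ne_zero x
    simpa [fderiv_clm_apply hd (differentiableAt_const _)] using
      (hg.contDiffAt.isSymmSndFDerivAt (x := x) (by simp)).eq v w
  rw [integral_sub (hint' v w) (hint' w v), hparts, hparts w v,
    funext fun x => congrArg (B (f x)) (hsymm x), sub_self]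

lemma linearMap_apply_mul_triple_product (L : (Fin 3 → ℝ) →ₗ[ℝ] ℝ) (u v a b : Fin 3 → ℝ) :
    L v * u ⬝ᵥ a ⨯₃ b - L u * v ⬝ᵥ a ⨯₃ b + L a * v ⬝ᵥ u ⨯₃ b - L b * v ⬝ᵥ u ⨯₃ a = 0 := by
  obtain ⟨c, rfl⟩ := (dotProductEquiv ℝ (Fin 3)).surjective L
  simp only [dotProductEquiv_apply_apply, cross_apply, dotProduct, Fin.sum_univ_three,
    Matrix.cons_val]
  ring

/-- The normal `u_x ∧ u_y` of the parametrized surface `u`, of length the area density. -/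
noncomputable def areaVector (u : ℝ × ℝ → Fin 3 → ℝ) (p : ℝ × ℝ) : Fin 3 → ℝ :=
  pderivX u p ⨯₃ pderivY u p

lemma continuous_areaVector {u : ℝ × ℝ → Fin 3 → ℝ} (hu : ContDiff ℝ 1 u) :
    Continuous (areaVector u) := by
  have hd (v : ℝ × ℝ) : Continuous fun p => fderiv ℝ u p v :=
    (hu.continuous_fderiv one_ne_zero).clm_apply continuous_const
  exact (crossProduct.toContinuousBilinearMap.continuous.comp (hd _)).clm_apply (hd _)

lemma areaVector_of_notMem_tsupport {u : ℝ × ℝ → Fin 3 → ℝ} {p : ℝ × ℝ} (hp : p ∉ tsupport u) :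
    areaVector u p = 0 := by
  simp [areaVector, pderivX, fderiv_of_notMem_tsupport ℝ hp]

lemma continuous_dotProduct_areaVector {u : ℝ × ℝ → Fin 3 → ℝ} (hu : ContDiff ℝ 1 u)
    {a : ℝ × ℝ → Fin 3 → ℝ} (ha : Continuous a) : Continuous fun p => a p ⬝ᵥ areaVector u p :=
  ha.dotProduct (continuous_areaVector hu)

lemma integrable_mul_dotProduct_areaVector {u : ℝ × ℝ → Fin 3 → ℝ} (hu : ContDiff ℝ 1 u)
    (huc : HasCompactSupport u) {F : ℝ × ℝ → ℝ} {a : ℝ × ℝ → Fin 3 → ℝ} (hF : Continuous F)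
    (ha : Continuous a) : Integrable fun p => F p * (a p ⬝ᵥ areaVector u p) :=
  (hF.mul (continuous_dotProduct_areaVector hu ha)).integrable_of_hasCompactSupport
    (.intro huc fun p hp => by simp [areaVector_of_notMem_tsupport hp])

lemma fderiv_comp_const_smul_smul_self {E F : Type*} [NormedAddCommGroup E] [NormedSpace ℝ E]
    [NormedAddCommGroup F] [NormedSpace ℝ F] {u : E → F} (hu : Differentiable ℝ u) {ψ : F → ℝ}
    (hψ : Differentiable ℝ ψ) (t : ℝ) (p w : E) :
    fderiv ℝ (fun p => ψ (t • u p) • u p) p w =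
      ψ (t • u p) • fderiv ℝ u p w + (t * fderiv ℝ ψ (t • u p) (fderiv ℝ u p w)) • u p := by
  have h : HasFDerivAt (fun p => ψ (t • u p)) _ p :=
    (hψ (t • u p)).hasFDerivAt.comp p ((hu p).hasFDerivAt.const_smul t)
  rw [fderiv_fun_smul h.differentiableAt (hu p), h.fderiv]
  simp

theorem integral_fderiv_mul_dotProduct_areaVector {u : ℝ × ℝ → Fin 3 → ℝ} (hu : ContDiff ℝ 2 u)
    (huc : HasCompactSupport u) {ψ : (Fin 3 → ℝ) → ℝ} (hψ : ContDiff ℝ 1 ψ) (v : Fin 3 → ℝ)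
    (t : ℝ) :
    ∫ p, t * fderiv ℝ ψ (t • u p) v * (u p ⬝ᵥ areaVector u p) =
      ∫ p, (2 * ψ (t • u p) + t * fderiv ℝ ψ (t • u p) (u p)) * (v ⬝ᵥ areaVector u p) := by
  have hu1 : ContDiff ℝ 1 u := hu.of_le one_le_two
  have hψu : ContDiff ℝ 1 fun p => ψ (t • u p) := hψ.comp (hu1.const_smul t)
  have hdψ {a : ℝ × ℝ → Fin 3 → ℝ} (ha : Continuous a) :
      Continuous fun p => t * fderiv ℝ ψ (t • u p) (a p) :=
    continuous_const.mul (((hψ.continuous_fderiv one_ne_zero).comp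
      (hu.continuous.const_smul t)).clm_apply ha)
  have hψuc : HasCompactSupport fun p => ψ (t • u p) • u p :=
    huc.mono fun p hp h => hp (by simp [h])
  obtain ⟨B, hB⟩ : ∃ B : (Fin 3 → ℝ) →L[ℝ] (Fin 3 → ℝ) →L[ℝ] ℝ, ∀ a b, B a b = v ⬝ᵥ a ⨯₃ b :=
    ⟨(crossProduct.compr₂ (dotProductBilin ℝ ℝ v)).toContinuousBilinearMap, fun _ _ => rfl⟩
  have hleft : Integrable fun p => t * fderiv ℝ ψ (t • u p) v * (u p ⬝ᵥ areaVector u p) :=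
    integrable_mul_dotProduct_areaVector hu1 huc (hdψ continuous_const) hu.continuous
  have hright : Integrable fun p =>
      (2 * ψ (t • u p) + t * fderiv ℝ ψ (t • u p) (u p)) * (v ⬝ᵥ areaVector u p) :=
    integrable_mul_dotProduct_areaVector hu1 huc
      ((continuous_const.mul hψu.continuous).add (hdψ hu.continuous)) continuous_const
  have hstokes := integral_bilinear_fderiv_sub_swap_eq_zero (μ := volume)
    (f := fun p => ψ (t • u p) • u p) B (hψu.smul hu1) hψuc hu (1, 0) (0, 1)
  rw [eq_comm, ← sub_eq_zero, ← integral_sub hright hleft, ← hstokes]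
  congr 1 with p
  have hskew : fderiv ℝ u p (0, 1) ⨯₃ fderiv ℝ u p (1, 0) = -areaVector u p :=
    (cross_anticomm _ _).symm
  have htriple := linearMap_apply_mul_triple_product (fderiv ℝ ψ (t • u p)) (u p) v
    (pderivX u p) (pderivY u p)
  simp only [fderiv_comp_const_smul_smul_self (hu1.differentiable one_ne_zero)
    (hψ.differentiable one_ne_zero), map_add, map_smul, add_apply, smul_apply, hB, hskew,
    dotProduct_neg, smul_eq_mul]
  simp only [areaVector, pderivX, pderivY, ContinuousLinearMap.coe_coe] at htriple ⊢
  linear_combination -t * htriple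

lemma integral_deriv_pow_mul_comp_smul {F : Type*} [NormedAddCommGroup F] [NormedSpace ℝ F]
    {ψ : F → ℝ} (hψ : ContDiff ℝ 1 ψ) (n : ℕ) (z : F) :
    ∫ t in (0 : ℝ)..1, ((n + 1) * t ^ n * ψ (t • z) + t ^ (n + 1) * fderiv ℝ ψ (t • z) z) =
      ψ z := by
  have hderiv (t : ℝ) : HasDerivAt (fun t => t ^ (n + 1) * ψ (t • z))
      ((n + 1) * t ^ n * ψ (t • z) + t ^ (n + 1) * fderiv ℝ ψ (t • z) z) t := by
    have hz : HasDerivAt (fun t : ℝ => t • z) z t := by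
      simpa using (hasDerivAt_id t).smul_const z
    simpa using (hasDerivAt_pow (n + 1) t).fun_mul
      ((hψ.differentiable one_ne_zero (t • z)).hasFDerivAt.comp_hasDerivAt t hz)
  have hcont : Continuous fun t : ℝ =>
      (n + 1) * t ^ n * ψ (t • z) + t ^ (n + 1) * fderiv ℝ ψ (t • z) z := by
    have hz : Continuous fun t : ℝ => t • z := continuous_id.smul continuous_const
    have := hψ.continuous.comp hz
    have := ((hψ.continuous_fderiv one_ne_zero).comp hz).clm_apply
      (continuous_const : Continuous fun _ => z)
    fun_prop
  rw [intervalIntegral.integral_eq_sub_of_hasDerivAt (fun t _ => hderiv t)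
    (hcont.intervalIntegrable 0 1)]
  simp

lemma integrable_restrict_Ioc_prod_of_forall_notMem {X G : Type*} [TopologicalSpace X]
    [MeasurableSpace X] [OpensMeasurableSpace X] [T2Space X] [SecondCountableTopology X]
    {μ : Measure X} [IsFiniteMeasureOnCompacts μ] [SFinite μ] [NormedAddCommGroup G]
    {F : ℝ × X → G} (hF : Continuous F) {K : Set X} (hK : IsCompact K)
    (hFK : ∀ t, ∀ x ∉ K, F (t, x) = 0) (a b : ℝ) :
    Integrable F ((volume.restrict (Ioc a b)).prod μ) := by
  have hcompact : IntegrableOn F (Icc a b ×ˢ K) (volume.prod μ) :=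
    hF.continuousOn.integrableOn_compact (isCompact_Icc.prod hK)
  rw [← Measure.restrict_univ (μ := μ), Measure.prod_restrict]
  refine (hcompact.of_forall_sdiff_eq_zero (measurableSet_Icc.prod .univ) ?_).mono_set
    (prod_mono Ioc_subset_Icc_self subset_rfl)
  rintro ⟨t, x⟩ ⟨⟨ht, -⟩, hx⟩
  exact hFK t x fun hxK => hx ⟨ht, hxK⟩

/-- The change of coordinates `q ↦ (t, (x, y))` with `t = q 2` the cone parameter. -/
def coneCoords : (Fin 3 → ℝ) ≃ᵐ ℝ × ℝ × ℝ :=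
  (MeasurableEquiv.piFinSuccAbove (fun _ => ℝ) 2).trans
    ((MeasurableEquiv.refl ℝ).prodCongr .finTwoArrow)

lemma coneCoords_apply (q : Fin 3 → ℝ) : coneCoords q = (q 2, q 0, q 1) := rfl

lemma measurePreserving_coneCoords : MeasurePreserving coneCoords :=
  ((MeasurePreserving.id volume).prod (volume_preserving_finTwoArrow ℝ)).comp
    (volume_preserving_piFinSuccAbove (fun _ : Fin 3 => ℝ) 2)

/-- The slab `0 < t ≤ 1` on which the cone over a surface is parametrized. -/
def coneSlab : Set (Fin 3 → ℝ) := coneCoords ⁻¹' (Ioc 0 1 ×ˢ univ)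

lemma measurableSet_coneSlab : MeasurableSet coneSlab :=
  coneCoords.measurable (measurableSet_Ioc.prod .univ)

lemma measurePreserving_coneCoords_restrict :
    MeasurePreserving coneCoords (volume.restrict coneSlab)
      ((volume.restrict (Ioc 0 1)).prod volume) := by
  rw [← Measure.restrict_univ (μ := (volume : Measure (ℝ × ℝ))), Measure.prod_restrict]
  exact measurePreserving_coneCoords.restrict_preimage (measurableSet_Ioc.prod .univ)

/-- The cone with apex `0` over the surface `u`, as a self-map of `ℝ³`: the point `(x, y, t)` goes
to `t u(x, y)`. -/
def cone (u : ℝ × ℝ → Fin 3 → ℝ) (q : Fin 3 → ℝ) : Fin 3 → ℝ := q 2 • u (q 0, q 1)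

lemma hasFDerivAt_cone {u : ℝ × ℝ → Fin 3 → ℝ} (hu : Differentiable ℝ u) (q : Fin 3 → ℝ) :
    HasFDerivAt (cone u)
      (q 2 • (fderiv ℝ u (q 0, q 1)).comp ((ContinuousLinearMap.proj 0).prod (.proj 1)) +
        (ContinuousLinearMap.proj 2 : (Fin 3 → ℝ) →L[ℝ] ℝ).smulRight (u (q 0, q 1))) q :=
  (hasFDerivAt_apply 2 q).fun_smul ((hu (q 0, q 1)).hasFDerivAt.comp q
    ((hasFDerivAt_apply 0 q).prodMk (hasFDerivAt_apply 1 q)))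

lemma det_fderiv_cone {u : ℝ × ℝ → Fin 3 → ℝ} (hu : Differentiable ℝ u) (q : Fin 3 → ℝ) :
    (fderiv ℝ (cone u) q).det = q 2 ^ 2 * (u (q 0, q 1) ⬝ᵥ areaVector u (q 0, q 1)) := by
  have hzero : fderiv ℝ u (q 0, q 1) (0, 0) = 0 := map_zero _
  rw [(hasFDerivAt_cone hu q).fderiv, ContinuousLinearMap.det, ← LinearMap.det_toMatrix',
    Matrix.det_fin_three]
  simp [LinearMap.toMatrix'_apply, areaVector, pderivX, pderivY, cross_apply, dotProduct,
    Fin.sum_univ_three, hzero]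
  ring

lemma setIntegral_coneSlab_comp_coneCoords {G : Type*} [NormedAddCommGroup G] [NormedSpace ℝ G]
    (F : ℝ × ℝ × ℝ → G) :
    ∫ q in coneSlab, F (coneCoords q) = ∫ z, F z ∂(volume.restrict (Ioc 0 1)).prod volume :=
  measurePreserving_coneCoords_restrict.integral_comp coneCoords.measurableEmbedding F

lemma integrable_mul_dotProduct_areaVector_snd {u : ℝ × ℝ → Fin 3 → ℝ} (hu : ContDiff ℝ 1 u)
    (huc : HasCompactSupport u) {F : ℝ × ℝ × ℝ → ℝ} {a : ℝ × ℝ → Fin 3 → ℝ} (hF : Continuous F)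
    (ha : Continuous a) : Integrable (fun z => F z * (a z.2 ⬝ᵥ areaVector u z.2))
      ((volume.restrict (Ioc 0 1)).prod volume) :=
  integrable_restrict_Ioc_prod_of_forall_notMem
    (hF.mul ((continuous_dotProduct_areaVector hu ha).comp continuous_snd)) huc
    (fun t p hp => by simp [areaVector_of_notMem_tsupport hp]) 0 1

theorem setIntegral_coneSlab_det_mul_fderiv {u : ℝ × ℝ → Fin 3 → ℝ} (hu : ContDiff ℝ 2 u)
    (huc : HasCompactSupport u) {ψ : (Fin 3 → ℝ) → ℝ} (hψ : ContDiff ℝ 1 ψ) (v : Fin 3 → ℝ) :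
    ∫ q in coneSlab, (fderiv ℝ (cone u) q).det * fderiv ℝ ψ (cone u q) v =
      ∫ p, ψ (u p) * (v ⬝ᵥ areaVector u p) := by
  have hu1 : ContDiff ℝ 1 u := hu.of_le one_le_two
  have htu : Continuous fun z : ℝ × ℝ × ℝ => z.1 • u z.2 :=
    continuous_fst.smul (hu.continuous.comp continuous_snd)
  have hψtu : Continuous fun z : ℝ × ℝ × ℝ => ψ (z.1 • u z.2) := hψ.continuous.comp htu
  have hdψ {a : ℝ × ℝ → Fin 3 → ℝ} (ha : Continuous a) :
      Continuous fun z : ℝ × ℝ × ℝ => fderiv ℝ ψ (z.1 • u z.2) (a z.2) :=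
    ((hψ.continuous_fderiv one_ne_zero).comp htu).clm_apply (ha.comp continuous_snd)
  let F (z : ℝ × ℝ × ℝ) : ℝ := z.1 ^ 2 * fderiv ℝ ψ (z.1 • u z.2) v
  let G (z : ℝ × ℝ × ℝ) : ℝ :=
    2 * z.1 * ψ (z.1 • u z.2) + z.1 ^ 2 * fderiv ℝ ψ (z.1 • u z.2) (u z.2)
  have hF : Continuous F := (continuous_fst.pow 2).mul (hdψ continuous_const)
  have hG : Continuous G := ((continuous_const.mul continuous_fst).mul hψtu).add
    ((continuous_fst.pow 2).mul (hdψ hu.continuous))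
  calc ∫ q in coneSlab, (fderiv ℝ (cone u) q).det * fderiv ℝ ψ (cone u q) v
      = ∫ q in coneSlab, F (coneCoords q) * (u (q 0, q 1) ⬝ᵥ areaVector u (q 0, q 1)) := by
        simp only [det_fderiv_cone (hu1.differentiable one_ne_zero), F, cone, coneCoords_apply,
          mul_right_comm]
    _ = ∫ t in Ioc 0 1, ∫ p, F (t, p) * (u p ⬝ᵥ areaVector u p) :=
        (setIntegral_coneSlab_comp_coneCoords fun z => F z * (u z.2 ⬝ᵥ areaVector u z.2)).trans
          (integral_prod _ (integrable_mul_dotProduct_areaVector_snd hu1 huc hF hu.continuous))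
    _ = ∫ t in Ioc 0 1, ∫ p, G (t, p) * (v ⬝ᵥ areaVector u p) := by
        congr 1 with t
        simp only [F, G, pow_two]
        simpa only [← integral_const_mul, ← mul_assoc, mul_add, mul_comm t 2] using
          congrArg (t * ·) (integral_fderiv_mul_dotProduct_areaVector hu huc hψ v t)
    _ = ∫ p, ∫ t in Ioc 0 1, G (t, p) * (v ⬝ᵥ areaVector u p) := integral_integral_swap
        (integrable_mul_dotProduct_areaVector_snd hu1 huc hG continuous_const)
    _ = ∫ p, ψ (u p) * (v ⬝ᵥ areaVector u p) := by
        congr 1 with p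
        rw [integral_mul_const, ← intervalIntegral.integral_of_le zero_le_one,
          ← integral_deriv_pow_mul_comp_smul hψ 1 (u p)]
        norm_num [G]

lemma integrableOn_det_fderiv_cone {u : ℝ × ℝ → Fin 3 → ℝ} (hu : ContDiff ℝ 1 u)
    (huc : HasCompactSupport u) :
    IntegrableOn (fun q => (fderiv ℝ (cone u) q).det) coneSlab := by
  simp only [det_fderiv_cone (hu.differentiable one_ne_zero)]
  exact (measurePreserving_coneCoords_restrict.integrable_comp_emb
    coneCoords.measurableEmbedding).2 (integrable_mul_dotProduct_areaVector_snd hu huc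
      (continuous_fst.pow 2) hu.continuous)

lemma setIntegral_coneSlab_det_fderiv_cone {u : ℝ × ℝ → Fin 3 → ℝ} (hu : Differentiable ℝ u) :
    ∫ q in coneSlab, (fderiv ℝ (cone u) q).det = (∫ p, u p ⬝ᵥ areaVector u p) / 3 := by
  simp only [det_fderiv_cone hu]
  refine (setIntegral_coneSlab_comp_coneCoords
    fun z => z.1 ^ 2 * (u z.2 ⬝ᵥ areaVector u z.2)).trans ?_
  rw [integral_prod_mul (fun t : ℝ => t ^ 2) (fun p => u p ⬝ᵥ areaVector u p),
    ← intervalIntegral.integral_of_le zero_le_one, integral_pow]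
  ring

/-- The winding number of the surface `u` around a point, encoded as the degree of the cone over
`u` with apex `0`. -/
noncomputable def windingNumber (u : ℝ × ℝ → Fin 3 → ℝ) : (Fin 3 → ℝ) → ℤ :=
  signedMultiplicity (cone u) coneSlab

lemma hasCompactSupport_windingNumber {u : ℝ × ℝ → Fin 3 → ℝ} (hu : Continuous u)
    (huc : HasCompactSupport u) : HasCompactSupport (windingNumber u) := by
  have hK : IsCompact ((fun z : ℝ × (Fin 3 → ℝ) => z.1 • z.2) '' (Icc 0 1 ×ˢ range u)) :=
    (isCompact_Icc.prod (huc.isCompact_range hu)).image continuous_smul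
  refine .intro hK fun y hy => signedMultiplicity_of_notMem_image fun ⟨q, hq, hqy⟩ => hy ?_
  exact ⟨(q 2, u (q 0, q 1)), ⟨Ioc_subset_Icc_self hq.1, mem_range_self _⟩, hqy⟩

lemma integrable_windingNumber {u : ℝ × ℝ → Fin 3 → ℝ} (hu : ContDiff ℝ 1 u)
    (huc : HasCompactSupport u) : Integrable fun y => (windingNumber u y : ℝ) :=
  integrable_signedMultiplicity measurableSet_coneSlab
    (fun q _ => (hasFDerivAt_cone (hu.differentiable one_ne_zero) q).differentiableAt)
    (integrableOn_det_fderiv_cone hu huc)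

theorem integral_windingNumber {u : ℝ × ℝ → Fin 3 → ℝ} (hu : ContDiff ℝ 1 u)
    (huc : HasCompactSupport u) :
    ∫ y, (windingNumber u y : ℝ) = (∫ p, u p ⬝ᵥ areaVector u p) / 3 := by
  have hu' := hu.differentiable one_ne_zero
  have hdegree := setIntegral_det_fderiv_smul_comp (φ := fun _ => (1 : ℝ)) measurableSet_coneSlab
    (fun q _ => (hasFDerivAt_cone hu' q).differentiableAt) (integrableOn_det_fderiv_cone hu huc)
    stronglyMeasurable_const fun _ => le_rfl
  simpa [windingNumber, setIntegral_coneSlab_det_fderiv_cone hu'] using hdegree.symm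

/-- The conormal `v ↦ v · (u_x ∧ u_y)` of the parametrized surface `u`. -/
noncomputable def areaCovector (u : ℝ × ℝ → Fin 3 → ℝ) (p : ℝ × ℝ) : (Fin 3 → ℝ) →L[ℝ] ℝ :=
  (dotProductBilin ℝ ℝ).toContinuousBilinearMap (areaVector u p)

lemma areaCovector_apply (u : ℝ × ℝ → Fin 3 → ℝ) (p : ℝ × ℝ) (v : Fin 3 → ℝ) :
    areaCovector u p v = v ⬝ᵥ areaVector u p := by
  simp [areaCovector, dotProduct_comm]

lemma continuous_areaCovector {u : ℝ × ℝ → Fin 3 → ℝ} (hu : ContDiff ℝ 1 u) :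
    Continuous (areaCovector u) :=
  (ContinuousLinearMap.continuous _).comp (continuous_areaVector hu)

theorem gaussGreen_windingNumber {u : ℝ × ℝ → Fin 3 → ℝ} (hu : ContDiff ℝ 2 u)
    (huc : HasCompactSupport u) :
    GaussGreen volume (fun y => (windingNumber u y : ℝ)) volume u (areaCovector u) := by
  intro ψ hψ hψc
  have hu1 : ContDiff ℝ 1 u := hu.of_le one_le_two
  have hψ1 : ContDiff ℝ 1 ψ := hψ.of_le (by simp)
  have hdψ : Continuous (fderiv ℝ ψ) := hψ1.continuous_fderiv one_ne_zero
  obtain ⟨C, hC⟩ := hdψ.bounded_above_of_compact_support (hψc.fderiv ℝ)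
  have hleft : Integrable fun y => (windingNumber u y : ℝ) • fderiv ℝ ψ y :=
    (integrable_windingNumber hu1 huc).smul_bdd C hdψ.aestronglyMeasurable (.of_forall hC)
  have hright : Integrable fun p => ψ (u p) • areaCovector u p :=
    ((hψ.continuous.comp hu.continuous).smul
      (continuous_areaCovector hu1)).integrable_of_hasCompactSupport
      (.intro huc fun p hp => by simp [areaCovector, areaVector_of_notMem_tsupport hp])
  have hdegree (v : Fin 3 → ℝ) :
      ∫ q in coneSlab, (fderiv ℝ (cone u) q).det • fderiv ℝ ψ (cone u q) v =
        ∫ y, (windingNumber u y : ℝ) • fderiv ℝ ψ y v :=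
    setIntegral_det_fderiv_smul_comp (φ := fun y => fderiv ℝ ψ y v) measurableSet_coneSlab
      (fun q _ => (hasFDerivAt_cone (hu1.differentiable one_ne_zero) q).differentiableAt)
      (integrableOn_det_fderiv_cone hu1 huc)
      (hdψ.clm_apply continuous_const).stronglyMeasurable
      fun y => (fderiv ℝ ψ y).le_of_opNorm_le (hC y) v
  ext v
  rw [ContinuousLinearMap.integral_apply hleft, ContinuousLinearMap.integral_apply hright]
  simp only [smul_apply, areaCovector_apply, smul_eq_mul]
  exact (hdegree v).symm.trans (setIntegral_coneSlab_det_mul_fderiv hu huc hψ1 v)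

lemma GaussGreen.map {E F P : Type*} [NormedAddCommGroup E] [NormedSpace ℝ E] [MeasurableSpace E]
    [BorelSpace E] [NormedAddCommGroup F] [NormedSpace ℝ F] [MeasurableSpace F] [BorelSpace F]
    [MeasurableSpace P] {μ : Measure E} {w : E → ℝ} {ν : Measure P} {s : P → E}
    {N : P → E →L[ℝ] ℝ} (h : GaussGreen μ w ν s N) (L : E ≃L[ℝ] F) :
    GaussGreen (μ.map L) (w ∘ L.symm) ν (L ∘ s) fun p => (N p).comp (L.symm : F →L[ℝ] E) := by
  intro ψ hψ hψc
  have hL : MeasurableEmbedding L := L.toHomeomorph.measurableEmbedding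
  have hpullback := congrArg (L.arrowCongr (.refl ℝ ℝ))
    (h (ψ ∘ L) (hψ.comp L.contDiff) (hψc.comp_homeomorph L.toHomeomorph))
  simp only [← ContinuousLinearEquiv.integral_comp_comm] at hpullback
  rw [hL.integral_map]
  refine Eq.trans (integral_congr_ae (.of_forall fun x => ?_)) hpullback
  ext v
  simp [L.comp_right_fderiv]

lemma dotProduct_self_nonneg {n R : Type*} [Fintype n] [Ring R] [LinearOrder R]
    [IsOrderedRing R] (a : n → R) : 0 ≤ a ⬝ᵥ a :=
  Finset.sum_nonneg fun i _ => mul_self_nonneg (a i)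

lemma norm_toLp_cross_le (a b : Fin 3 → ℝ) :
    ‖WithLp.toLp 2 (a ⨯₃ b)‖ ≤ (a ⬝ᵥ a + b ⬝ᵥ b) / 2 := by
  have hsq : ‖WithLp.toLp 2 (a ⨯₃ b)‖ ^ 2 = (a ⬝ᵥ a) * (b ⬝ᵥ b) - (a ⬝ᵥ b) * (b ⬝ᵥ a) := by
    rw [← cross_dot_cross, EuclideanSpace.real_norm_sq_eq]
    simp [dotProduct, sq]
  refine le_of_sq_le_sq ?_ (div_nonneg
    (add_nonneg (dotProduct_self_nonneg a) (dotProduct_self_nonneg b)) zero_le_two)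
  rw [hsq, dotProduct_comm b a]
  nlinarith [sq_nonneg (a ⬝ᵥ a - b ⬝ᵥ b), sq_nonneg (a ⬝ᵥ b)]

lemma isoperimetricConstant_euclideanSpace_three_pow :
    isoperimetricConstant (volume : Measure (EuclideanSpace ℝ (Fin 3))) ^ 3 =
      ENNReal.ofReal (36 * π) := by
  have hball : volume (Metric.ball (0 : EuclideanSpace ℝ (Fin 3)) 1) =
      ENNReal.ofReal (π * 4 / 3) := by
    simp [EuclideanSpace.volume_ball_fin_three]
  have hcube : (ENNReal.ofReal (π * 4 / 3) ^ (3 : ℝ)⁻¹) ^ 3 = ENNReal.ofReal (π * 4 / 3) := by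
    rw [← ENNReal.rpow_natCast, ← ENNReal.rpow_mul]
    simp
  rw [isoperimetricConstant, finrank_euclideanSpace_fin, hball, mul_pow, Nat.cast_ofNat,
    Nat.cast_ofNat, hcube, ← ENNReal.ofReal_ofNat 3, ← ENNReal.ofReal_pow zero_le_three,
    ← ENNReal.ofReal_mul (by positivity)]
  congr 1
  ring

/-- The Dirichlet energy density `|∇u|²`. -/
noncomputable def dirichletDensity (u : ℝ × ℝ → Fin 3 → ℝ) (p : ℝ × ℝ) : ℝ :=
  pderivX u p ⬝ᵥ pderivX u p + pderivY u p ⬝ᵥ pderivY u p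

lemma dirichletDensity_nonneg (u : ℝ × ℝ → Fin 3 → ℝ) (p : ℝ × ℝ) : 0 ≤ dirichletDensity u p :=
  add_nonneg (dotProduct_self_nonneg _) (dotProduct_self_nonneg _)

lemma integrable_dirichletDensity {u : ℝ × ℝ → Fin 3 → ℝ} (hu : ContDiff ℝ 1 u)
    (huc : HasCompactSupport u) : Integrable (dirichletDensity u) := by
  have hd (v : ℝ × ℝ) : Continuous fun p => fderiv ℝ u p v :=
    (hu.continuous_fderiv one_ne_zero).clm_apply continuous_const
  refine Continuous.integrable_of_hasCompactSupport
    (((hd _).dotProduct (hd _)).add ((hd _).dotProduct (hd _))) (.intro huc fun p hp => ?_)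
  simp [dirichletDensity, pderivX, pderivY, fderiv_of_notMem_tsupport ℝ hp]

lemma norm_areaCovector_comp_ofLp_le (u : ℝ × ℝ → Fin 3 → ℝ) (p : ℝ × ℝ) :
    ‖(areaCovector u p).comp
      (PiLp.continuousLinearEquiv 2 ℝ fun _ : Fin 3 => ℝ :
        EuclideanSpace ℝ (Fin 3) →L[ℝ] Fin 3 → ℝ)‖ ≤
      dirichletDensity u p / 2 := by
  refine ContinuousLinearMap.opNorm_le_bound _
    (div_nonneg (dirichletDensity_nonneg u p) zero_le_two) fun v => ?_
  calc ‖areaCovector u p v.ofLp‖ = ‖inner ℝ (WithLp.toLp 2 (areaVector u p)) v‖ := by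
        rw [areaCovector_apply]
        simp [PiLp.inner_apply, dotProduct]
    _ ≤ ‖WithLp.toLp 2 (areaVector u p)‖ * ‖v‖ := norm_inner_le_norm _ _
    _ ≤ dirichletDensity u p / 2 * ‖v‖ := by
        gcongr
        exact norm_toLp_cross_le _ _

lemma lintegral_enorm_areaCovector_comp_ofLp_le {u : ℝ × ℝ → Fin 3 → ℝ} (hu : ContDiff ℝ 1 u)
    (huc : HasCompactSupport u) :
    ∫⁻ p, ‖(areaCovector u p).comp (PiLp.continuousLinearEquiv 2 ℝ fun _ : Fin 3 => ℝ :
        EuclideanSpace ℝ (Fin 3) →L[ℝ] Fin 3 → ℝ)‖ₑ ≤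
      ENNReal.ofReal ((∫ p, dirichletDensity u p) / 2) := by
  rw [← integral_div, ofReal_integral_eq_lintegral_ofReal
    ((integrable_dirichletDensity hu huc).div_const 2)
    (.of_forall fun p => div_nonneg (dirichletDensity_nonneg u p) zero_le_two)]
  refine lintegral_mono fun p => ?_
  rw [← ofReal_norm]
  exact ENNReal.ofReal_le_ofReal (norm_areaCovector_comp_ofLp_le u p)

theorem lintegral_enorm_windingNumber_pow_le {u : ℝ × ℝ → Fin 3 → ℝ} (hu : ContDiff ℝ 2 u)
    (huc : HasCompactSupport u) :
    ENNReal.ofReal (36 * π) * (∫⁻ y, ‖(windingNumber u y : ℝ)‖ₑ) ^ 2 ≤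
      ENNReal.ofReal ((∫ p, dirichletDensity u p) / 2) ^ 3 := by
  have hu1 : ContDiff ℝ 1 u := hu.of_le one_le_two
  let L := (PiLp.continuousLinearEquiv 2 ℝ fun _ : Fin 3 => ℝ).symm
  have hL : MeasurePreserving L := PiLp.volume_preserving_toLp (Fin 3)
  have hLsymm : MeasurePreserving L.symm := PiLp.volume_preserving_ofLp (Fin 3)
  have hLsymm_emb : MeasurableEmbedding L.symm := L.symm.toHomeomorph.measurableEmbedding
  have hp : NNReal.HolderConjugate (finrank ℝ (EuclideanSpace ℝ (Fin 3))) (3 / 2) := by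
    rw [finrank_euclideanSpace_fin, Nat.cast_ofNat, ← NNReal.holderConjugate_coe_iff,
      Real.holderConjugate_iff]
    norm_num
  have hgreen := (gaussGreen_windingNumber hu huc).map L
  rw [hL.map_eq] at hgreen
  have hiso := GaussGreen.isoperimetric (w := windingNumber u ∘ L.symm) hp hgreen
    (hLsymm.integrable_comp_of_integrable (integrable_windingNumber hu1 huc)).locallyIntegrable
    ((hasCompactSupport_windingNumber hu1.continuous huc).comp_homeomorph L.symm.toHomeomorph)
    (L.continuous.comp hu1.continuous).measurable
    ((continuous_areaCovector hu1).clm_comp_const _).aestronglyMeasurable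
  have hpow (x : ℝ≥0∞) : (x ^ ((3 / 2 : NNReal) : ℝ)⁻¹) ^ 3 = x ^ 2 := by
    rw [← ENNReal.rpow_natCast, ← ENNReal.rpow_mul, ← ENNReal.rpow_natCast]
    norm_num
  rw [← isoperimetricConstant_euclideanSpace_three_pow]
  calc isoperimetricConstant (volume : Measure (EuclideanSpace ℝ (Fin 3))) ^ 3 *
        (∫⁻ y, ‖(windingNumber u y : ℝ)‖ₑ) ^ 2
      = (isoperimetricConstant volume *
          (∫⁻ y, ‖(windingNumber u (L.symm y) : ℝ)‖ₑ) ^ ((3 / 2 : NNReal) : ℝ)⁻¹) ^ 3 := by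
        rw [mul_pow, hpow, hLsymm.lintegral_comp_emb hLsymm_emb fun y => ‖(windingNumber u y : ℝ)‖ₑ]
    _ ≤ ENNReal.ofReal ((∫ p, dirichletDensity u p) / 2) ^ 3 := by
        gcongr
        exact hiso.trans (lintegral_enorm_areaCovector_comp_ofLp_le hu1 huc)

theorem isoperimetric_dirichlet {u : ℝ × ℝ → Fin 3 → ℝ} (hu : ContDiff ℝ 2 u)
    (huc : HasCompactSupport u) :
    32 * π * (∫ p, u p ⬝ᵥ areaVector u p) ^ 2 ≤ (∫ p, dirichletDensity u p) ^ 3 := by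
  set A := ∫ p, dirichletDensity u p
  set V := ∫ p, u p ⬝ᵥ areaVector u p with hV
  have hA : 0 ≤ A := integral_nonneg (dirichletDensity_nonneg u)
  have hvolume : ENNReal.ofReal |V / 3| ≤ ∫⁻ y, ‖(windingNumber u y : ℝ)‖ₑ := by
    rw [hV, ← integral_windingNumber (hu.of_le one_le_two) huc, ← Real.norm_eq_abs, ofReal_norm]
    exact enorm_integral_le_lintegral_enorm _
  have hiso : ENNReal.ofReal (36 * π * |V / 3| ^ 2) ≤ ENNReal.ofReal ((A / 2) ^ 3) := by
    rw [ENNReal.ofReal_mul (by positivity), ENNReal.ofReal_pow (abs_nonneg _),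
      ENNReal.ofReal_pow (by positivity)]
    exact (by gcongr : _ ≤ _).trans (lintegral_enorm_windingNumber_pow_le hu huc)
  rw [ENNReal.ofReal_le_ofReal_iff (by positivity), sq_abs] at hiso
  linarith

section Scaling

variable {u : ℝ × ℝ → Fin 3 → ℝ}

lemma dirEnergy_smul (hu : Differentiable ℝ u) (Ω : Set (ℝ × ℝ)) (c : ℝ) :
    dirEnergy Ω (c • u) = c ^ 2 * dirEnergy Ω u := by
  rw [dirEnergy, dirEnergy, ← integral_const_mul]
  refine integral_congr_ae (.of_forall fun p => ?_)
  simp only [pderivX, pderivY, dot3, fderiv_const_smul (hu p), smul_apply, Pi.smul_apply,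
    smul_eq_mul, Fin.sum_univ_three]
  ring

lemma vol_smul (hu : Differentiable ℝ u) (Ω : Set (ℝ × ℝ)) (c : ℝ) :
    vol Ω (c • u) = c ^ 3 * vol Ω u := by
  rw [vol, vol, ← integral_const_mul]
  refine integral_congr_ae (.of_forall fun p => ?_)
  simp only [pderivX, pderivY, dot3, fderiv_const_smul (hu p), smul_apply, map_smul,
    LinearMap.smul_apply, Pi.smul_apply, smul_eq_mul, Fin.sum_univ_three]
  ring

variable {Ω : Set (ℝ × ℝ)}

lemma dirEnergy_eq_integral (hΩ : tsupport u ⊆ Ω) :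
    dirEnergy Ω u = ∫ p, dirichletDensity u p :=
  setIntegral_eq_integral_of_forall_compl_eq_zero fun p hp => by
    simp [pderivX, pderivY, dot3, fderiv_of_notMem_tsupport ℝ fun h => hp (hΩ h)]

lemma vol_eq_integral (hΩ : tsupport u ⊆ Ω) : vol Ω u = ∫ p, u p ⬝ᵥ areaVector u p :=
  setIntegral_eq_integral_of_forall_compl_eq_zero fun p hp => by
    simp [dot3, image_eq_zero_of_notMem_tsupport fun h => hp (hΩ h)]

lemma isoperimetric_vol (hu : ContDiff ℝ 2 u) (huc : HasCompactSupport u) (hΩ : tsupport u ⊆ Ω) :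
    32 * π * vol Ω u ^ 2 ≤ dirEnergy Ω u ^ 3 := by
  rw [vol_eq_integral hΩ, dirEnergy_eq_integral hΩ]
  exact isoperimetric_dirichlet hu huc

lemma dirEnergy_pos (hne : dnorm Ω u ≠ 0) : 0 < dirEnergy Ω u :=
  Real.sqrt_ne_zero'.1 hne

variable {H δ : ℝ}

lemma rPW_sq_le_dirEnergy (hu : ContDiff ℝ 2 u) (huc : HasCompactSupport u)
    (hΩ : tsupport u ⊆ Ω) (hH : H ≠ 0) (hne : dnorm Ω u ≠ 0) (hD : Dfun Ω H δ u = 0) :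
    rPW H δ ^ 2 ≤ dirEnergy Ω u := by
  have hE := dirEnergy_pos hne
  have hHV : H * vol Ω u = -(δ * dirEnergy Ω u) / 2 := by
    rw [Dfun] at hD
    linarith
  rw [rPW, div_pow, mul_pow, mul_pow, Real.sq_sqrt (by positivity), div_le_iff₀ (by positivity)]
  refine le_of_mul_le_mul_left ?_ (pow_pos hE 2)
  calc dirEnergy Ω u ^ 2 * (2 ^ 2 * (2 * π) * δ ^ 2)
      = 32 * π * (H * vol Ω u) ^ 2 := by rw [hHV]; ring
    _ = 32 * π * vol Ω u ^ 2 * H ^ 2 := by ring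
    _ ≤ dirEnergy Ω u ^ 3 * H ^ 2 := by gcongr; exact isoperimetric_vol hu huc hΩ
    _ = dirEnergy Ω u ^ 2 * (dirEnergy Ω u * H ^ 2) := by ring

lemma Dfun_smul_eq_zero (hu : Differentiable ℝ u) (hD : Dfun Ω H δ u = 0) (t : ℝ) :
    Dfun Ω H (t * δ) (t • u) = 0 := by
  rw [Dfun] at hD
  rw [Dfun, dirEnergy_smul hu, vol_smul hu]
  linear_combination t ^ 3 * hD

lemma dnorm_smul_ne_zero (hu : Differentiable ℝ u) (hne : dnorm Ω u ≠ 0) {t : ℝ} (ht : t ≠ 0) :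
    dnorm Ω (t • u) ≠ 0 := by
  rw [dnorm, dirEnergy_smul hu]
  exact (Real.sqrt_pos.2 (mul_pos (by positivity) (dirEnergy_pos hne))).ne'

lemma Efun_sub_Efun_smul (hu : Differentiable ℝ u) (hD : Dfun Ω H δ u = 0) (t : ℝ) :
    Efun Ω H u - Efun Ω H (t • u) =
      dirEnergy Ω u *
        ((δ - 1) * (t - 1) + (δ - 1 / 2) * (t - 1) ^ 2 + δ / 3 * (t - 1) ^ 3) := by
  rw [Dfun] at hD
  rw [Efun, Efun, dirEnergy_smul hu, vol_smul hu]
  linear_combination (1 - t ^ 3) / 3 * hD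

lemma lt_Efun_sub_Efun_smul (hu : Differentiable ℝ u) (hδ : 1 ≤ δ) (hne : dnorm Ω u ≠ 0)
    (hD : Dfun Ω H δ u = 0) {t : ℝ} (ht : 1 < t) :
    (δ - 1) * dirEnergy Ω u * (t - 1) < Efun Ω H u - Efun Ω H (t • u) := by
  have hE := dirEnergy_pos hne
  have ht0 : 0 < t - 1 := sub_pos.2 ht
  have hquadratic : 0 < (δ - 1 / 2) * (t - 1) ^ 2 := mul_pos (by linarith) (pow_pos ht0 2)
  have hcubic : 0 < δ / 3 * (t - 1) ^ 3 := mul_pos (by linarith) (pow_pos ht0 3)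
  calc (δ - 1) * dirEnergy Ω u * (t - 1) = dirEnergy Ω u * ((δ - 1) * (t - 1)) := by ring
    _ < dirEnergy Ω u *
        ((δ - 1) * (t - 1) + (δ - 1 / 2) * (t - 1) ^ 2 + δ / 3 * (t - 1) ^ 3) := by
      gcongr
      linarith
    _ = Efun Ω H u - Efun Ω H (t • u) := (Efun_sub_Efun_smul hu hD t).symm

end Scaling

theorem depth_strict_decrease_general {Ω : Set (ℝ × ℝ)} {H δ' δ'' : ℝ} (hH : H ≠ 0)
    (h0 : 1 ≤ δ'') (h1 : δ'' < δ') {u : ℝ × ℝ → Fin 3 → ℝ} (hu : ContDiff ℝ 2 u)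
    (huc : HasCompactSupport u) (hΩ : tsupport u ⊆ Ω) (hne : dnorm Ω u ≠ 0)
    (hD : Dfun Ω H δ'' u = 0) :
    Dfun Ω H δ' ((δ' / δ'') • u) = 0 ∧ dnorm Ω ((δ' / δ'') • u) ≠ 0 ∧
    (δ'' - 1) * (rPW H δ'') ^ 2 * (δ' / δ'' - 1) <
      Efun Ω H u - Efun Ω H ((δ' / δ'') • u) := by
  have hδ : 0 < δ'' := one_pos.trans_le h0
  have ht : 1 < δ' / δ'' := (one_lt_div hδ).2 h1
  have hu' : Differentiable ℝ u := hu.differentiable two_ne_zero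
  refine ⟨?_, dnorm_smul_ne_zero hu' hne (one_pos.trans ht).ne', ?_⟩
  · simpa only [div_mul_cancel₀ δ' hδ.ne'] using Dfun_smul_eq_zero hu' hD (δ' / δ'')
  · calc (δ'' - 1) * rPW H δ'' ^ 2 * (δ' / δ'' - 1)
        ≤ (δ'' - 1) * dirEnergy Ω u * (δ' / δ'' - 1) := by
          gcongr
          exact rPW_sq_le_dirEnergy hu huc hΩ hH hne hD
      _ < Efun Ω H u - Efun Ω H ((δ' / δ'') • u) := lt_Efun_sub_Efun_smul hu' h0 hne hD ht

/-- Strict monotone decrease of the depth function on `[1, 3/2)`: for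
`1 < δ″ < δ′ < 3/2` and `u` on the δ″-Nehari manifold, the rescaled map
`v = (δ′/δ″)·u` lies on the δ′-Nehari manifold and
`E(u) − E(v) > (δ″ − 1)·r(δ″)²·(δ′/δ″ − 1)`. -/
theorem depth_strict_decrease (Ω : Set (ℝ × ℝ)) (hΩ : IsOpen Ω)
    (hΩb : Bornology.IsBounded Ω) (H : ℝ) (hH : 0 < H) (δ' δ'' : ℝ)
    (h0 : 1 < δ'') (h1 : δ'' < δ') (h2 : δ' < 3 / 2)
    (u : ℝ × ℝ → Fin 3 → ℝ) (hu : IsAdmissible Ω u)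
    (hne : dnorm Ω u ≠ 0) (hD : Dfun Ω H δ'' u = 0) :
    Dfun Ω H δ' ((δ' / δ'') • u) = 0 ∧ dnorm Ω ((δ' / δ'') • u) ≠ 0 ∧
    (δ'' - 1) * (rPW H δ'') ^ 2 * (δ' / δ'' - 1) <
      Efun Ω H u - Efun Ω H ((δ' / δ'') • u) :=
  depth_strict_decrease_general hH.ne' h0.le h1 (contDiff_infty.1 hu.1 2) hu.2.1 hu.2.2 hne hD
end

section
/- The origin is bounded away from the Nehari manifold and from its negative side in the Dirichlet norm: every admissible map u with ‖u‖ ≠ 0 and D(u) ≤ 0 satisfies ‖u‖² ≥ 8π/H². In particular, all u in 𝒩 = {u : D(u) = 0, u ≠ 0} and all u in 𝒩₋ = {u : D(u) < 0} satisfy ‖u‖ ≥ 2√(2π)/H. -/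
open MeasureTheory Real Filter

/-!
A closed surface in space satisfies `36 π V² ≤ A³`. To see this, slice it by the horizontal planes
at height `t`: if `A(t)` is the area enclosed by the slice, its length `L(t)` satisfies the planar
inequality `4 π |A(t)| ≤ L(t)²`, and the area of the surface is at least
`∫ √(L(t)² + A'(t)²) dt ≥ ∫ √(4 π |A(t)| + A'(t)²) dt`. The one-dimensional inequality
`36 π (∫ A)² ≤ (∫ √(4 π |A| + A'²))³`, for functions vanishing at the ends, is an equality for
the slices of a round sphere. For polyhedral surfaces the slices are polygons and all sums are
finite.

A compactly supported map `u` is periodic, hence a limit of polyhedral tori, for which the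
Dirichlet energy bounds twice the area. Since `vol` is three times the enclosed volume, the limit is
`32 π V(u)² ≤ ‖u‖⁶`. If moreover `‖u‖² ≤ 2 |H V(u)|`, then `8 π ‖u‖⁴ ≤ 32 π H² V(u)² ≤ H² ‖u‖⁶`.
-/

/-! ### The planar isoperimetric inequality for polygons -/

/-- The signed area `p ∧ q` of the parallelogram spanned by two vectors of the plane `ℂ = ℝ²`. -/
def wedge (p q : ℂ) : ℝ := p.re * q.im - p.im * q.re

@[simp] lemma wedge_self (p : ℂ) : wedge p p = 0 := by simp [wedge, mul_comm]

lemma mul_add_mul_le_mul_sqrt {a b R : ℝ} (hR : 0 ≤ R) (h : a ^ 2 + b ^ 2 ≤ R ^ 2) (c d : ℝ) :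
    a * c + b * d ≤ R * √(c ^ 2 + d ^ 2) := by
  refine (abs_le_of_sq_le_sq' ?_ (by positivity)).2
  calc (a * c + b * d) ^ 2 ≤ (a ^ 2 + b ^ 2) * (c ^ 2 + d ^ 2) := by
        linarith [sq_nonneg (a * d - b * c)]
    _ ≤ R ^ 2 * (c ^ 2 + d ^ 2) := by gcongr
    _ = (R * √(c ^ 2 + d ^ 2)) ^ 2 := by rw [mul_pow, Real.sq_sqrt (by positivity)]

/-- Cauchy–Schwarz at each point of the segment, against the circle point on the same vertical. -/
lemma segment_area_add_le {R ε : ℝ} (hε : ε ^ 2 ≤ 1) {p q : ℂ} (hp : |p.re| ≤ R)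
    (hq : |q.re| ≤ R) :
    (p.re + q.re) / 2 * (q - p).im + ε * ∫ x in p.re..q.re, √(R ^ 2 - x ^ 2) ≤ R * ‖q - p‖ := by
  have hR : 0 ≤ R := (abs_nonneg _).trans hp
  let x : ℝ → ℝ := fun s => p.re + (q - p).re * s
  have hx : ∀ s ∈ Set.Icc (0 : ℝ) 1, |x s| ≤ R := by
    rintro s ⟨hs0, hs1⟩
    simp only [x, Complex.sub_re, abs_le] at hp hq ⊢
    constructor <;> nlinarith
  have pointwise : ∀ s ∈ Set.Icc (0 : ℝ) 1,
      x s * (q - p).im + ε * ((q - p).re * √(R ^ 2 - x s ^ 2)) ≤ R * ‖q - p‖ := by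
    intro s hs
    have hsq : √(R ^ 2 - x s ^ 2) ^ 2 = R ^ 2 - x s ^ 2 :=
      Real.sq_sqrt (sub_nonneg.2 (sq_le_sq.2 ((hx s hs).trans (le_abs_self R))))
    have := mul_add_mul_le_mul_sqrt (a := x s) (b := ε * √(R ^ 2 - x s ^ 2)) hR
      (by rw [mul_pow, hsq]; nlinarith [hsq, sq_nonneg √(R ^ 2 - x s ^ 2)]) (q - p).im (q - p).re
    rw [Complex.norm_eq_sqrt_sq_add_sq, add_comm ((q - p).re ^ 2)]
    linarith
  have integrated := intervalIntegral.integral_mono_on (μ := volume) zero_le_one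
    (Continuous.intervalIntegrable (by fun_prop) _ _) intervalIntegrable_const pointwise
  rw [intervalIntegral.integral_add (Continuous.intervalIntegrable (by fun_prop) _ _)
      (Continuous.intervalIntegrable (by fun_prop) _ _), intervalIntegral.integral_mul_const,
    intervalIntegral.integral_const_mul, intervalIntegral.integral_const_mul,
    intervalIntegral.mul_integral_comp_add_mul (f := fun x => √(R ^ 2 - x ^ 2))] at integrated
  have mean : ∫ s in (0 : ℝ)..1, x s = (p.re + q.re) / 2 := by
    rw [intervalIntegral.integral_add (by simp) (Continuous.intervalIntegrable (by fun_prop) _ _),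
      intervalIntegral.integral_const_mul]
    simp only [intervalIntegral.integral_const, integral_id, Complex.sub_re, smul_eq_mul]
    ring
  simpa [mean] using integrated

lemma integral_sqrt_sq_sub_sq {R : ℝ} (hR : 0 ≤ R) :
    ∫ x in -R..R, √(R ^ 2 - x ^ 2) = π * R ^ 2 / 2 := by
  have scaling := intervalIntegral.mul_integral_comp_mul_left (a := -1) (b := 1)
    (f := fun x => √(R ^ 2 - x ^ 2)) R
  rw [mul_neg_one, mul_one] at scaling
  have hsqrt : ∀ x : ℝ, √(R ^ 2 - (R * x) ^ 2) = R * √(1 - x ^ 2) := fun x => by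
    rw [show R ^ 2 - (R * x) ^ 2 = R ^ 2 * (1 - x ^ 2) by ring, Real.sqrt_mul (by positivity),
      Real.sqrt_sq hR]
  rw [← scaling]
  simp only [hsqrt, intervalIntegral.integral_const_mul, integral_sqrt_one_sub_sq]
  ring

/-- The boundary is compared with the circle of radius `R` centred at `0`: the lower semicircle is
run through while the polygon goes from its leftmost to its rightmost vertex, then the upper one. -/
lemma polygon_area_add_le {n m : ℕ} (hmn : m ≤ n) {p : ℕ → ℂ} (hn : (p n).re = (p 0).re) {R : ℝ}
    (hR : ∀ k, |(p k).re| ≤ R) (h0 : (p 0).re = -R) (hm : (p m).re = R) :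
    (∑ k ∈ Finset.range n, ((p k).re + (p (k + 1)).re) / 2 * (p (k + 1) - p k).im) + π * R ^ 2 ≤
      R * ∑ k ∈ Finset.range n, ‖p (k + 1) - p k‖ := by
  have hint : ∀ k, IntervalIntegrable (fun x => √(R ^ 2 - x ^ 2)) volume (p k).re (p (k + 1)).re :=
    fun k => Continuous.intervalIntegrable (by fun_prop) _ _
  have going := Finset.sum_le_sum fun k (_ : k ∈ Finset.range m) =>
    segment_area_add_le (R := R) (ε := 1) (by norm_num) (hR k) (hR (k + 1))
  have returning := Finset.sum_le_sum fun k (_ : k ∈ Finset.Ico m n) =>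
    segment_area_add_le (R := R) (ε := -1) (by norm_num) (hR k) (hR (k + 1))
  rw [Finset.sum_add_distrib, ← Finset.mul_sum, ← Finset.mul_sum] at going returning
  rw [intervalIntegral.sum_integral_adjacent_intervals fun k _ => hint k, h0, hm,
    integral_sqrt_sq_sub_sq ((abs_nonneg _).trans (hR 0))] at going
  rw [intervalIntegral.sum_integral_adjacent_intervals_Ico (a := fun k => (p k).re) hmn
      fun k _ => hint k, hm, hn, h0,
    intervalIntegral.integral_symm, integral_sqrt_sq_sub_sq ((abs_nonneg _).trans (hR 0))]
    at returning
  rw [← Finset.sum_range_add_sum_Ico _ hmn, ← Finset.sum_range_add_sum_Ico _ hmn]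
  linarith

lemma isoperimetric_polygon {n m : ℕ} (hmn : m ≤ n) {p : ℕ → ℂ} (hn : p n = p 0)
    (hmin : ∀ k, (p 0).re ≤ (p k).re) (hmax : ∀ k, (p k).re ≤ (p m).re) :
    2 * π * ∑ k ∈ Finset.range n, wedge (p k) (p (k + 1)) ≤
      (∑ k ∈ Finset.range n, ‖p (k + 1) - p k‖) ^ 2 := by
  set c := ((p 0).re + (p m).re) / 2 with hc
  set R := ((p m).re - (p 0).re) / 2 with hR
  have centred := polygon_area_add_le hmn (p := fun k => p k - c) (R := R) (by simp [hn])
    (fun k => by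
      simp only [Complex.sub_re, Complex.ofReal_re, abs_le]
      constructor <;> linarith [hmin k, hmax k])
    (by simp only [Complex.sub_re, Complex.ofReal_re]; linarith)
    (by simp only [Complex.sub_re, Complex.ofReal_re]; linarith)
  have trapezoid_eq_wedge : ∑ k ∈ Finset.range n, wedge (p k) (p (k + 1)) =
      2 * ∑ k ∈ Finset.range n,
        ((p k - c).re + (p (k + 1) - c).re) / 2 * (p (k + 1) - c - (p k - c)).im := by
    have telescope := Finset.sum_range_sub (fun k => ((p k).re - 2 * c) * (p k).im) n
    rw [hn, sub_self] at telescope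
    rw [Finset.mul_sum, ← sub_eq_zero, ← Finset.sum_sub_distrib, ← neg_eq_zero,
      ← Finset.sum_neg_distrib, ← telescope]
    refine Finset.sum_congr rfl fun k _ => ?_
    simp only [wedge, Complex.sub_re, Complex.sub_im, Complex.ofReal_re, Complex.ofReal_im]
    ring
  rw [trapezoid_eq_wedge]
  simp only [sub_sub_sub_cancel_right] at centred ⊢
  set A := ∑ k ∈ Finset.range n, ((p k - c).re + (p (k + 1) - c).re) / 2 * (p (k + 1) - p k).im
  set L := ∑ k ∈ Finset.range n, ‖p (k + 1) - p k‖
  calc 2 * π * (2 * A) ≤ 4 * π * (R * L - π * R ^ 2) := by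
        linarith [mul_le_mul_of_nonneg_left centred (by positivity : 0 ≤ 4 * π)]
    _ = L ^ 2 - (L - 2 * π * R) ^ 2 := by ring
    _ ≤ L ^ 2 := sub_le_self _ (sq_nonneg _)

lemma sum_eq_sum_range_pow {F M : Type*} [AddCommMonoid M] {σ : Equiv.Perm F} {s : Finset F}
    (hσ : σ.IsCycleOn s) {a : F} (ha : a ∈ s) (h : F → M) :
    ∑ f ∈ s, h f = ∑ k ∈ Finset.range s.card, h ((σ ^ k) a) := by
  refine (Finset.sum_bij (fun k _ => (σ ^ k) a) (fun k _ => ?_) (fun i hi j hj hij => ?_)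
    (fun f hf => ?_) fun _ _ => rfl).symm
  · exact hσ.1.mapsTo.perm_pow k ha
  · exact Nat.ModEq.eq_of_lt_of_lt ((hσ.pow_apply_eq_pow_apply ha).1 hij)
      (Finset.mem_range.1 hi) (Finset.mem_range.1 hj)
  · obtain ⟨k, hk, hkf⟩ := hσ.exists_pow_eq ha hf
    exact ⟨k, Finset.mem_range.2 hk, hkf⟩

section Permutation

variable {F : Type*} [Fintype F]

lemma sum_disjoint_mul {M : Type*} [AddCommMonoid M] {σ τ : Equiv.Perm F} (hστ : σ.Disjoint τ)
    (h : F → F → M) (h_diag : ∀ f, h f f = 0) :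
    ∑ f, h f ((σ * τ) f) = ∑ f, h f (σ f) + ∑ f, h f (τ f) := by
  rw [← Finset.sum_add_distrib]
  refine Finset.sum_congr rfl fun f _ => ?_
  rcases hστ f with hf | hf
  · rw [hστ.commute.eq, Equiv.Perm.mul_apply, hf, h_diag, zero_add]
  · rw [Equiv.Perm.mul_apply, hf, h_diag, add_zero]

lemma isoperimetric_isCycle (p : F → ℂ) {σ : Equiv.Perm F} (hσ : σ.IsCycle) :
    2 * π * ∑ f, wedge (p f) (p (σ f)) ≤ (∑ f, ‖p (σ f) - p f‖) ^ 2 := by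
  classical
  have hon : σ.IsCycleOn (σ.support : Set F) := by
    rw [Equiv.Perm.coe_support_eq_set_support]; exact hσ.isCycleOn
  obtain ⟨a, ha, ha_min⟩ := σ.support.exists_min_image (fun f => (p f).re) hσ.nonempty_support
  obtain ⟨b, hb, hb_max⟩ := σ.support.exists_max_image (fun f => (p f).re) hσ.nonempty_support
  obtain ⟨m, hm, rfl⟩ := hon.exists_pow_eq ha hb
  have mem_support : ∀ k : ℕ, (σ ^ k) a ∈ σ.support := fun k =>
    Equiv.Perm.pow_apply_mem_support.2 ha
  have sum_eq : ∀ h : F → F → ℝ, (∀ f, h f f = 0) → ∑ f, h f (σ f) =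
      ∑ k ∈ Finset.range σ.support.card, h ((σ ^ k) a) ((σ ^ (k + 1)) a) := fun h h_diag => by
    rw [← Finset.sum_subset (Finset.subset_univ σ.support) fun f _ hf => by
      rw [Equiv.Perm.notMem_support.1 hf, h_diag], sum_eq_sum_range_pow hon ha]
    simp only [pow_succ', Equiv.Perm.mul_apply]
  rw [sum_eq (fun f f' => wedge (p f) (p f')) fun f => wedge_self (p f),
    sum_eq (fun f f' => ‖p f' - p f‖) (by simp)]
  exact isoperimetric_polygon hm.le (p := fun k => p ((σ ^ k) a)) (by simp [hon.pow_card_apply ha])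
    (fun k => ha_min _ (mem_support k)) fun k => hb_max _ (mem_support k)

lemma isoperimetric_perm (p : F → ℂ) (σ : Equiv.Perm F) :
    2 * π * ∑ f, wedge (p f) (p (σ f)) ≤ (∑ f, ‖p (σ f) - p f‖) ^ 2 := by
  induction σ using Equiv.Perm.cycle_induction_on with
  | base_one => simp
  | base_cycles σ hσ => exact isoperimetric_isCycle p hσ
  | induction_disjoint σ τ hd _ ihσ ihτ =>
    rw [sum_disjoint_mul hd (fun f f' => wedge (p f) (p f')) fun f => wedge_self (p f),
      sum_disjoint_mul hd (fun f f' => ‖p f' - p f‖) (by simp)]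
    have hσ : 0 ≤ ∑ f, ‖p (σ f) - p f‖ := Finset.sum_nonneg fun _ _ => norm_nonneg _
    have hτ : 0 ≤ ∑ f, ‖p (τ f) - p f‖ := Finset.sum_nonneg fun _ _ => norm_nonneg _
    nlinarith [mul_nonneg hσ hτ]

lemma isoperimetric_perm_abs (p : F → ℂ) (σ : Equiv.Perm F) :
    2 * π * |∑ f, wedge (p f) (p (σ f))| ≤ (∑ f, ‖p (σ f) - p f‖) ^ 2 := by
  have mirrored := isoperimetric_perm (fun f => starRingEnd ℂ (p f)) σ
  have wedge_conj : ∀ z w : ℂ, wedge (starRingEnd ℂ z) (starRingEnd ℂ w) = -wedge z w :=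
    fun z w => by simp only [wedge, Complex.conj_re, Complex.conj_im]; ring
  simp only [wedge_conj, ← map_sub, RCLike.norm_conj, Finset.sum_neg_distrib] at mirrored
  rcases abs_choice (∑ f, wedge (p f) (p (σ f))) with h | h <;> rw [h]
  exacts [isoperimetric_perm p σ, mirrored]

end Permutation

/-! ### The one-dimensional inequality -/

lemma integral_sqrt_one_sub_abs_div (m : ℝ) : ∫ y in 0..m, √(1 - |y| / |m|) = 2 / 3 * m := by
  rcases eq_or_ne m 0 with rfl | hm
  · simp
  have scaling := intervalIntegral.mul_integral_comp_mul_left (a := 0) (b := 1)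
    (f := fun y => √(1 - |y| / |m|)) m
  have reflect : ∫ x in (0 : ℝ)..1, √(1 - |m * x| / |m|) = ∫ x in (0 : ℝ)..1, √(1 - x) :=
    intervalIntegral.integral_congr fun x hx => by
      rw [Set.uIcc_of_le zero_le_one] at hx
      simp only [abs_mul, abs_of_nonneg hx.1, mul_div_cancel_left₀ x (abs_ne_zero.2 hm)]
  have integral_sqrt : ∫ x in (0 : ℝ)..1, √x = 2 / 3 := by
    simp only [Real.sqrt_eq_rpow]
    rw [integral_rpow (by norm_num)]
    norm_num
  rw [mul_zero, mul_one] at scaling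
  rw [← scaling, reflect, intervalIntegral.integral_comp_sub_left (fun x => √x), sub_self, sub_zero,
    integral_sqrt, mul_comm]

section Profile

variable {A B g : ℝ → ℝ} {κ : ℝ}

lemma monotone_profile_le_integral (hκ : 0 ≤ κ) (hA : ∀ t, HasDerivAt A (B t) t)
    (hB : Continuous B) (hg : Continuous g) (hgAB : ∀ t, √(κ * |A t| + B t ^ 2) ≤ g t)
    {a b M : ℝ} (hab : a ≤ b) (hM : 0 < M) (hAM : ∀ t ∈ Set.Icc a b, |A t| ≤ M) :
    √(κ / M) * (∫ t in a..b, |A t|) + |∫ y in A a..A b, √(1 - |y| / M)| ≤ ∫ t in a..b, g t := by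
  have hA_cont : Continuous A := continuous_iff_continuousAt.2 fun t => (hA t).continuousAt
  suffices signed : ∀ ε : ℝ, ε ^ 2 = 1 → √(κ / M) * (∫ t in a..b, |A t|) +
      ε * (∫ y in A a..A b, √(1 - |y| / M)) ≤ ∫ t in a..b, g t by
    rcases abs_choice (∫ y in A a..A b, √(1 - |y| / M)) with h | h <;> rw [h]
    · simpa only [one_mul] using signed 1 (one_pow 2)
    · simpa only [neg_one_mul] using signed (-1) (by norm_num)
  intro ε hε
  have pointwise : ∀ t ∈ Set.Icc a b,
      √(κ / M) * |A t| + ε * (√(1 - |A t| / M) * B t) ≤ g t := by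
    intro t ht
    have ratio_nonneg : 0 ≤ |A t| / M := by positivity
    have ratio_le_one : |A t| / M ≤ 1 := (div_le_one hM).2 (hAM t ht)
    have split : √(κ / M) * |A t| = √(|A t| / M) * √(κ * |A t|) := by
      rw [← Real.sqrt_mul ratio_nonneg, show |A t| / M * (κ * |A t|) = κ / M * |A t| ^ 2 by ring,
        Real.sqrt_mul (by positivity), Real.sqrt_sq (abs_nonneg _)]
    have := mul_add_mul_le_mul_sqrt (R := 1) zero_le_one (a := √(|A t| / M))
      (b := ε * √(1 - |A t| / M)) (by
        rw [mul_pow, hε, Real.sq_sqrt ratio_nonneg, Real.sq_sqrt (by linarith)]; linarith)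
      √(κ * |A t|) (B t)
    rw [Real.sq_sqrt (by positivity), ← split] at this
    linarith [hgAB t]
  have change_of_variable : ∫ t in a..b, √(1 - |A t| / M) * B t =
      ∫ y in A a..A b, √(1 - |y| / M) :=
    intervalIntegral.integral_comp_mul_deriv (g := fun y => √(1 - |y| / M)) (fun t _ => hA t)
      hB.continuousOn (by fun_prop)
  have integrated := intervalIntegral.integral_mono_on (μ := volume) hab
    (Continuous.intervalIntegrable (by fun_prop) _ _) (hg.intervalIntegrable _ _) pointwise
  rwa [intervalIntegral.integral_add (Continuous.intervalIntegrable (by fun_prop) _ _)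
      (Continuous.intervalIntegrable (by fun_prop) _ _), intervalIntegral.integral_const_mul,
    intervalIntegral.integral_const_mul, change_of_variable] at integrated

lemma sq_integral_le_integral_cube (hκ : 0 ≤ κ) (hA : ∀ t, HasDerivAt A (B t) t)
    (hB : Continuous B) (hg : Continuous g) (hgAB : ∀ t, √(κ * |A t| + B t ^ 2) ≤ g t)
    {a b : ℝ} (hab : a ≤ b) (ha : A a = 0) (hb : A b = 0) :
    9 * κ * (∫ t in a..b, A t) ^ 2 ≤ (∫ t in a..b, g t) ^ 3 := by
  have hA_cont : Continuous A := continuous_iff_continuousAt.2 fun t => (hA t).continuousAt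
  obtain ⟨t₀, ht₀, hmax⟩ := isCompact_Icc.exists_isMaxOn (Set.nonempty_Icc.2 hab)
    hA_cont.abs.continuousOn
  have hAM : ∀ t ∈ Set.Icc a b, |A t| ≤ |A t₀| := hmax
  have I_le : |∫ t in a..b, A t| ≤ ∫ t in a..b, |A t| :=
    intervalIntegral.abs_integral_le_integral_abs hab
  have peak : ∀ m, |∫ y in 0..m, √(1 - |y| / |m|)| = 2 / 3 * |m| := fun m => by
    rw [integral_sqrt_one_sub_abs_div, abs_mul, abs_of_pos (by norm_num : (0 : ℝ) < 2 / 3)]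
  rcases (abs_nonneg (A t₀)).eq_or_lt with hM | hM
  · have hI : ∫ t in a..b, A t = 0 := by
      rw [intervalIntegral.integral_congr (g := fun _ => 0) fun t ht => ?_]
      · simp
      · exact abs_nonpos_iff.1 (hM ▸ hAM t (Set.uIcc_of_le hab ▸ ht))
    have hG : 0 ≤ ∫ t in a..b, g t :=
      intervalIntegral.integral_nonneg hab fun t _ => (Real.sqrt_nonneg _).trans (hgAB t)
    simpa [hI] using pow_nonneg hG 3
  have rising := monotone_profile_le_integral hκ hA hB hg hgAB ht₀.1 hM fun t ht =>
    hAM t ⟨ht.1, ht.2.trans ht₀.2⟩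
  have falling := monotone_profile_le_integral hκ hA hB hg hgAB ht₀.2 hM fun t ht =>
    hAM t ⟨ht₀.1.trans ht.1, ht.2⟩
  rw [ha, peak] at rising
  rw [hb, intervalIntegral.integral_symm 0, abs_neg, peak] at falling
  rw [← intervalIntegral.integral_add_adjacent_intervals (hg.intervalIntegrable a t₀)
    (hg.intervalIntegrable t₀ b)]
  rw [← intervalIntegral.integral_add_adjacent_intervals (hA_cont.abs.intervalIntegrable a t₀)
    (hA_cont.abs.intervalIntegrable t₀ b)] at I_le
  set I := (∫ t in a..t₀, |A t|) + ∫ t in t₀..b, |A t|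
  set k := √(κ / |A t₀|)
  have hk : k ^ 2 * |A t₀| = κ := by
    rw [Real.sq_sqrt (by positivity), div_mul_cancel₀ _ hM.ne']
  have hI : 0 ≤ I := (abs_nonneg _).trans I_le
  have am_gm : ∀ p q : ℝ, 0 ≤ p → 0 ≤ q → 27 * p ^ 2 * q ≤ (2 * p + q) ^ 3 := fun p q hp hq => by
    nlinarith [mul_nonneg (sq_nonneg (p - q)) (by positivity : 0 ≤ 8 * p + q)]
  calc 9 * κ * (∫ t in a..b, A t) ^ 2 ≤ 9 * κ * I ^ 2 := by
        rw [← sq_abs (∫ t in a..b, A t)]; gcongr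
    _ = 27 * (k * I / 2) ^ 2 * (4 / 3 * |A t₀|) := by rw [← hk]; ring
    _ ≤ (2 * (k * I / 2) + 4 / 3 * |A t₀|) ^ 3 := am_gm _ _ (by positivity) (by positivity)
    _ ≤ _ := pow_le_pow_left₀ (by positivity) (by simp only [I]; linarith) 3

end Profile

/-! ### Triangulated surfaces and their horizontal slices -/

/-- A closed oriented triangulated surface, in half-edge form: `F` is the set of oriented edges of
the triangles, `next` runs around a triangle and `opp` exchanges the two sides of an edge. -/
structure HalfEdgeSurface (F : Type*) where
  next : Equiv.Perm F
  opp : Equiv.Perm F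
  next_next_next : ∀ f, next (next (next f)) = f
  opp_opp : ∀ f, opp (opp f) = f

namespace HalfEdgeSurface

attribute [simp] next_next_next opp_opp

variable {F : Type*} (T : HalfEdgeSurface F)

/-- A function of the vertices, encoded as a function of the half-edges starting there. -/
def IsVertexLabel {α : Type*} (h : F → α) : Prop := ∀ f, h (T.opp f) = h (T.next f)

/-- The sum of `a` over the three half-edges of the triangle containing `f`. -/
def triSum (a : F → ℝ) (f : F) : ℝ := a f + a (T.next f) + a (T.next (T.next f))

variable {T}

lemma IsVertexLabel.next_opp {α : Type*} {h : F → α} (hh : T.IsVertexLabel h) (f : F) :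
    h (T.next (T.opp f)) = h f := by
  rw [← hh, T.opp_opp]

lemma IsVertexLabel.comp {α β : Type*} {h : F → α} (hh : T.IsVertexLabel h) (φ : α → β) :
    T.IsVertexLabel fun f => φ (h f) := fun f => congrArg φ (hh f)

lemma triSum_const_mul {w : F → ℝ} (hw : ∀ f, w (T.next f) = w f) (a : F → ℝ) (f : F) :
    T.triSum (fun f => w f * a f) f = w f * T.triSum a f := by
  simp only [triSum, hw]
  ring

section Sum

variable [Fintype F]

variable (T) in
lemma sum_triSum (a : F → ℝ) : ∑ f, T.triSum a f = 3 * ∑ f, a f := by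
  simp only [triSum, Finset.sum_add_distrib, Equiv.sum_comp T.next (fun f => a (T.next f)),
    Equiv.sum_comp T.next a]
  ring

lemma sum_eq_of_triSum_eq {a b : F → ℝ} (h : ∀ f, T.triSum a f = T.triSum b f) :
    ∑ f, a f = ∑ f, b f := by
  have := Finset.sum_congr rfl fun f (_ : f ∈ Finset.univ) => h f
  rw [T.sum_triSum, T.sum_triSum] at this
  linarith

lemma sum_mul_triSum {w : F → ℝ} (hw : ∀ f, w (T.next f) = w f) (a : F → ℝ) :
    ∑ f, w f * T.triSum a f = 3 * ∑ f, w f * a f := by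
  rw [← T.sum_triSum]
  exact Finset.sum_congr rfl fun f _ => (triSum_const_mul hw a f).symm

lemma sum_eq_zero_of_opp_neg {a : F → ℝ} (ha : ∀ f, a (T.opp f) = -a f) : ∑ f, a f = 0 := by
  have := Equiv.sum_comp T.opp a
  simp only [ha, Finset.sum_neg_distrib] at this
  linarith

end Sum

open Classical in
variable (T) in
/-- The successor map of the oriented boundary polygons of the vertex set `S`: the polygons cross
the half-edges going out of `S`, and `sliceNext` passes through the triangle of such a half-edge
to the next edge crossed. The other half-edges are fixed. -/
noncomputable def sliceNext (S : F → Prop) (f : F) : F :=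
  if S f ∧ ¬S (T.next f) then
    T.opp (if S (T.next (T.next f)) then T.next f else T.next (T.next f))
  else f

open Classical in
lemma sliceNext_injective {S : F → Prop} (hS : T.IsVertexLabel S) :
    Function.Injective (T.sliceNext S) := by
  let slicePrev (e : F) : F :=
    if S e ∧ ¬S (T.next e) then
      if S (T.next (T.next (T.opp e))) then T.next (T.next (T.opp e)) else T.next (T.opp e)
    else e
  refine Function.LeftInverse.injective (g := slicePrev) fun f => ?_
  by_cases h₀ : S f <;> by_cases h₁ : S (T.next f) <;> by_cases h₂ : S (T.next (T.next f)) <;>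
    simp [slicePrev, sliceNext, hS _, hS.next_opp, h₀, h₁, h₂]

variable [Fintype F]

open Classical in
lemma sum_wedge_sliceNext {S : F → Prop} {Q : F → ℂ} (hQ : ∀ f, Q (T.opp f) = Q f)
    (collinear : ∀ f, T.triSum (fun f => wedge (Q f) (Q (T.next (T.next f)))) f = 0) :
    ∑ f, wedge (Q f) (Q (T.sliceNext S f)) =
      ∑ f, if S f then wedge (Q f) (Q (T.next (T.next f))) else 0 := by
  refine sum_eq_of_triSum_eq (T := T) fun f => ?_
  have col := collinear f
  simp only [triSum, next_next_next, sliceNext] at col ⊢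
  by_cases h₀ : S f <;> by_cases h₁ : S (T.next f) <;> by_cases h₂ : S (T.next (T.next f)) <;>
    simp only [h₀, h₁, h₂, hQ, not_true_eq_false, not_false_eq_true, and_self,
      and_true, and_false, if_true, if_false, wedge_self] <;>
    simp only [wedge] at col ⊢ <;> linarith

open Classical in
lemma sum_norm_sliceNext {S : F → Prop} {Q D : F → ℂ} {κ : F → ℝ} (hQ : ∀ f, Q (T.opp f) = Q f)
    (hD : ∀ f, D (T.next f) = D f) (hκ : ∀ f, T.triSum κ f = 0)
    (hQκ : ∀ f, Q (T.next (T.next f)) - Q f = κ f • D f) :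
    3 * ∑ f, ‖Q (T.sliceNext S f) - Q f‖ =
      ∑ f, |T.triSum (fun f => if S f then κ f else 0) f| * ‖D f‖ := by
  have norm_prev : ∀ f, ‖Q (T.next (T.next f)) - Q f‖ = |κ f| * ‖D f‖ := fun f => by
    rw [hQκ, norm_smul, Real.norm_eq_abs]
  have norm_next : ∀ f, ‖Q (T.next f) - Q f‖ = |κ f + κ (T.next (T.next f))| * ‖D f‖ := fun f => by
    have := norm_prev (T.next f)
    rw [next_next_next, norm_sub_rev, hD] at this
    rw [this, ← abs_neg]
    congr 2
    linarith [hκ f, show T.triSum κ f = κ f + κ (T.next f) + κ (T.next (T.next f)) from rfl]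
  rw [← T.sum_triSum]
  refine Finset.sum_congr rfl fun f _ => ?_
  have total := hκ f
  have prev₁ := norm_prev (T.next f)
  have prev₂ := norm_prev (T.next (T.next f))
  have next₁ := norm_next (T.next f)
  have next₂ := norm_next (T.next (T.next f))
  simp only [triSum, next_next_next, sliceNext, hD] at total prev₁ prev₂ next₁ next₂ ⊢
  by_cases h₀ : S f <;> by_cases h₁ : S (T.next f) <;> by_cases h₂ : S (T.next (T.next f)) <;>
    simp [h₀, h₁, h₂, hQ, total, norm_prev f, norm_next f, prev₁, prev₂, next₁, next₂, add_comm]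

open Classical in
lemma sum_wedge_sub_vertex {S : F → Prop} (hS : T.IsVertexLabel S) {P Q : F → ℂ}
    (hP : T.IsVertexLabel P) (hQ : ∀ f, Q (T.opp f) = Q f) :
    (∑ f, if S f then wedge (Q f - P f) (Q (T.next (T.next f)) - P f) else 0) =
      ∑ f, if S f then wedge (Q f) (Q (T.next (T.next f))) else 0 := by
  -- `f ↦ opp (next (next f))` runs through the half-edges going out of one vertex.
  have rotate := Equiv.sum_comp (T.next.trans (T.next.trans T.opp))
    fun f => if S f then wedge (P f) (Q f) else 0
  simp only [Equiv.trans_apply, hS _, hP _, hQ, next_next_next] at rotate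
  rw [← sub_eq_zero, ← Finset.sum_sub_distrib, ← sub_eq_zero.2 rotate.symm,
    ← Finset.sum_sub_distrib]
  refine Finset.sum_congr rfl fun f _ => ?_
  split_ifs
  · simp only [wedge, Complex.sub_re, Complex.sub_im]
    ring
  · simp

end HalfEdgeSurface

lemma hasDerivAt_max_zero_pow (n : ℕ) (x : ℝ) :
    HasDerivAt (fun x : ℝ => max x 0 ^ (n + 2)) ((n + 2 : ℕ) * max x 0 ^ (n + 1)) x := by
  have off_zero : ∀ y : ℝ, y ≠ 0 →
      HasDerivAt (fun x : ℝ => max x 0 ^ (n + 2)) ((n + 2 : ℕ) * max y 0 ^ (n + 1)) y := by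
    intro y hy
    rcases lt_or_gt_of_ne hy with h | h
    · have : (fun x : ℝ => max x 0 ^ (n + 2)) =ᶠ[nhds y] fun _ => 0 := by
        filter_upwards [gt_mem_nhds h] with x hx
        simp [max_eq_right hx.le]
      simpa [max_eq_right h.le] using (hasDerivAt_const y (0 : ℝ)).congr_of_eventuallyEq this
    · have : (fun x : ℝ => max x 0 ^ (n + 2)) =ᶠ[nhds y] fun x => x ^ (n + 2) := by
        filter_upwards [lt_mem_nhds h] with x hx
        rw [max_eq_left hx.le]
      rw [max_eq_left h.le]
      exact (hasDerivAt_pow (n + 2) y).congr_of_eventuallyEq this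
  rcases eq_or_ne x 0 with rfl | hx
  · exact hasDerivAt_of_hasDerivAt_of_ne off_zero (by fun_prop) (by fun_prop)
  · exact off_zero x hx

namespace HalfEdgeSurface

variable {F : Type*} (T : HalfEdgeSurface F)

section Level

variable (P : F → ℂ) (z : F → ℝ)

/-- The point at height `t` on the line carrying the edge `f`, for a surface with vertices
`(P f, z f)`; it lies on the edge itself only if `t` is between the heights of its ends. -/
noncomputable def levelPoint (t : ℝ) (f : F) : ℂ :=
  P f + ((t - z f) / (z (T.next f) - z f)) • (P (T.next f) - P f)

/-- The horizontal direction in the plane of the triangle of `f`. Together with `projArea` it is,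
up to a rotation by a right angle, the normal vector of length twice the area of the triangle. -/
noncomputable def levelDir (f : F) : ℂ :=
  (z (T.next f) - z f) • (P (T.next (T.next f)) - P f) -
    (z (T.next (T.next f)) - z f) • (P (T.next f) - P f)

/-- Twice the signed area of the projection of the triangle of `f` to the horizontal plane. -/
def projArea (f : F) : ℝ := wedge (P (T.next f) - P f) (P (T.next (T.next f)) - P f)

/-- The coefficient of `φ (z f)` in the second divided difference of a function `φ` at the heights
of the three vertices of the triangle of `f`. -/
noncomputable def divDiffCoeff (f : F) : ℝ :=
  ((z f - z (T.next f)) * (z f - z (T.next (T.next f))))⁻¹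

lemma levelDir_next (f : F) : T.levelDir P z (T.next f) = T.levelDir P z f := by
  simp only [levelDir, next_next_next]
  module

lemma projArea_next (f : F) : T.projArea P (T.next f) = T.projArea P f := by
  simp only [projArea, wedge, next_next_next, Complex.sub_re, Complex.sub_im]
  ring

variable {T P z}

lemma ne_next_next (hz : ∀ f, z f ≠ z (T.next f)) (f : F) : z f ≠ z (T.next (T.next f)) := by
  simpa using (hz (T.next (T.next f))).symm

lemma vandermonde_ne_zero (hz : ∀ f, z f ≠ z (T.next f)) (f : F) :
    (z f - z (T.next f)) * (z f - z (T.next (T.next f))) *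
      (z (T.next f) - z (T.next (T.next f))) ≠ 0 :=
  mul_ne_zero (mul_ne_zero (sub_ne_zero.2 (hz f)) (sub_ne_zero.2 (ne_next_next hz f)))
    (sub_ne_zero.2 (hz (T.next f)))

lemma triSum_divDiffCoeff_mul (hz : ∀ f, z f ≠ z (T.next f)) (φ : F → ℝ) (f : F) :
    T.triSum (fun f => T.divDiffCoeff z f * φ f) f =
      (φ f * (z (T.next f) - z (T.next (T.next f))) +
        φ (T.next f) * (z (T.next (T.next f)) - z f) +
        φ (T.next (T.next f)) * (z f - z (T.next f))) /
      ((z f - z (T.next f)) * (z f - z (T.next (T.next f))) *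
        (z (T.next f) - z (T.next (T.next f)))) := by
  have h₀ := sub_ne_zero.2 (hz f)
  have h₁ := sub_ne_zero.2 (hz (T.next f))
  have h₂ := sub_ne_zero.2 (ne_next_next hz f)
  simp only [triSum, divDiffCoeff, next_next_next, ← neg_sub (z f) (z (T.next f)),
    ← neg_sub (z f) (z (T.next (T.next f))), ← neg_sub (z (T.next f)) (z (T.next (T.next f)))]
  field_simp

lemma triSum_divDiffCoeff_mul_sub (hz : ∀ f, z f ≠ z (T.next f)) (t : ℝ) (f : F) :
    T.triSum (fun f => T.divDiffCoeff z f * (t - z f)) f = 0 := by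
  rw [triSum_divDiffCoeff_mul hz, div_eq_iff (vandermonde_ne_zero hz f)]
  ring

lemma triSum_divDiffCoeff_mul_sub_sq (hz : ∀ f, z f ≠ z (T.next f)) (t : ℝ) (f : F) :
    T.triSum (fun f => T.divDiffCoeff z f * (t - z f) ^ 2) f = 1 := by
  rw [triSum_divDiffCoeff_mul hz, div_eq_iff (vandermonde_ne_zero hz f)]
  ring

lemma triSum_divDiffCoeff_mul_sub_cube (hz : ∀ f, z f ≠ z (T.next f)) (t : ℝ) (f : F) :
    T.triSum (fun f => T.divDiffCoeff z f * (t - z f) ^ 3) f = T.triSum (fun f => t - z f) f := by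
  rw [triSum_divDiffCoeff_mul hz, div_eq_iff (vandermonde_ne_zero hz f), triSum]
  ring

lemma levelPoint_opp (hP : T.IsVertexLabel P) (hzT : T.IsVertexLabel z)
    (hz : ∀ f, z f ≠ z (T.next f)) (t : ℝ) (f : F) :
    T.levelPoint P z t (T.opp f) = T.levelPoint P z t f := by
  have h := sub_ne_zero.2 (hz f).symm
  have ratio : (t - z (T.next f)) / (z f - z (T.next f)) =
      1 - (t - z f) / (z (T.next f) - z f) := by
    rw [← neg_sub (z (T.next f)) (z f)]
    field_simp
    ring
  simp only [levelPoint, hP _, hzT _, hP.next_opp, hzT.next_opp, ratio]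
  module

lemma levelPoint_next_next_sub (hz : ∀ f, z f ≠ z (T.next f)) (t : ℝ) (f : F) :
    T.levelPoint P z t (T.next (T.next f)) - T.levelPoint P z t f =
      (T.divDiffCoeff z f * (t - z f)) • T.levelDir P z f := by
  have h₀ := sub_ne_zero.2 (hz f)
  have h₂ := sub_ne_zero.2 (ne_next_next hz f)
  simp only [levelPoint, levelDir, divDiffCoeff, next_next_next,
    ← neg_sub (z f) (z (T.next f)), ← neg_sub (z f) (z (T.next (T.next f)))]
  match_scalars <;> field_simp <;> ring

lemma wedge_levelPoint_sub (hz : ∀ f, z f ≠ z (T.next f)) (t : ℝ) (f : F) :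
    wedge (T.levelPoint P z t f - P f) (T.levelPoint P z t (T.next (T.next f)) - P f) =
      T.projArea P f * (T.divDiffCoeff z f * (t - z f) ^ 2) := by
  have h₀ := sub_ne_zero.2 (hz f)
  have h₂ := sub_ne_zero.2 (ne_next_next hz f)
  simp only [levelPoint, projArea, wedge, divDiffCoeff, next_next_next, Complex.add_re,
    Complex.add_im, Complex.sub_re, Complex.sub_im, Complex.smul_re, Complex.smul_im, smul_eq_mul,
    ← neg_sub (z f) (z (T.next f))]
  field_simp
  ring

variable (T z) in
/-- The linear B-spline `t ↦ φₜ[z₀, z₁, z₂]`, `φₜ(x) = (t - x)₊`, of the triangle of `f`: the ratio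
between the slice of the triangle at height `t` and `levelDir`. -/
noncomputable def hat (t : ℝ) (f : F) : ℝ :=
  T.triSum (fun f => T.divDiffCoeff z f * max (t - z f) 0) f

open Classical in
lemma hat_eq_triSum_ite (t : ℝ) (f : F) :
    T.hat z t f = T.triSum (fun f => if z f < t then T.divDiffCoeff z f * (t - z f) else 0) f := by
  have : ∀ f, T.divDiffCoeff z f * max (t - z f) 0 =
      if z f < t then T.divDiffCoeff z f * (t - z f) else 0 := fun f => by
    split_ifs with h
    · rw [max_eq_left (sub_nonneg.2 h.le)]
    · rw [max_eq_right (sub_nonpos.2 (not_lt.1 h)), mul_zero]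
  simp only [hat, this]

lemma hat_nonneg (hz : ∀ f, z f ≠ z (T.next f)) (t : ℝ) (f : F) : 0 ≤ T.hat z t f := by
  have h := triSum_divDiffCoeff_mul_sub hz t f
  have below : ∀ f, z f < t → t ≤ z (T.next f) → t ≤ z (T.next (T.next f)) →
      0 ≤ T.divDiffCoeff z f * (t - z f) := fun f h₀ h₁ h₂ =>
    mul_nonneg (inv_nonneg.2 (mul_nonneg_of_nonpos_of_nonpos (by linarith) (by linarith)))
      (by linarith)
  have above : ∀ f, t ≤ z f → z (T.next f) < t → z (T.next (T.next f)) < t →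
      T.divDiffCoeff z f * (t - z f) ≤ 0 := fun f h₀ h₁ h₂ =>
    mul_nonpos_of_nonneg_of_nonpos (inv_nonneg.2 (mul_nonneg (by linarith) (by linarith)))
      (by linarith)
  have below₁ := below (T.next f)
  have below₂ := below (T.next (T.next f))
  have above₁ := above (T.next f)
  have above₂ := above (T.next (T.next f))
  classical
  simp only [hat_eq_triSum_ite, triSum, next_next_next] at h below₁ below₂ above₁ above₂ ⊢
  split_ifs <;> grind

end Level

section Spline

variable [Fintype F] (z : F → ℝ)

/-- The weighted sum of the truncated powers `(t - z f)₊ ^ n`, as a function of the height `t`. -/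
noncomputable def spline (w : F → ℝ) (n : ℕ) (t : ℝ) : ℝ :=
  ∑ f, w f * (T.divDiffCoeff z f * max (t - z f) 0 ^ n)

variable {T z}

lemma continuous_spline (w : F → ℝ) (n : ℕ) : Continuous (T.spline z w n) := by
  unfold spline
  fun_prop

lemma hasDerivAt_spline (w : F → ℝ) (n : ℕ) (t : ℝ) :
    HasDerivAt (fun t => T.spline z w (n + 2) t / (n + 2)) (T.spline z w (n + 1) t) t := by
  have term : ∀ f, HasDerivAt (fun t => w f * (T.divDiffCoeff z f * max (t - z f) 0 ^ (n + 2)))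
      (w f * (T.divDiffCoeff z f * ((n + 2 : ℕ) * max (t - z f) 0 ^ (n + 1)))) t := fun f =>
    (((hasDerivAt_max_zero_pow n (t - z f)).comp_sub_const t (z f)).const_mul _).const_mul _
  refine ((HasDerivAt.fun_sum fun f _ => term f).div_const _).congr_deriv ?_
  rw [spline, Finset.sum_div]
  refine Finset.sum_congr rfl fun f _ => ?_
  push_cast
  field_simp

lemma integral_spline (w : F → ℝ) (n : ℕ) (a b : ℝ) :
    ∫ t in a..b, T.spline z w (n + 1) t =
      T.spline z w (n + 2) b / (n + 2) - T.spline z w (n + 2) a / (n + 2) :=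
  intervalIntegral.integral_eq_sub_of_hasDerivAt (fun t _ => hasDerivAt_spline w n t)
    ((continuous_spline w _).intervalIntegrable _ _)

lemma spline_eq_zero {t : ℝ} (ht : ∀ f, t ≤ z f) (w : F → ℝ) (n : ℕ) :
    T.spline z w (n + 1) t = 0 :=
  Finset.sum_eq_zero fun f _ => by
    rw [max_eq_right (sub_nonpos.2 (ht f)), zero_pow n.succ_ne_zero, mul_zero, mul_zero]

lemma spline_eq_sum_mul_pow {t : ℝ} (ht : ∀ f, z f ≤ t) (w : F → ℝ) (n : ℕ) :
    T.spline z w n t = ∑ f, w f * (T.divDiffCoeff z f * (t - z f) ^ n) :=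
  Finset.sum_congr rfl fun f _ => by rw [max_eq_left (sub_nonneg.2 (ht f))]

variable {w : F → ℝ}

lemma spline_one (hw : ∀ f, w (T.next f) = w f) (t : ℝ) :
    3 * T.spline z w 1 t = ∑ f, w f * T.hat z t f := by
  simp only [spline, hat, pow_one, sum_mul_triSum hw]

lemma spline_two (hw : ∀ f, w (T.next f) = w f) (hz : ∀ f, z f ≠ z (T.next f)) {t : ℝ}
    (ht : ∀ f, z f ≤ t) : 3 * T.spline z w 2 t = ∑ f, w f := by
  rw [spline_eq_sum_mul_pow ht, ← sum_mul_triSum hw]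
  simp only [triSum_divDiffCoeff_mul_sub_sq hz, mul_one]

lemma spline_three (hw : ∀ f, w (T.next f) = w f) (hz : ∀ f, z f ≠ z (T.next f)) {t : ℝ}
    (ht : ∀ f, z f ≤ t) :
    3 * T.spline z w 3 t = ∑ f, w f * T.triSum (fun f => t - z f) f := by
  rw [spline_eq_sum_mul_pow ht, ← sum_mul_triSum hw]
  simp only [triSum_divDiffCoeff_mul_sub_cube hz]

lemma sqrt_spline_sq_add_le {a b : F → ℝ} (ha : ∀ f, a (T.next f) = a f)
    (hb : ∀ f, b (T.next f) = b f) (hz : ∀ f, z f ≠ z (T.next f)) (t : ℝ) :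
    √(T.spline z a 1 t ^ 2 + T.spline z b 1 t ^ 2) ≤
      T.spline z (fun f => √(a f ^ 2 + b f ^ 2)) 1 t := by
  have as_vector : (3 : ℝ) • (⟨T.spline z a 1 t, T.spline z b 1 t⟩ : ℂ) =
      ∑ f, T.hat z t f • (⟨a f, b f⟩ : ℂ) := by
    apply Complex.ext
    · simp only [Complex.smul_re, Complex.re_sum, smul_eq_mul, spline_one ha, mul_comm]
    · simp only [Complex.smul_im, Complex.im_sum, smul_eq_mul, spline_one hb, mul_comm]
  have triangle := norm_sum_le Finset.univ fun f => T.hat z t f • (⟨a f, b f⟩ : ℂ)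
  rw [← as_vector] at triangle
  simp only [norm_smul, Real.norm_eq_abs, abs_of_nonneg (hat_nonneg hz t _)] at triangle
  simp only [Complex.norm_eq_sqrt_sq_add_sq] at triangle
  have := spline_one (z := z) (w := fun f => √(a f ^ 2 + b f ^ 2)) (fun f => by rw [ha, hb]) t
  simp only [mul_comm √_] at this
  rw [← this, abs_of_pos three_pos] at triangle
  linarith

end Spline

section Slice

variable {T}

lemma triSum_wedge_eq_zero {Q D : F → ℂ} {κ : F → ℝ} (hD : ∀ f, D (T.next f) = D f)
    (hκ : ∀ f, T.triSum κ f = 0) (hQκ : ∀ f, Q (T.next (T.next f)) - Q f = κ f • D f) (f : F) :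
    T.triSum (fun f => wedge (Q f) (Q (T.next (T.next f)))) f = 0 := by
  have wedge_prev : ∀ f, wedge (Q f) (Q (T.next (T.next f))) = κ f * wedge (Q f) (D f) :=
    fun f => by
      rw [← sub_add_cancel (Q (T.next (T.next f))) (Q f), hQκ]
      simp only [wedge, Complex.add_re, Complex.add_im, Complex.smul_re, Complex.smul_im,
        smul_eq_mul]
      ring
  have wedge_next : ∀ f, wedge (Q (T.next f)) (D f) = wedge (Q f) (D f) := fun f => by
    have := hQκ (T.next f)
    rw [T.next_next_next, hD, sub_eq_iff_eq_add] at this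
    rw [this]
    simp only [wedge, Complex.add_re, Complex.add_im, Complex.smul_re, Complex.smul_im,
      smul_eq_mul]
    ring
  simp only [wedge_prev]
  have h := hκ f
  have next₂ := wedge_next (T.next f)
  simp only [triSum, hD, wedge_next] at h next₂ ⊢
  rw [next₂, ← add_mul, ← add_mul, h, zero_mul]

variable [Fintype F] {P : F → ℂ} {z : F → ℝ}

open Classical in
lemma sum_norm_slice (hP : T.IsVertexLabel P) (hzT : T.IsVertexLabel z)
    (hz : ∀ f, z f ≠ z (T.next f)) (t : ℝ) :
    ∑ f, ‖T.levelPoint P z t (T.sliceNext (fun f => z f < t) f) - T.levelPoint P z t f‖ =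
      T.spline z (fun f => ‖T.levelDir P z f‖) 1 t := by
  have norm_dir_next : ∀ f, ‖T.levelDir P z (T.next f)‖ = ‖T.levelDir P z f‖ := fun f => by
    rw [levelDir_next]
  refine mul_left_cancel₀ (three_ne_zero (α := ℝ)) ?_
  rw [sum_norm_sliceNext (levelPoint_opp hP hzT hz t) (T.levelDir_next P z)
    (triSum_divDiffCoeff_mul_sub hz t) (levelPoint_next_next_sub hz t), spline_one norm_dir_next]
  refine Finset.sum_congr rfl fun f _ => ?_
  rw [← hat_eq_triSum_ite, abs_of_nonneg (hat_nonneg hz t f), mul_comm]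

open Classical in
lemma sum_wedge_slice (hP : T.IsVertexLabel P) (hzT : T.IsVertexLabel z)
    (hz : ∀ f, z f ≠ z (T.next f)) (t : ℝ) :
    ∑ f, wedge (T.levelPoint P z t f)
        (T.levelPoint P z t (T.sliceNext (fun f => z f < t) f)) =
      T.spline z (T.projArea P) 2 t := by
  rw [sum_wedge_sliceNext (levelPoint_opp hP hzT hz t)
    (triSum_wedge_eq_zero (T.levelDir_next P z) (triSum_divDiffCoeff_mul_sub hz t)
      (levelPoint_next_next_sub hz t)),
    ← sum_wedge_sub_vertex (hzT.comp (· < t)) hP (levelPoint_opp hP hzT hz t)]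
  refine Finset.sum_congr rfl fun f _ => ?_
  split_ifs with h
  · rw [wedge_levelPoint_sub hz, max_eq_left (sub_nonneg.2 h.le)]
  · rw [max_eq_right (sub_nonpos.2 (not_lt.1 h)), zero_pow two_ne_zero, mul_zero, mul_zero]

lemma isoperimetric_slice (hP : T.IsVertexLabel P) (hzT : T.IsVertexLabel z)
    (hz : ∀ f, z f ≠ z (T.next f)) (t : ℝ) :
    2 * π * |T.spline z (T.projArea P) 2 t| ≤
      T.spline z (fun f => ‖T.levelDir P z f‖) 1 t ^ 2 := by
  have bijective := Finite.injective_iff_bijective.1 (sliceNext_injective (hzT.comp (· < t)))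
  rw [← sum_norm_slice hP hzT hz, ← sum_wedge_slice hP hzT hz]
  exact isoperimetric_perm_abs _ (Equiv.ofBijective _ bijective)

lemma sum_projArea (hP : T.IsVertexLabel P) : ∑ f, T.projArea P f = 0 := by
  have antisymm : ∑ f, wedge (P f) (P (T.next f)) = 0 := sum_eq_zero_of_opp_neg (T := T) fun f => by
    rw [hP, hP.next_opp]
    simp only [wedge]
    ring
  rw [← mul_zero 3, ← antisymm, ← T.sum_triSum]
  refine Finset.sum_congr rfl fun f _ => ?_
  simp only [projArea, triSum, wedge, next_next_next, Complex.sub_re, Complex.sub_im]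
  ring

lemma integral_spline_one {w : F → ℝ} (hw : ∀ f, w (T.next f) = w f) (hz : ∀ f, z f ≠ z (T.next f))
    {a b : ℝ} (ha : ∀ f, a ≤ z f) (hb : ∀ f, z f ≤ b) :
    ∫ t in a..b, T.spline z w 1 t = (∑ f, w f) / 6 := by
  rw [integral_spline, spline_eq_zero ha]
  push_cast
  linarith [spline_two hw hz hb]

lemma integral_spline_two {w : F → ℝ} (hw : ∀ f, w (T.next f) = w f) (hz : ∀ f, z f ≠ z (T.next f))
    (w_sum : ∑ f, w f = 0) {a b : ℝ} (ha : ∀ f, a ≤ z f) (hb : ∀ f, z f ≤ b) :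
    ∫ t in a..b, T.spline z w 2 t = -(∑ f, w f * T.triSum z f) / 9 := by
  have moment : ∑ f, w f * T.triSum (fun f => b - z f) f = -∑ f, w f * T.triSum z f := by
    have : ∀ f, w f * T.triSum (fun f => b - z f) f = 3 * b * w f - w f * T.triSum z f :=
      fun f => by
        simp only [triSum]
        ring
    simp only [this, Finset.sum_sub_distrib, ← Finset.mul_sum, w_sum, mul_zero, zero_sub]
  rw [integral_spline, spline_eq_zero ha]
  push_cast
  linarith [spline_three hw hz hb]

lemma isoperimetric_projArea (hP : T.IsVertexLabel P) (hzT : T.IsVertexLabel z)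
    (hz : ∀ f, z f ≠ z (T.next f)) :
    36 * π * ((∑ f, T.projArea P f * T.triSum z f) / 18) ^ 2 ≤
      ((∑ f, √(‖T.levelDir P z f‖ ^ 2 + T.projArea P f ^ 2)) / 6) ^ 3 := by
  have norm_dir_next : ∀ f, ‖T.levelDir P z (T.next f)‖ = ‖T.levelDir P z f‖ := fun f => by
    rw [levelDir_next]
  set area : F → ℝ := fun f => √(‖T.levelDir P z f‖ ^ 2 + T.projArea P f ^ 2) with area_def
  have area_next : ∀ f, area (T.next f) = area f := fun f => by
    simp only [area_def, norm_dir_next, projArea_next]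
  obtain ⟨K, hK⟩ : ∃ K, ∀ f, |z f| ≤ K := ⟨∑ f, |z f|, fun f =>
    Finset.single_le_sum (f := fun f => |z f|) (fun _ _ => abs_nonneg _) (Finset.mem_univ f)⟩
  have below : ∀ f, -|K| ≤ z f := fun f => by linarith [neg_abs_le (z f), le_abs_self K, hK f]
  have above : ∀ f, z f ≤ |K| := fun f => by linarith [le_abs_self (z f), le_abs_self K, hK f]
  have total := sum_projArea hP
  have slice_le : ∀ t, √(4 * π * |T.spline z (T.projArea P) 2 t / 2| +
      T.spline z (T.projArea P) 1 t ^ 2) ≤ T.spline z area 1 t := fun t => by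
    refine le_trans (Real.sqrt_le_sqrt ?_)
      (sqrt_spline_sq_add_le norm_dir_next (T.projArea_next P) hz t)
    have := isoperimetric_slice hP hzT hz t
    rw [abs_div, abs_two]
    linarith
  have key := sq_integral_le_integral_cube (by positivity)
    (fun t => by simpa using hasDerivAt_spline (T := T) (z := z) (T.projArea P) 0 t)
    (continuous_spline _ _) (continuous_spline _ _) slice_le (neg_le_self (abs_nonneg K))
    (by rw [spline_eq_zero below, zero_div])
    (by linarith [spline_two (T.projArea_next P) hz above])
  rw [intervalIntegral.integral_div, integral_spline_two (T.projArea_next P) hz total below above,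
    integral_spline_one area_next hz below above] at key
  linarith

end Slice

end HalfEdgeSurface

/-! ### The isoperimetric inequality for polyhedra -/

/-- Six times the signed volume of the tetrahedron `0pqr`, that is, the determinant of its three
vertices; written so as to match the integrand of `vol`. -/
def sixVol (p q r : Fin 3 → ℝ) : ℝ := dot3 p (crossProduct (q - p) (r - p))

/-- Twice the area of the triangle `pqr`. -/
noncomputable def twiceArea (p q r : Fin 3 → ℝ) : ℝ :=
  √(dot3 (crossProduct (q - p) (r - p)) (crossProduct (q - p) (r - p)))

/-- The sum of the squares of the two edges of the triangle `pqr` at `p`, a discrete counterpart of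
the integrand of `dirEnergy`. -/
def cornerEnergy (p q r : Fin 3 → ℝ) : ℝ := dot3 (q - p) (q - p) + dot3 (r - p) (r - p)

lemma dot3_eq (a b : Fin 3 → ℝ) : dot3 a b = a 0 * b 0 + a 1 * b 1 + a 2 * b 2 :=
  Fin.sum_univ_three _

lemma dot3_self_nonneg (a : Fin 3 → ℝ) : 0 ≤ dot3 a a :=
  Finset.sum_nonneg fun i _ => mul_self_nonneg (a i)

lemma dot3_crossProduct_self (a b : Fin 3 → ℝ) :
    dot3 (crossProduct a b) (crossProduct a b) = dot3 a a * dot3 b b - dot3 a b ^ 2 := by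
  simp only [cross_apply, dot3_eq, Matrix.cons_val]
  ring

lemma sixVol_rotate (p q r : Fin 3 → ℝ) : sixVol q r p = sixVol p q r := by
  simp only [sixVol, cross_apply, dot3_eq, Matrix.cons_val, Pi.sub_apply]
  ring

lemma twiceArea_rotate (p q r : Fin 3 → ℝ) : twiceArea q r p = twiceArea p q r := by
  have : crossProduct (r - q) (p - q) = crossProduct (q - p) (r - p) := by
    ext i
    fin_cases i <;> simp [cross_apply] <;> ring
  rw [twiceArea, this, twiceArea]

lemma two_mul_twiceArea_le (p q r : Fin 3 → ℝ) : 2 * twiceArea p q r ≤ cornerEnergy p q r := by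
  have h₁ := dot3_self_nonneg (q - p)
  have h₂ := dot3_self_nonneg (r - p)
  rw [twiceArea, cornerEnergy, ← le_div_iff₀' two_pos, Real.sqrt_le_iff, dot3_crossProduct_self]
  refine ⟨by positivity, ?_⟩
  nlinarith [sq_nonneg (dot3 (q - p) (q - p) - dot3 (r - p) (r - p)),
    sq_nonneg (dot3 (q - p) (r - p))]

namespace HalfEdgeSurface

variable {F : Type*} {T : HalfEdgeSurface F} {w : F → Fin 3 → ℝ}

lemma sqrt_norm_levelDir_sq_add (f : F) :
    √(‖T.levelDir (fun f => ⟨w f 0, w f 1⟩) (fun f => w f 2) f‖ ^ 2 +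
        T.projArea (fun f => ⟨w f 0, w f 1⟩) f ^ 2) =
      twiceArea (w f) (w (T.next f)) (w (T.next (T.next f))) := by
  rw [← Complex.normSq_eq_norm_sq, Complex.normSq_apply]
  simp only [twiceArea, levelDir, projArea, wedge, Complex.sub_re, Complex.sub_im, Complex.smul_re,
    Complex.smul_im, smul_eq_mul, cross_apply, dot3_eq, Matrix.cons_val, Pi.sub_apply]
  congr 1
  ring

variable [Fintype F]

lemma sum_projArea_mul_triSum (hw : T.IsVertexLabel w) :
    ∑ f, T.projArea (fun f => ⟨w f 0, w f 1⟩) f * T.triSum (fun f => w f 2) f =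
      ∑ f, sixVol (w f) (w (T.next f)) (w (T.next (T.next f))) := by
  have antisymm : ∑ f, wedge ⟨w f 0, w f 1⟩ ⟨w (T.next f) 0, w (T.next f) 1⟩ *
      (w f 2 + w (T.next f) 2) = 0 := sum_eq_zero_of_opp_neg (T := T) fun f => by
    rw [hw, hw.next_opp]
    simp only [wedge]
    ring
  rw [← sub_eq_zero, ← Finset.sum_sub_distrib, ← mul_zero (3 : ℝ), ← antisymm, ← T.sum_triSum]
  refine Finset.sum_congr rfl fun f _ => ?_
  simp only [projArea, triSum, wedge, sixVol, T.next_next_next, Complex.sub_re, Complex.sub_im,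
    cross_apply, dot3_eq, Matrix.cons_val, Pi.sub_apply]
  ring

lemma isoperimetric_of_heights_ne (hw : T.IsVertexLabel w) (hz : ∀ f, w f 2 ≠ w (T.next f) 2) :
    36 * π * ((∑ f, sixVol (w f) (w (T.next f)) (w (T.next (T.next f)))) / 18) ^ 2 ≤
      ((∑ f, twiceArea (w f) (w (T.next f)) (w (T.next (T.next f)))) / 6) ^ 3 := by
  simp only [← sum_projArea_mul_triSum hw, ← sqrt_norm_levelDir_sq_add]
  exact isoperimetric_projArea (hw.comp fun p => (⟨p 0, p 1⟩ : ℂ)) (hw.comp fun p => p 2) hz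

/-- Every triangle is counted three times, once for each half-edge, so that the powers are those of
the enclosed volume and of the area. The labels `c` serve to tilt the edges that are horizontal. -/
theorem isoperimetric_polyhedron (hw : T.IsVertexLabel w) {c : F → ℝ} (hc : T.IsVertexLabel c)
    (c_ne : ∀ f, c f ≠ c (T.next f)) :
    36 * π * ((∑ f, sixVol (w f) (w (T.next f)) (w (T.next (T.next f)))) / 18) ^ 2 ≤
      ((∑ f, twiceArea (w f) (w (T.next f)) (w (T.next (T.next f)))) / 6) ^ 3 := by
  let tilted (ε : ℝ) (f : F) : Fin 3 → ℝ := w f + Pi.single 2 (ε * c f)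
  have tilted_zero : tilted 0 = w := by simp [tilted]
  have tilted_label : ∀ ε, T.IsVertexLabel (tilted ε) := fun ε f => by
    simp only [tilted, hw f, hc f]
  have heights_ne : ∀ᶠ ε in nhdsWithin (0 : ℝ) {0}ᶜ,
      ∀ f, tilted ε f 2 ≠ tilted ε (T.next f) 2 := by
    have bad : (Set.range fun f => (w (T.next f) 2 - w f 2) / (c f - c (T.next f))).Finite :=
      Set.finite_range _
    filter_upwards [nhdsNE_le_cofinite 0 bad.compl_mem_cofinite] with ε hε f h
    refine hε ⟨f, ?_⟩
    simp only [tilted, Pi.add_apply, Pi.single_eq_same] at h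
    rw [div_eq_iff (sub_ne_zero.2 (c_ne f))]
    linarith
  have cont : ∀ f, Continuous fun ε => tilted ε f := fun f =>
    continuous_const.add ((continuous_single 2).comp (continuous_id.mul continuous_const))
  rw [← tilted_zero]
  refine le_of_tendsto_of_tendsto (b := nhdsWithin (0 : ℝ) {0}ᶜ)
    (f := fun ε => 36 * π * ((∑ f, sixVol (tilted ε f) (tilted ε (T.next f))
      (tilted ε (T.next (T.next f)))) / 18) ^ 2)
    (g := fun ε => ((∑ f, twiceArea (tilted ε f) (tilted ε (T.next f))
      (tilted ε (T.next (T.next f)))) / 6) ^ 3)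
    (Continuous.tendsto ?_ 0 |>.mono_left nhdsWithin_le_nhds)
    (Continuous.tendsto ?_ 0 |>.mono_left nhdsWithin_le_nhds)
    (heights_ne.mono fun ε hε => isoperimetric_of_heights_ne (tilted_label ε) hε)
  · simp only [sixVol, cross_apply, dot3_eq, Matrix.cons_val, Pi.sub_apply]
    fun_prop
  · simp only [twiceArea, cross_apply, dot3_eq, Matrix.cons_val, Pi.sub_apply]
    fun_prop

end HalfEdgeSurface

/-! ### Polyhedral tori -/

section Torus

variable {G : Type*} [AddCommGroup G]

lemma involutive_torusOpp (d : Fin 3 → G) : Function.Involutive fun f : G × ℤˣ × Fin 3 =>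
    (f.1 + f.2.1 • (d f.2.2 + d (f.2.2 + 1)), -f.2.1, f.2.2) := fun f => by
  simp only [Units.neg_smul, add_neg_cancel_right, neg_neg]

/-- The triangulation with vertex set `G` whose triangles are `v + d 0, v + d 1, v + d 2` and
`v - d 0, v - d 1, v - d 2`. For `G = (ℤ/N)²` and `d = (0, e₁, e₂)` it is the square grid on a
torus, with each square cut along a diagonal. The triple `(v, ε, k)` is the half-edge starting at
`v + ε • d k` of the triangle with corners `v + ε • d 0, v + ε • d 1, v + ε • d 2`. -/
def torusSurface (d : Fin 3 → G) : HalfEdgeSurface (G × ℤˣ × Fin 3) where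
  next := Equiv.prodCongr (Equiv.refl G) (Equiv.prodCongr (Equiv.refl ℤˣ) (Equiv.addRight 1))
  opp := (involutive_torusOpp d).toPerm
  next_next_next f := by
    have : ∀ k : Fin 3, k + 1 + 1 + 1 = k := by decide
    exact Prod.ext rfl (Prod.ext rfl (this _))
  opp_opp := involutive_torusOpp d

/-- The vertex at which a half-edge of `torusSurface d` starts. -/
def torusVertex (d : Fin 3 → G) (f : G × ℤˣ × Fin 3) : G := f.1 + f.2.1 • d f.2.2

lemma isVertexLabel_torusVertex (d : Fin 3 → G) :
    (torusSurface d).IsVertexLabel (torusVertex d) := fun f => by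
  simp only [torusVertex, torusSurface, Function.Involutive.coe_toPerm, Equiv.prodCongr_apply,
    Prod.map, Equiv.refl_apply, Equiv.coe_addRight, Units.neg_smul, smul_add]
  abel

lemma torusVertex_ne_next {d : Fin 3 → G} (hd : ∀ k, d k ≠ d (k + 1)) (f : G × ℤˣ × Fin 3) :
    torusVertex d f ≠ torusVertex d ((torusSurface d).next f) := by
  simpa [torusVertex, torusSurface] using hd f.2.2

variable [Fintype G]

/-- The sum of `φ` over the triangles `v, v + a, v + b` and `v + a + b, v + b, v + a` of a torus,
evaluated at the images of their corners under `w`. -/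
def torusSum {α : Type*} (φ : α → α → α → ℝ) (a b : G) (w : G → α) : ℝ :=
  ∑ v, (φ (w v) (w (v + a)) (w (v + b)) + φ (w (v + (a + b))) (w (v + b)) (w (v + a)))

lemma sum_torusSurface {α : Type*} {φ : α → α → α → ℝ} (hφ : ∀ p q r, φ q r p = φ p q r) (a b : G)
    (w : G → α) :
    ∑ f, φ (w (torusVertex ![0, a, b] f))
        (w (torusVertex ![0, a, b] ((torusSurface ![0, a, b]).next f)))
        (w (torusVertex ![0, a, b]
          ((torusSurface ![0, a, b]).next ((torusSurface ![0, a, b]).next f)))) =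
      3 * torusSum φ a b w := by
  have fin_add : (1 + 1 : Fin 3) = 2 ∧ (2 + 1 : Fin 3) = 0 := by decide
  have shift : ∑ v, φ (w (v + (a + b))) (w (v + b)) (w (v + a)) =
      ∑ v, φ (w v) (w (v - a)) (w (v - b)) := by
    rw [← Equiv.sum_comp (Equiv.addRight (a + b)) fun v => φ (w v) (w (v - a)) (w (v - b))]
    simp [add_sub_assoc, add_assoc]
  rw [torusSum, Finset.sum_add_distrib, shift, ← Finset.sum_add_distrib, Finset.mul_sum,
    Fintype.sum_prod_type]
  refine Finset.sum_congr rfl fun v _ => ?_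
  simp only [torusVertex, torusSurface, Fintype.sum_prod_type, Fin.sum_univ_three,
    Equiv.prodCongr_apply, Prod.map, Equiv.refl_apply, Equiv.coe_addRight, zero_add, fin_add, hφ,
    UnitsInt.univ]
  rw [Finset.sum_pair (by decide)]
  simp only [one_smul, Units.neg_smul, ← sub_eq_add_neg, Matrix.cons_val, add_zero, sub_zero]
  ring

lemma two_mul_torusSum_twiceArea_le (a b : G) (w : G → Fin 3 → ℝ) :
    2 * torusSum twiceArea a b w ≤ torusSum cornerEnergy a b w := by
  rw [torusSum, Finset.mul_sum, torusSum]
  gcongr with v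
  rw [mul_add]
  gcongr <;> exact two_mul_twiceArea_le _ _ _

theorem isoperimetric_torus {a b : G} (ha : a ≠ 0) (hb : b ≠ 0) (hab : a ≠ b)
    (w : G → Fin 3 → ℝ) :
    64 * π * torusSum sixVol a b w ^ 2 ≤ torusSum cornerEnergy a b w ^ 3 := by
  set d : Fin 3 → G := ![0, a, b] with d_def
  have hd : ∀ k, d k ≠ d (k + 1) := by
    intro k
    fin_cases k
    exacts [ha.symm, hab, hb]
  let label : G → ℝ := fun v => (Fintype.equivFin G v : ℕ)
  have label_injective : Function.Injective label :=
    Nat.cast_injective.comp (Fin.val_injective.comp (Fintype.equivFin G).injective)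
  have polyhedron := HalfEdgeSurface.isoperimetric_polyhedron
    ((isVertexLabel_torusVertex d).comp w) ((isVertexLabel_torusVertex d).comp label)
    fun f => label_injective.ne (torusVertex_ne_next hd f)
  rw [d_def, sum_torusSurface sixVol_rotate, sum_torusSurface twiceArea_rotate] at polyhedron
  have area_nonneg : 0 ≤ torusSum twiceArea a b w :=
    Finset.sum_nonneg fun v _ => add_nonneg (Real.sqrt_nonneg _) (Real.sqrt_nonneg _)
  have := pow_le_pow_left₀ (by positivity) (two_mul_torusSum_twiceArea_le a b w) 3
  linarith

end Torus

/-! ### Riemann sums -/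

lemma norm_integral_sub_sum_le {E : Type*} [NormedAddCommGroup E] [NormedSpace ℝ E]
    [CompleteSpace E] {f : ℝ → E} (hf : Continuous f) {a h ε : ℝ} (hh : 0 ≤ h) {N : ℕ} {c : ℕ → E}
    (hc : ∀ i < N, ∀ x ∈ Set.Icc (a + i * h) (a + (i + 1) * h), ‖f x - c i‖ ≤ ε) :
    ‖(∫ x in a..a + N * h, f x) - h • ∑ i ∈ Finset.range N, c i‖ ≤ ε * (N * h) := by
  have hfi : ∀ x y : ℝ, IntervalIntegrable f volume x y := fun x y => hf.intervalIntegrable x y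
  have split := intervalIntegral.sum_integral_adjacent_intervals (f := f) (μ := volume)
    (a := fun i : ℕ => a + i * h) (n := N) fun i _ => hfi _ _
  have cell : ∀ i < N, ‖(∫ x in a + i * h..a + (i + 1 : ℕ) * h, f x) - h • c i‖ ≤ ε * h :=
    fun i hi => by
      have ordered : a + i * h ≤ a + (i + 1) * h := by linarith
      have width : a + (i + 1) * h - (a + i * h) = h := by ring
      have := intervalIntegral.norm_integral_le_of_norm_le_const (f := fun x => f x - c i)
        (a := a + i * h) (b := a + (i + 1) * h) (C := ε) fun x hx =>
          hc i hi x (Set.Ioc_subset_Icc_self (by rwa [Set.uIoc_of_le ordered] at hx))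
      rw [intervalIntegral.integral_sub (hfi _ _) (by simp), intervalIntegral.integral_const,
        width, abs_of_nonneg hh] at this
      exact_mod_cast this
  simp only [Nat.cast_zero, zero_mul, add_zero] at split
  rw [← split, Finset.smul_sum, ← Finset.sum_sub_distrib]
  calc _ ≤ ∑ _ ∈ Finset.range N, ε * h :=
        norm_sum_le_of_le _ fun i hi => cell i (Finset.mem_range.1 hi)
    _ = ε * (N * h) := by
        rw [Finset.sum_const, Finset.card_range, nsmul_eq_mul]
        ring

lemma norm_integral_integral_sub_sum_le {f : ℝ → ℝ → ℝ} (hf : Continuous (Function.uncurry f))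
    {a h ε : ℝ} (hh : 0 ≤ h) {N : ℕ} {c : ℕ → ℕ → ℝ}
    (hc : ∀ i < N, ∀ x ∈ Set.Icc (a + i * h) (a + (i + 1) * h),
      ∀ j < N, ∀ y ∈ Set.Icc (a + j * h) (a + (j + 1) * h), ‖f x y - c i j‖ ≤ ε) :
    ‖(∫ x in a..a + N * h, ∫ y in a..a + N * h, f x y) -
      h ^ 2 * ∑ i ∈ Finset.range N, ∑ j ∈ Finset.range N, c i j‖ ≤ ε * (N * h) ^ 2 := by
  have inner : ∀ i < N, ∀ x ∈ Set.Icc (a + i * h) (a + (i + 1) * h),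
      ‖(∫ y in a..a + N * h, f x y) - h • ∑ j ∈ Finset.range N, c i j‖ ≤ ε * (N * h) :=
    fun i hi x hx => norm_integral_sub_sum_le (hf.comp (.prodMk_right x)) hh (hc i hi x hx)
  have outer := norm_integral_sub_sum_le
    (intervalIntegral.continuous_parametric_intervalIntegral_of_continuous' hf a (a + N * h)) hh
    inner
  simp only [smul_eq_mul, ← Finset.mul_sum] at outer
  convert outer using 1
  · congr 2
    ring
  · ring

lemma norm_integral_integral_sub_grid_sum_le {f g : ℝ → ℝ → ℝ}
    (hf : Continuous (Function.uncurry f)) {a h ε : ℝ} (hh : 0 ≤ h) {N : ℕ}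
    (hfg : ∀ x ∈ Set.Icc a (a + N * h), ∀ x' ∈ Set.Icc a (a + N * h),
      ∀ y ∈ Set.Icc a (a + N * h), ∀ y' ∈ Set.Icc a (a + N * h),
      |x - x'| ≤ h → |y - y'| ≤ h → ‖f x y - g x' y'‖ ≤ ε) :
    ‖(∫ x in a..a + N * h, ∫ y in a..a + N * h, f x y) -
      h ^ 2 * ∑ i ∈ Finset.range N, ∑ j ∈ Finset.range N, g (a + i * h) (a + j * h)‖ ≤
        ε * (N * h) ^ 2 := by
  have cell : ∀ i < N, ∀ x ∈ Set.Icc (a + i * h) (a + (i + 1) * h),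
      x ∈ Set.Icc a (a + N * h) ∧ a + i * h ∈ Set.Icc a (a + N * h) ∧ |x - (a + i * h)| ≤ h := by
    intro i hi x hx
    have left : 0 ≤ i * h := by positivity
    have right : ((i : ℝ) + 1) * h ≤ N * h := by
      gcongr
      exact_mod_cast hi
    obtain ⟨hx₁, hx₂⟩ := hx
    exact ⟨⟨by linarith, by linarith⟩, ⟨by linarith, by linarith⟩,
      abs_le.2 ⟨by linarith, by linarith⟩⟩
  refine norm_integral_integral_sub_sum_le hf hh fun i hi x hx j hj y hy => ?_
  obtain ⟨hx, hi, hxi⟩ := cell i hi x hx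
  obtain ⟨hy, hj, hyj⟩ := cell j hj y hy
  exact hfg x hx _ hi y hy _ hj hxi hyj

theorem tendsto_riemannSum {Φ : ℝ → ℝ × ℝ → ℝ} (hΦ : Continuous (Function.uncurry Φ)) (a : ℝ)
    {ℓ : ℝ} (hℓ : 0 ≤ ℓ) :
    Tendsto (fun N : ℕ => (ℓ / N) ^ 2 * ∑ i ∈ Finset.range N, ∑ j ∈ Finset.range N,
        Φ (ℓ / N) (a + i * (ℓ / N), a + j * (ℓ / N)))
      atTop (nhds (∫ x in a..a + ℓ, ∫ y in a..a + ℓ, Φ 0 (x, y))) := by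
  have compact : IsCompact (Set.Icc 0 ℓ ×ˢ Set.Icc a (a + ℓ) ×ˢ Set.Icc a (a + ℓ)) :=
    isCompact_Icc.prod (isCompact_Icc.prod isCompact_Icc)
  have uniform := Metric.uniformContinuousOn_iff_le.1
    (compact.uniformContinuousOn_of_continuous hΦ.continuousOn)
  rw [Metric.tendsto_atTop']
  intro ε hε
  obtain ⟨η, hη, hηε⟩ : ∃ η > 0, η * ℓ ^ 2 < ε := by
    refine ⟨ε / (ℓ ^ 2 + 1), by positivity, ?_⟩
    rw [div_mul_eq_mul_div, div_lt_iff₀ (by positivity)]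
    linarith
  obtain ⟨δ, hδ, close⟩ := uniform η hη
  have mesh_small := (tendsto_const_div_atTop_nhds_zero_nat ℓ).eventually (gt_mem_nhds hδ)
  obtain ⟨N₀, hN₀⟩ := eventually_atTop.1 mesh_small
  refine ⟨N₀, fun N hN => ?_⟩
  have N_pos : (0 : ℝ) < N := by exact_mod_cast hN.pos
  set h := ℓ / N
  have hh : 0 ≤ h := by positivity
  have total : N * h = ℓ := mul_div_cancel₀ ℓ N_pos.ne'
  have h_le : h ≤ ℓ := div_le_self hℓ (by exact_mod_cast hN.pos)
  have estimate := norm_integral_integral_sub_grid_sum_le (f := fun x y => Φ 0 (x, y))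
    (g := fun x y => Φ h (x, y)) (a := a) (h := h) (N := N) (ε := η)
    (hΦ.comp (.prodMk_right 0)) hh fun x hx x' hx' y hy y' hy' hxx' hyy' => by
      rw [total] at hx hx' hy hy'
      refine close (0, x, y) ⟨⟨le_rfl, hℓ⟩, hx, hy⟩ (h, x', y') ⟨⟨hh, h_le⟩, hx', hy'⟩ ?_
      have h_lt := hN₀ N hN.le
      simp only [Prod.dist_eq, Real.dist_eq, zero_sub, abs_neg, abs_of_nonneg hh]
      exact max_le h_lt.le (max_le (hxx'.trans h_lt.le) (hyy'.trans h_lt.le))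
  rw [total] at estimate
  rw [dist_comm, dist_eq_norm]
  exact estimate.trans_lt hηε

/-- The sum of `φ` over the triangles of an `N × N` square grid, each square being cut along a
diagonal, evaluated at the images of the corners under `w`. -/
def gridSum {α : Type*} (φ : α → α → α → ℝ) (N : ℕ) (w : ℕ → ℕ → α) : ℝ :=
  ∑ i ∈ Finset.range N, ∑ j ∈ Finset.range N,
    (φ (w i j) (w (i + 1) j) (w i (j + 1)) + φ (w (i + 1) (j + 1)) (w i (j + 1)) (w (i + 1) j))

lemma torusSum_fin {α : Type*} (φ : α → α → α → ℝ) {n : ℕ} {w : ℕ → ℕ → α}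
    (periodic₁ : ∀ j, w (n + 2) j = w 0 j) (periodic₂ : ∀ i, w i (n + 2) = w i 0) :
    torusSum φ ((1, 0) : Fin (n + 2) × Fin (n + 2)) (0, 1) (fun v => w v.1 v.2) =
      gridSum φ (n + 2) w := by
  have wrap : ∀ {β : Type _} {f : ℕ → β}, f (n + 2) = f 0 → ∀ i : Fin (n + 2),
      f (i + 1 : Fin (n + 2)) = f (i + 1) := fun hf i => by
    rw [Fin.val_add_one]
    split_ifs with h
    · rw [h, Fin.val_last, hf]
    · rfl
  have wrap₁ : ∀ (i : Fin (n + 2)) j, w (i + 1 : Fin (n + 2)) j = w (i + 1) j := fun i j =>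
    wrap (f := fun i => w i j) (periodic₁ j) i
  have wrap₂ : ∀ i (j : Fin (n + 2)), w i (j + 1 : Fin (n + 2)) = w i (j + 1) := fun i =>
    wrap (periodic₂ i)
  simp only [torusSum, gridSum, Fintype.sum_prod_type, Finset.sum_range, Prod.fst_add,
    Prod.snd_add, add_zero, zero_add, wrap₁, wrap₂]

theorem isoperimetric_grid {N : ℕ} (hN : 2 ≤ N) {w : ℕ → ℕ → Fin 3 → ℝ}
    (periodic₁ : ∀ j, w N j = w 0 j) (periodic₂ : ∀ i, w i N = w i 0) :
    64 * π * gridSum sixVol N w ^ 2 ≤ gridSum cornerEnergy N w ^ 3 := by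
  obtain ⟨n, rfl⟩ := Nat.exists_eq_add_of_le' hN
  rw [← torusSum_fin sixVol periodic₁ periodic₂, ← torusSum_fin cornerEnergy periodic₁ periodic₂]
  exact isoperimetric_torus (by simp) (by simp) (by simp) _

section DiffQuot

variable {E F : Type*} [NormedAddCommGroup E] [NormedSpace ℝ E] [NormedAddCommGroup F]
  [NormedSpace ℝ F]

/-- The difference quotient `(u (p + c • e) - u p) / c`, continued to `c = 0` by the derivative. -/
noncomputable def diffQuot (u : E → F) (e : E) (c : ℝ) (p : E) : F :=
  ∫ s in (0 : ℝ)..1, fderiv ℝ u (p + (s * c) • e) e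

variable {u : E → F}

lemma continuous_diffQuot (hu : ContDiff ℝ 1 u) (e : E) :
    Continuous (Function.uncurry (diffQuot u e)) := by
  refine intervalIntegral.continuous_parametric_intervalIntegral_of_continuous'
    (f := fun (x : ℝ × E) s => fderiv ℝ u (x.2 + (s * x.1) • e) e) ?_ 0 1
  have := hu.continuous_fderiv one_ne_zero
  fun_prop

variable [CompleteSpace F]

lemma diffQuot_zero (e p : E) : diffQuot u e 0 p = fderiv ℝ u p e := by
  simp [diffQuot]

lemma add_smul_diffQuot (hu : ContDiff ℝ 1 u) (e : E) (c : ℝ) (p : E) :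
    u p + c • diffQuot u e c p = u (p + c • e) := by
  have deriv : ∀ s : ℝ, HasDerivAt (fun s : ℝ => u (p + (s * c) • e))
      (c • fderiv ℝ u (p + (s * c) • e) e) s := fun s => by
    have line : HasDerivAt (fun s : ℝ => p + (s * c) • e) (c • e) s := by
      simpa using (((hasDerivAt_id s).mul_const c).smul_const e).const_add p
    exact ((hu.differentiable one_ne_zero _).hasFDerivAt.comp_hasDerivAt s line).congr_deriv
      (map_smul _ _ _)
  have cont : Continuous fun s : ℝ => c • fderiv ℝ u (p + (s * c) • e) e := by
    have := hu.continuous_fderiv one_ne_zero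
    fun_prop
  rw [diffQuot, ← intervalIntegral.integral_smul,
    intervalIntegral.integral_eq_sub_of_hasDerivAt (fun s _ => deriv s)
      (cont.intervalIntegrable _ _)]
  simp

end DiffQuot

lemma tendsto_gridSum {F : Type*} [NormedAddCommGroup F] [NormedSpace ℝ F] [CompleteSpace F]
    {φ ψ : F → F → F → ℝ} (hψ : Continuous fun x : F × F × F => ψ x.1 x.2.1 x.2.2)
    (homogeneous : ∀ p A B (c : ℝ), φ p (p + c • A) (p + c • B) = c ^ 2 * ψ p A B)
    {u : ℝ × ℝ → F} (hu : ContDiff ℝ 1 u) (a : ℝ) {ℓ : ℝ} (hℓ : 0 ≤ ℓ) :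
    Tendsto (fun N : ℕ => gridSum φ N fun i j => u (a + i * (ℓ / N), a + j * (ℓ / N))) atTop
      (nhds (2 * ∫ x in a..a + ℓ, ∫ y in a..a + ℓ,
        ψ (u (x, y)) (fderiv ℝ u (x, y) (1, 0)) (fderiv ℝ u (x, y) (0, 1)))) := by
  let density (c : ℝ) (p : ℝ × ℝ) : ℝ := ψ (u p) (diffQuot u (1, 0) c p) (diffQuot u (0, 1) c p)
  have density_cont : Continuous (Function.uncurry density) :=
    hψ.comp ((hu.continuous.comp continuous_snd).prodMk
      ((continuous_diffQuot hu _).prodMk (continuous_diffQuot hu _)))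
  have corner : ∀ c p, φ (u p) (u (p + c • (1, 0))) (u (p + c • (0, 1))) = c ^ 2 * density c p :=
    fun c p => by
      rw [← add_smul_diffQuot hu, ← add_smul_diffQuot hu, homogeneous]
  let pair (c : ℝ) (p : ℝ × ℝ) : ℝ := density c p + density (-c) (p + (c, c))
  have pair_cont : Continuous (Function.uncurry pair) :=
    density_cont.add (density_cont.comp (by fun_prop :
      Continuous fun x : ℝ × ℝ × ℝ => (-x.1, x.2 + (x.1, x.1))))
  have cell : ∀ c x y, φ (u (x, y)) (u (x + c, y)) (u (x, y + c)) +
      φ (u (x + c, y + c)) (u (x, y + c)) (u (x + c, y)) = c ^ 2 * pair c (x, y) := fun c x y => by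
    have forward := corner c (x, y)
    have backward := corner (-c) (x + c, y + c)
    simp only [Prod.smul_mk, smul_eq_mul, mul_one, mul_zero, Prod.mk_add_mk, add_zero, neg_sq,
      add_neg_cancel_right] at forward backward
    rw [forward, backward, ← mul_add]
    rfl
  have pair_zero : ∀ p, pair 0 p =
      2 * ψ (u p) (fderiv ℝ u p (1, 0)) (fderiv ℝ u p (0, 1)) := fun p => by
    simp only [pair, density, neg_zero, diffQuot_zero, Prod.mk_zero_zero, add_zero, two_mul]
  have limit := tendsto_riemannSum pair_cont a hℓ
  simp only [pair_zero, intervalIntegral.integral_const_mul] at limit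
  refine limit.congr fun N => ?_
  simp only [gridSum, Finset.mul_sum, ← cell, Nat.cast_add, Nat.cast_one, add_mul, one_mul,
    add_assoc]

theorem isoperimetric_square {u : ℝ × ℝ → Fin 3 → ℝ} (hu : ContDiff ℝ 1 u) {a ℓ : ℝ} (hℓ : 0 ≤ ℓ)
    (periodic₁ : ∀ y, u (a + ℓ, y) = u (a, y)) (periodic₂ : ∀ x, u (x, a + ℓ) = u (x, a)) :
    32 * π * (∫ x in a..a + ℓ, ∫ y in a..a + ℓ,
        dot3 (u (x, y)) (crossProduct (pderivX u (x, y)) (pderivY u (x, y)))) ^ 2 ≤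
      (∫ x in a..a + ℓ, ∫ y in a..a + ℓ,
        (dot3 (pderivX u (x, y)) (pderivX u (x, y)) +
          dot3 (pderivY u (x, y)) (pderivY u (x, y)))) ^ 3 := by
  have volume := tendsto_gridSum (φ := sixVol) (ψ := fun p A B => dot3 p (crossProduct A B))
    (by simp only [cross_apply, dot3_eq, Matrix.cons_val]; fun_prop)
    (fun p A B c => by
      simp only [sixVol, add_sub_cancel_left, cross_apply, dot3_eq, Matrix.cons_val, Pi.smul_apply,
        smul_eq_mul]
      ring) hu a hℓ
  have energy := tendsto_gridSum (φ := cornerEnergy) (ψ := fun _ A B => dot3 A A + dot3 B B)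
    (by simp only [dot3_eq]; fun_prop)
    (fun p A B c => by
      simp only [cornerEnergy, add_sub_cancel_left, dot3_eq, Pi.smul_apply, smul_eq_mul]
      ring) hu a hℓ
  have key := le_of_tendsto_of_tendsto ((volume.pow 2).const_mul (64 * π)) (energy.pow 3) <| by
    filter_upwards [eventually_ge_atTop 2] with N hN
    have total : a + N * (ℓ / N) = a + ℓ := by
      rw [mul_div_cancel₀ _ (by positivity)]
    refine isoperimetric_grid hN (fun j => ?_) fun i => ?_
    · simp only [total, periodic₁, Nat.cast_zero, zero_mul, add_zero]
    · simp only [total, periodic₂, Nat.cast_zero, zero_mul, add_zero]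
  simp only [pderivX, pderivY]
  linarith

/-! ### Compactly supported maps -/

lemma setIntegral_eq_integral_square {E : Type*} [NormedAddCommGroup E] [NormedSpace ℝ E]
    {g : ℝ × ℝ → E} (hg : Continuous g) {Ω : Set (ℝ × ℝ)} {a b : ℝ} (hab : a ≤ b)
    (off_Ω : ∀ p ∉ Ω, g p = 0) (off_square : ∀ p ∉ Set.Ioc a b ×ˢ Set.Ioc a b, g p = 0) :
    ∫ p in Ω, g p = ∫ x in a..b, ∫ y in a..b, g (x, y) := by
  have integrable : IntegrableOn g (Set.Ioc a b ×ˢ Set.Ioc a b) :=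
    (hg.continuousOn.integrableOn_compact (isCompact_Icc.prod isCompact_Icc)).mono_set
      (Set.prod_mono Set.Ioc_subset_Icc_self Set.Ioc_subset_Icc_self)
  rw [setIntegral_eq_integral_of_forall_compl_eq_zero off_Ω,
    ← setIntegral_eq_integral_of_forall_compl_eq_zero off_square, Measure.volume_eq_prod,
    setIntegral_prod _ integrable]
  simp only [intervalIntegral.integral_of_le hab]

lemma exists_tsupport_subset_square {α : Type*} [Zero α] {u : ℝ × ℝ → α}
    (compact : HasCompactSupport u) :
    ∃ R > 0, tsupport u ⊆ Set.Ioo (-R) R ×ˢ Set.Ioo (-R) R := by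
  obtain ⟨R, R_pos, hR⟩ := compact.isCompact.isBounded.subset_ball_lt 0 (0, 0)
  refine ⟨R, R_pos, hR.trans ?_⟩
  rw [← ball_prod_same, Real.ball_eq_Ioo, zero_sub, zero_add]

lemma setIntegral_density_eq_integral_square {u : ℝ × ℝ → Fin 3 → ℝ} (hu : ContDiff ℝ 1 u)
    {Ω : Set (ℝ × ℝ)} (hΩ : tsupport u ⊆ Ω) {a b : ℝ} (hab : a ≤ b)
    (square : tsupport u ⊆ Set.Ioo a b ×ˢ Set.Ioo a b)
    {ψ : (Fin 3 → ℝ) → (Fin 3 → ℝ) → (Fin 3 → ℝ) → ℝ}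
    (hψ : Continuous fun z : (Fin 3 → ℝ) × (Fin 3 → ℝ) × (Fin 3 → ℝ) => ψ z.1 z.2.1 z.2.2)
    (ψ_zero : ψ 0 0 0 = 0) :
    ∫ p in Ω, ψ (u p) (pderivX u p) (pderivY u p) =
      ∫ x in a..b, ∫ y in a..b, ψ (u (x, y)) (pderivX u (x, y)) (pderivY u (x, y)) := by
  have off : ∀ p ∉ tsupport u, ψ (u p) (pderivX u p) (pderivY u p) = 0 := fun p hp => by
    simpa only [pderivX, pderivY, image_eq_zero_of_notMem_tsupport hp,
      fderiv_of_notMem_tsupport ℝ hp, zero_apply] using ψ_zero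
  have cont_fderiv := hu.continuous_fderiv one_ne_zero
  have cont : Continuous fun p => ψ (u p) (pderivX u p) (pderivY u p) :=
    hψ.comp (hu.continuous.prodMk ((cont_fderiv.clm_apply continuous_const).prodMk
      (cont_fderiv.clm_apply continuous_const)))
  exact setIntegral_eq_integral_square cont hab (fun p hp => off p fun h => hp (hΩ h))
    fun p hp => off p fun h => hp
      (Set.prod_mono Set.Ioo_subset_Ioc_self Set.Ioo_subset_Ioc_self (square h))

theorem isoperimetric_vol_dirEnergy {Ω : Set (ℝ × ℝ)} {u : ℝ × ℝ → Fin 3 → ℝ}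
    (hu : ContDiff ℝ 1 u) (compact : HasCompactSupport u) (hΩ : tsupport u ⊆ Ω) :
    32 * π * vol Ω u ^ 2 ≤ dirEnergy Ω u ^ 3 := by
  obtain ⟨R, R_pos, hR⟩ := exists_tsupport_subset_square compact
  have hRR : -R ≤ R := by linarith
  have side : -R + 2 * R = R := by ring
  have u_boundary : ∀ p : ℝ × ℝ, p ∉ Set.Ioo (-R) R ×ˢ Set.Ioo (-R) R → u p = 0 :=
    fun p hp => image_eq_zero_of_notMem_tsupport fun h => hp (hR h)
  have volume : vol Ω u = _ := setIntegral_density_eq_integral_square hu hΩ hRR hR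
    (ψ := fun p A B => dot3 p (crossProduct A B))
    (by simp only [cross_apply, dot3_eq, Matrix.cons_val]; fun_prop)
    (by simp only [dot3_eq, Pi.zero_apply, zero_mul, add_zero])
  have energy : dirEnergy Ω u = _ := setIntegral_density_eq_integral_square hu hΩ hRR hR
    (ψ := fun _ A B => dot3 A A + dot3 B B)
    (by simp only [dot3_eq]; fun_prop)
    (by simp only [dot3_eq, Pi.zero_apply, zero_mul, add_zero])
  have key := isoperimetric_square hu (a := -R) (ℓ := 2 * R) (by positivity)
    (fun y => by rw [side, u_boundary (R, y) (by simp), u_boundary (-R, y) (by simp)])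
    fun x => by rw [side, u_boundary (x, R) (by simp), u_boundary (x, -R) (by simp)]
  rwa [side, ← volume, ← energy] at key

lemma energy_lower_bound {E V H : ℝ} (hE : 0 < E) (isoperimetric : 32 * π * V ^ 2 ≤ E ^ 3)
    (hH : H ≠ 0) (nehari : E + 2 * H * V ≤ 0) : 8 * π / H ^ 2 ≤ E := by
  have E_le : E ^ 2 ≤ (-(2 * H * V)) ^ 2 := pow_le_pow_left₀ hE.le (by linarith) 2
  have key : E ^ 2 * (8 * π) ≤ E ^ 2 * (E * H ^ 2) :=
    calc E ^ 2 * (8 * π) ≤ (-(2 * H * V)) ^ 2 * (8 * π) := by gcongr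
      _ = H ^ 2 * (32 * π * V ^ 2) := by ring
      _ ≤ H ^ 2 * E ^ 3 := by gcongr
      _ = E ^ 2 * (E * H ^ 2) := by ring
  rw [div_le_iff₀ (by positivity)]
  exact le_of_mul_le_mul_left key (by positivity)

lemma sqrt_eight_mul_pi_div_sq (H : ℝ) : √(8 * π / H ^ 2) = 2 * √(2 * π) / |H| := by
  rw [Real.sqrt_div (by positivity), Real.sqrt_sq_eq_abs,
    show 8 * π = 2 ^ 2 * (2 * π) by ring, Real.sqrt_mul (by positivity), Real.sqrt_sq zero_le_two]

lemma dirEnergy_nonneg (Ω : Set (ℝ × ℝ)) (u : ℝ × ℝ → Fin 3 → ℝ) : 0 ≤ dirEnergy Ω u :=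
  integral_nonneg fun _ => add_nonneg (dot3_self_nonneg _) (dot3_self_nonneg _)

theorem origin_away_from_nehari_general {Ω : Set (ℝ × ℝ)} {H : ℝ} (hH : H ≠ 0)
    {u : ℝ × ℝ → Fin 3 → ℝ} (hu : ContDiff ℝ 1 u) (compact : HasCompactSupport u)
    (hΩ : tsupport u ⊆ Ω) :
    (dnorm Ω u ≠ 0 → Dfun Ω H 1 u ≤ 0 → 8 * π / H ^ 2 ≤ dirEnergy Ω u) ∧
    (dnorm Ω u ≠ 0 → Dfun Ω H 1 u = 0 → 2 * √(2 * π) / |H| ≤ dnorm Ω u) ∧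
    (Dfun Ω H 1 u < 0 → 2 * √(2 * π) / |H| ≤ dnorm Ω u) := by
  have isoperimetric := isoperimetric_vol_dirEnergy hu compact hΩ
  have energy_bound (ne : dnorm Ω u ≠ 0) (nehari : Dfun Ω H 1 u ≤ 0) :
      8 * π / H ^ 2 ≤ dirEnergy Ω u := by
    rw [Dfun, one_mul] at nehari
    exact energy_lower_bound (Real.sqrt_ne_zero'.mp ne) isoperimetric hH nehari
  have norm_bound (ne : dnorm Ω u ≠ 0) (nehari : Dfun Ω H 1 u ≤ 0) :
      2 * √(2 * π) / |H| ≤ dnorm Ω u :=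
    sqrt_eight_mul_pi_div_sq H ▸ Real.sqrt_le_sqrt (energy_bound ne nehari)
  refine ⟨energy_bound, fun ne nehari => norm_bound ne nehari.le, fun neg => ?_⟩
  refine norm_bound (fun norm_zero => neg.not_ge ?_) neg.le
  have energy_zero := (Real.sqrt_eq_zero (dirEnergy_nonneg Ω u)).mp norm_zero
  have vol_zero : vol Ω u = 0 := by
    rw [energy_zero, zero_pow three_ne_zero] at isoperimetric
    exact pow_eq_zero_iff two_ne_zero |>.mp
      (le_antisymm (nonpos_of_mul_nonpos_right isoperimetric (by positivity)) (sq_nonneg _))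
  simp only [Dfun, energy_zero, vol_zero, mul_zero, add_zero, le_refl]

/-- The origin is bounded away from the Nehari manifold `𝒩` and from `𝒩₋`:
`‖u‖ ≠ 0` and `D(u) ≤ 0` force `‖u‖² ≥ 8π/H²`; in particular every element of
`𝒩 = {D = 0, u ≠ 0}` and of `𝒩₋ = {D < 0}` satisfies `‖u‖ ≥ 2√(2π)/H`. -/
theorem origin_away_from_nehari (Ω : Set (ℝ × ℝ)) (hΩ : IsOpen Ω)
    (hΩb : Bornology.IsBounded Ω) (H : ℝ) (hH : 0 < H)
    (u : ℝ × ℝ → Fin 3 → ℝ) (hu : IsAdmissible Ω u) :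
    (dnorm Ω u ≠ 0 → Dfun Ω H 1 u ≤ 0 → 8 * Real.pi / H ^ 2 ≤ dirEnergy Ω u) ∧
    (dnorm Ω u ≠ 0 → Dfun Ω H 1 u = 0 →
      2 * Real.sqrt (2 * Real.pi) / H ≤ dnorm Ω u) ∧
    (Dfun Ω H 1 u < 0 → 2 * Real.sqrt (2 * Real.pi) / H ≤ dnorm Ω u) := by
  simpa only [abs_of_pos hH] using
    origin_away_from_nehari_general hH.ne' (hu.1.of_le (by exact_mod_cast le_top)) hu.2.1 hu.2.2
end
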